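/- Let B be a brace that contains a conformal bisubdivision of K_{3,3} (equivalently, contains K_{3,3} as a matching minor), and let C be a cycle of length four in B. Then there exists a conformal bisubdivision of K_{3,3} in B that contains C as a subgraph. -/

import Mathlib

namespace Paper

open SimpleGraph

variable {V : Type*} {W : Type*}

/-- `M` is a perfect matching of the vertex set `S` in the graph `G`:
a set of pairwise disjoint edges of `G`, all within `S`, covering every vertex of `S`. -/
def IsPMOn (G : SimpleGraph V) (S : Set V) (M : Set (Sym2 V)) : Prop :=
  (∀ e ∈ M, e ∈ G.edgeSet) ∧ (∀ e ∈ M, ∀ v ∈ e, v ∈ S) ∧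
    ∀ v ∈ S, ∃! e, e ∈ M ∧ v ∈ e

/-- `M` is a perfect matching of `G`. -/
def IsPM (G : SimpleGraph V) (M : Set (Sym2 V)) : Prop :=
  IsPMOn G Set.univ M

/-- The edges in `F` are pairwise vertex-disjoint. -/
def PairwiseDisjointEdges (F : Set (Sym2 V)) : Prop :=
  ∀ e ∈ F, ∀ f ∈ F, e ≠ f → ∀ x : V, x ∈ e → x ∉ f

/-- All edges of `G` have both endpoints in `S`. -/
def EdgesWithin (G : SimpleGraph V) (S : Set V) : Prop :=
  ∀ ⦃x y : V⦄, G.Adj x y → x ∈ S ∧ y ∈ S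

def ConnectedOn (G : SimpleGraph V) (S : Set V) : Prop :=
  S.Nonempty ∧ ∀ x ∈ S, ∀ y ∈ S, G.Reachable x y

/-- The graph `G` with vertex set `S` is a brace: it is connected and every matching of
size at most two extends to a perfect matching. -/
def IsBraceOn (G : SimpleGraph V) (S : Set V) : Prop :=
  EdgesWithin G S ∧ ConnectedOn G S ∧
    ∀ F : Set (Sym2 V), F ⊆ G.edgeSet → PairwiseDisjointEdges F → F.ncard ≤ 2 →
      ∃ M, IsPMOn G S M ∧ F ⊆ M

def IsBrace (G : SimpleGraph V) : Prop :=
  IsBraceOn G Set.univ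

def IsBipartitionOf (G : SimpleGraph V) (V1 V2 : Set V) : Prop :=
  Disjoint V1 V2 ∧ V1 ∪ V2 = Set.univ ∧ ∀ ⦃x y : V⦄, G.Adj x y → (x ∈ V1 ↔ y ∈ V2)

def IsBipartite (G : SimpleGraph V) : Prop :=
  ∃ V1 V2 : Set V, IsBipartitionOf G V1 V2

def MatchingCoveredOn (G : SimpleGraph V) (S : Set V) : Prop :=
  EdgesWithin G S ∧ ConnectedOn G S ∧ ∀ e ∈ G.edgeSet, ∃ M, IsPMOn G S M ∧ e ∈ M

def MatchingCovered (G : SimpleGraph V) : Prop :=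
  MatchingCoveredOn G Set.univ

/-- Every vertex of `A` is covered exactly once by an edge of `M ∩ Es`;
i.e. `M ∩ Es` is a perfect matching of the subgraph with vertex set `A` and edge set `Es`. -/
def MatchesExactly (M Es : Set (Sym2 V)) (A : Set V) : Prop :=
  ∀ v ∈ A, ∃! e, e ∈ M ∧ e ∈ Es ∧ v ∈ e

/-- `M` restricted to the edges of `P` with both endpoints in `A` is a
perfect matching of `A`; i.e. `M ∩ E(P ∩ A)` is a perfect matching of `P ∩ A`. -/
def WalkMConfOn (G : SimpleGraph V) (M : Set (Sym2 V)) {u v : V} (P : G.Walk u v)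
    (A : Set V) : Prop :=
  ∀ x ∈ A, ∃! e : Sym2 V, e ∈ M ∧ e ∈ P.edges ∧ (∀ y ∈ e, y ∈ A) ∧ x ∈ e

/-- The path `P` is `M`-conformal: `M ∩ E(P)` is a perfect matching of `P`. -/
def MConformalWalk (G : SimpleGraph V) (M : Set (Sym2 V)) {u v : V} (P : G.Walk u v) : Prop :=
  WalkMConfOn G M P {x | x ∈ P.support}

/-- The path `P` is internally `M`-conformal: removing both endpoints leaves
an `M`-conformal path. -/
def InternallyMConformal (G : SimpleGraph V) (M : Set (Sym2 V)) {u v : V}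
    (P : G.Walk u v) : Prop :=
  WalkMConfOn G M P {x | x ∈ P.support ∧ x ≠ u ∧ x ≠ v}

/-- The path `P` is `M`-alternating: there is a set `S` of endpoints of `P`
such that `P − S` is `M`-conformal. -/
def MAlternating (G : SimpleGraph V) (M : Set (Sym2 V)) {u v : V} (P : G.Walk u v) : Prop :=
  ∃ S ⊆ ({u, v} : Set V), WalkMConfOn G M P {x | x ∈ P.support ∧ x ∉ S}

/-- The cycle `C` is `M`-conformal: `M ∩ E(C)` is a perfect matching of `C`. -/
def MConformalCycle (G : SimpleGraph V) (M : Set (Sym2 V)) {c : V} (C : G.Walk c c) : Prop :=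
  ∀ x ∈ C.support, ∃! e, e ∈ M ∧ e ∈ C.edges ∧ x ∈ e

/-- The cycle `C` is conformal in the graph `G` with vertex set `S`:
`G − V(C)` has a perfect matching. -/
def ConformalCycleOn (G : SimpleGraph V) (S : Set V) {c : V} (C : G.Walk c c) : Prop :=
  ∃ M, IsPMOn G (S \ {x | x ∈ C.support}) M

def ConformalCycle (G : SimpleGraph V) {c : V} (C : G.Walk c c) : Prop :=
  ConformalCycleOn G Set.univ C

/-- The four vertices appear on the cycle `C` in the listed cyclic order. -/
def InCyclicOrder (G : SimpleGraph V) {c : V} (C : G.Walk c c) (s1 s2 t1 t2 : V) : Prop :=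
  ∃ n : ℕ, List.Sublist [s1, s2, t1, t2] (C.support.tail.rotate n) ∨
    List.Sublist [s1, s2, t1, t2] (C.support.tail.reverse.rotate n)

/-- The paths `P1` (from `s1` to `t1`) and `P2` (from `s2` to `t2`) form a matching
cross over the cycle `C` with respect to the perfect matching `M` of `(G, S)`. -/
def IsMatchingCrossOn (G : SimpleGraph V) (S : Set V) {c s1 t1 s2 t2 : V}
    (C : G.Walk c c) (M : Set (Sym2 V)) (P1 : G.Walk s1 t1) (P2 : G.Walk s2 t2) : Prop :=
  IsPMOn G S M ∧ [s1, s2, t1, t2].Nodup ∧ InCyclicOrder G C s1 s2 t1 t2 ∧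
    P1.IsPath ∧ P2.IsPath ∧ MAlternating G M P1 ∧ MAlternating G M P2 ∧
    (∀ x : V, x ∈ P1.support → x ∉ P2.support) ∧
    (∀ x ∈ P1.support, x ≠ s1 → x ≠ t1 → x ∉ C.support) ∧
    (∀ x ∈ P2.support, x ≠ s2 → x ≠ t2 → x ∉ C.support)

def HasMatchingCrossOn (G : SimpleGraph V) (S : Set V) {c : V} (C : G.Walk c c) : Prop :=
  ∃ (M : Set (Sym2 V)) (s1 t1 s2 t2 : V) (P1 : G.Walk s1 t1) (P2 : G.Walk s2 t2),
    IsMatchingCrossOn G S C M P1 P2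

def HasMatchingCross (G : SimpleGraph V) {c : V} (C : G.Walk c c) : Prop :=
  HasMatchingCrossOn G Set.univ C

/-- `C + P1 + P2` is a conformal subgraph of `(G, S)`. -/
def CrossConformalOn (G : SimpleGraph V) (S : Set V) {c s1 t1 s2 t2 : V}
    (C : G.Walk c c) (P1 : G.Walk s1 t1) (P2 : G.Walk s2 t2) : Prop :=
  ∃ N, IsPMOn G S N ∧
    MatchesExactly N
      ({f | f ∈ C.edges} ∪ {f | f ∈ P1.edges} ∪ {f | f ∈ P2.edges})
      ({x | x ∈ C.support} ∪ {x | x ∈ P1.support} ∪ {x | x ∈ P2.support})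

/-- There is a conformal cross over the cycle `C` in `G`. -/
def HasConformalCross (G : SimpleGraph V) {c : V} (C : G.Walk c c) : Prop :=
  ∃ (M : Set (Sym2 V)) (s1 t1 s2 t2 : V) (P1 : G.Walk s1 t1) (P2 : G.Walk s2 t2),
    IsMatchingCrossOn G Set.univ C M P1 P2 ∧ CrossConformalOn G Set.univ C P1 P2

/-- A bisubdivision of the graph `H` inside the graph `G`: every edge of `H` is replaced
by a path of odd length (i.e., subdivided an even number of times), and those paths
pairwise meet only in branch vertices. -/
structure Bisubdivision (H : SimpleGraph W) (G : SimpleGraph V) where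
  bv : W → V
  bv_inj : Function.Injective bv
  link : ∀ ⦃x y : W⦄, H.Adj x y → G.Walk (bv x) (bv y)
  link_isPath : ∀ ⦃x y : W⦄ (h : H.Adj x y), (link h).IsPath
  link_odd : ∀ ⦃x y : W⦄ (h : H.Adj x y), Odd (link h).length
  link_symm : ∀ ⦃x y : W⦄ (h : H.Adj x y), link h.symm = (link h).reverse
  link_branch : ∀ ⦃x y : W⦄ (h : H.Adj x y) (z : W), bv z ∈ (link h).support → z = x ∨ z = y
  link_meet : ∀ ⦃x y x' y' : W⦄ (h : H.Adj x y) (h' : H.Adj x' y'), s(x, y) ≠ s(x', y') →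
    ∀ v : V, v ∈ (link h).support → v ∈ (link h').support →
      (v = bv x ∨ v = bv y) ∧ (v = bv x' ∨ v = bv y')

def Bisubdivision.verts {H : SimpleGraph W} {G : SimpleGraph V}
    (L : Bisubdivision H G) : Set V :=
  {v | ∃ (x y : W) (h : H.Adj x y), v ∈ (L.link h).support}

def Bisubdivision.edgeSet {H : SimpleGraph W} {G : SimpleGraph V}
    (L : Bisubdivision H G) : Set (Sym2 V) :=
  {e | ∃ (x y : W) (h : H.Adj x y), e ∈ (L.link h).edges}

/-- The bisubdivision `L` is an `M`-conformal subgraph of `G`. -/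
def Bisubdivision.MConformal {H : SimpleGraph W} {G : SimpleGraph V}
    (L : Bisubdivision H G) (M : Set (Sym2 V)) : Prop :=
  MatchesExactly M L.edgeSet L.verts

/-- The bisubdivision `L` is a conformal subgraph of `(G, S)`. -/
def Bisubdivision.ConformalOn {H : SimpleGraph W} {G : SimpleGraph V}
    (L : Bisubdivision H G) (S : Set V) : Prop :=
  ∃ M, IsPMOn G S M ∧ L.MConformal M

abbrev K33 : SimpleGraph (Fin 3 ⊕ Fin 3) := completeBipartiteGraph (Fin 3) (Fin 3)

/-- `G` contains a conformal bisubdivision of `K_{3,3}`. -/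
def ContainsK33 (G : SimpleGraph V) : Prop :=
  ∃ L : Bisubdivision K33 G, L.ConformalOn Set.univ

def K33Free (G : SimpleGraph V) : Prop :=
  ¬ ContainsK33 G

def C4verts (a1 b1 a2 b2 : V) : Set V := {a1, b1, a2, b2}

def C4edges (a1 b1 a2 b2 : V) : Set (Sym2 V) := {s(a1, b1), s(b1, a2), s(a2, b2), s(b2, a1)}

/-- `a1 b1 a2 b2` is a cycle of length four in `G`. -/
def IsC4In (G : SimpleGraph V) (a1 b1 a2 b2 : V) : Prop :=
  [a1, b1, a2, b2].Nodup ∧ G.Adj a1 b1 ∧ G.Adj b1 a2 ∧ G.Adj a2 b2 ∧ G.Adj b2 a1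

/-- `B` is a 4-cycle sum of the graphs `Bi i` (with vertex sets `Si i`)
at the common conformal 4-cycle `a1 b1 a2 b2`. -/
def IsFourCycleSum {ℓ : ℕ} (B : SimpleGraph V) (Bi : Fin ℓ → SimpleGraph V)
    (Si : Fin ℓ → Set V) (a1 b1 a2 b2 : V) : Prop :=
  (∀ i, EdgesWithin (Bi i) (Si i)) ∧
  (∀ i, IsC4In (Bi i) a1 b1 a2 b2) ∧
  (∀ i, ∃ M, IsPMOn (Bi i) (Si i \ C4verts a1 b1 a2 b2) M) ∧
  (∀ i j, i ≠ j → Si i ∩ Si j = C4verts a1 b1 a2 b2) ∧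
  (⋃ i, Si i) = Set.univ ∧
  ∃ D ⊆ C4edges a1 b1 a2 b2, B.edgeSet = (⋃ i, (Bi i).edgeSet) \ D

/-- `B` is a maximal 4-cycle sum of the braces `Bi i` at the 4-cycle `a1 b1 a2 b2`. -/
def IsMaxFourCycleSumOfBraces {ℓ : ℕ} (B : SimpleGraph V) (Bi : Fin ℓ → SimpleGraph V)
    (Si : Fin ℓ → Set V) (a1 b1 a2 b2 : V) : Prop :=
  IsFourCycleSum B Bi Si a1 b1 a2 b2 ∧ (∀ i, IsBraceOn (Bi i) (Si i)) ∧
    ¬ ∃ ℓ' : ℕ, ℓ < ℓ' ∧ ∃ (Hi : Fin ℓ' → SimpleGraph V) (Ti : Fin ℓ' → Set V),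
      IsFourCycleSum B Hi Ti a1 b1 a2 b2 ∧ ∀ i, IsBraceOn (Hi i) (Ti i)

/-- `∂(X)`: the set of edges of `G` with exactly one endpoint in `X`. -/
def edgeCut (G : SimpleGraph V) (X : Set V) : Set (Sym2 V) :=
  {e | e ∈ G.edgeSet ∧ ∃ x y : V, e = s(x, y) ∧ x ∈ X ∧ y ∉ X}

/-- `∂(X)` is a tight cut of the graph `G` with vertex set `S`. -/
def IsTightCutOn (G : SimpleGraph V) (S X : Set V) : Prop :=
  ∀ M, IsPMOn G S M → (edgeCut G X ∩ M).ncard = 1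

def IsTightCut (G : SimpleGraph V) (X : Set V) : Prop :=
  IsTightCutOn G Set.univ X

/-- The minority of `X` with respect to the colour classes `V1`, `V2`. -/
noncomputable def minority (V1 V2 X : Set V) : Set V :=
  if (X ∩ V1).ncard < (X ∩ V2).ncard then X ∩ V1 else X ∩ V2

/-- `P1` and `P2` are `M`-alternating paths of the same type. -/
def SameType (G : SimpleGraph V) (M : Set (Sym2 V)) {s1 t1 s2 t2 : V}
    (P1 : G.Walk s1 t1) (P2 : G.Walk s2 t2) : Prop :=
  (InternallyMConformal G M P1 ∧ InternallyMConformal G M P2) ∨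
  (MConformalWalk G M P1 ∧ MConformalWalk G M P2) ∨
  ((¬ InternallyMConformal G M P1 ∧ ¬ MConformalWalk G M P1) ∧
    (¬ InternallyMConformal G M P2 ∧ ¬ MConformalWalk G M P2))

/-- There is a strong matching cross over `C` in `(G, S)` w.r.t. colour classes `V1, V2`. -/
def HasStrongMatchingCrossOn (G : SimpleGraph V) (S V1 V2 : Set V) {c : V}
    (C : G.Walk c c) : Prop :=
  ∃ (M : Set (Sym2 V)) (s1 t1 s2 t2 : V) (P1 : G.Walk s1 t1) (P2 : G.Walk s2 t2),
    IsMatchingCrossOn G S C M P1 P2 ∧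
    (V1 ∩ {s1, s2, t1, t2}).ncard = (V2 ∩ {s1, s2, t1, t2}).ncard ∧
    SameType G M P1 P2

/-- `s1 s2 t1 t2` appear in this cyclic order on the 4-cycle `a1 b1 a2 b2`. -/
def CyclicOrderC4 (a1 b1 a2 b2 s1 s2 t1 t2 : V) : Prop :=
  ∃ n : ℕ, [s1, s2, t1, t2] = [a1, b1, a2, b2].rotate n ∨
    [s1, s2, t1, t2] = [b2, a2, b1, a1].rotate n

/-- `P1, P2` form a matching cross over the 4-cycle `a1 b1 a2 b2` w.r.t. `M`. -/
def IsCrossOverC4 (G : SimpleGraph V) (M : Set (Sym2 V)) (a1 b1 a2 b2 : V)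
    {s1 t1 s2 t2 : V} (P1 : G.Walk s1 t1) (P2 : G.Walk s2 t2) : Prop :=
  [s1, s2, t1, t2].Nodup ∧ CyclicOrderC4 a1 b1 a2 b2 s1 s2 t1 t2 ∧
    P1.IsPath ∧ P2.IsPath ∧ MAlternating G M P1 ∧ MAlternating G M P2 ∧
    (∀ z : V, z ∈ P1.support → z ∉ P2.support) ∧
    (∀ z ∈ P1.support, z ≠ s1 → z ≠ t1 → z ∉ C4verts a1 b1 a2 b2) ∧
    (∀ z ∈ P2.support, z ≠ s2 → z ≠ t2 → z ∉ C4verts a1 b1 a2 b2)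

/-- The Heawood graph on `ZMod 14`. -/
def heawood : SimpleGraph (ZMod 14) :=
  SimpleGraph.fromRel fun i j => j = i + 1 ∨ (Even i.val ∧ j = i + 5)

/-- The Rotunda: three cubes glued along a common 4-cycle whose edges are then deleted. -/
def rotunda : SimpleGraph (Fin 4 ⊕ Fin 3 × Fin 4) :=
  SimpleGraph.fromRel fun x y =>
    match x, y with
    | Sum.inl j, Sum.inr p => j = p.2
    | Sum.inr p, Sum.inr q => p.1 = q.1 ∧ q.2 = p.2 + 1
    | _, _ => False

/-- `F` is an `S`-cover in `G`. -/
def IsSCover (G : SimpleGraph V) (S : Set V) (F : Set (Sym2 V)) : Prop :=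
  F ⊆ G.edgeSet ∧ (∀ e ∈ F, ∃ v ∈ S, v ∈ e) ∧ ∀ v ∈ S, ∃ e ∈ F, v ∈ e

/-- `F` is contained in some perfect matching of `G`. -/
def Extendible (G : SimpleGraph V) (F : Set (Sym2 V)) : Prop :=
  ∃ M, IsPM G M ∧ F ⊆ M

/-- `(G, S)` is an `F`-instance of 2-MLP for `(a1, a2)` and `(b1, b2)`. -/
def TwoMLPInstanceOn (G : SimpleGraph V) (S : Set V) (a1 a2 b1 b2 : V)
    (F : Set (Sym2 V)) : Prop :=
  ∃ M, IsPMOn G S M ∧ F ⊆ M ∧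
    ∃ (P1 : G.Walk a1 b1) (P2 : G.Walk a2 b2), P1.IsPath ∧ P2.IsPath ∧
      InternallyMConformal G M P1 ∧ InternallyMConformal G M P2 ∧
      ∀ x : V, x ∈ P1.support → x ∉ P2.support

/-- `B − u − v + pq`: delete the vertices `u, v` and add the edge `pq`. -/
def deleteAdd (B : SimpleGraph V) (u v p q : V) : SimpleGraph V :=
  SimpleGraph.fromRel fun x y =>
    (B.Adj x y ∨ (x = p ∧ y = q)) ∧ x ≠ u ∧ x ≠ v ∧ y ≠ u ∧ y ≠ v

/-- `B` plus two new vertices `x = Sum.inr 0` and `y = Sum.inr 1` together with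
the edges `xy, x b1, x b2, y a1, y a2`. -/
def plusXY (B : SimpleGraph V) (a1 a2 b1 b2 : V) : SimpleGraph (V ⊕ Fin 2) :=
  SimpleGraph.fromRel fun p q =>
    (∃ a b : V, p = Sum.inl a ∧ q = Sum.inl b ∧ B.Adj a b) ∨
    (p = Sum.inr 0 ∧ q = Sum.inr 1) ∨
    (p = Sum.inr 0 ∧ (q = Sum.inl b1 ∨ q = Sum.inl b2)) ∨
    (p = Sum.inr 1 ∧ (q = Sum.inl a1 ∨ q = Sum.inl a2))

/-- The endpoints `q1, q2` (on the 4-cycle) belong to the same colour class. -/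
def PrecrossDaring (V1 V2 : Set V) (q1 q2 : V) : Prop :=
  (q1 ∈ V1 ∧ q2 ∈ V1) ∨ (q1 ∈ V2 ∧ q2 ∈ V2)

/-- `(P1, P2, Q, M)` is a diffuse `C'`-`M`-precross through the 4-cycle `a1 b1 a2 b2`
in the graph `G` with vertex set `S` and colour classes `V1, V2`. -/
def DiffusePrecross (G : SimpleGraph V) (S V1 V2 : Set V) (a1 b1 a2 b2 : V)
    {c p1 q1 p2 q2 x1 x2 : V} (C' : G.Walk c c) (M : Set (Sym2 V))
    (P1 : G.Walk p1 q1) (P2 : G.Walk p2 q2) (Q : G.Walk x1 x2) : Prop :=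
  IsPMOn G S M ∧ P1.IsPath ∧ P2.IsPath ∧ Q.IsPath ∧
  MAlternating G M P1 ∧ MAlternating G M P2 ∧ MAlternating G M Q ∧
  (∀ z : V, z ∈ P1.support → z ∉ P2.support) ∧
  (∀ z : V, z ∈ P1.support → z ∉ Q.support) ∧
  (∀ z : V, z ∈ P2.support → z ∉ Q.support) ∧
  (∀ z ∈ P1.support, z ≠ p1 → z ≠ q1 → z ∉ C'.support) ∧
  (∀ z ∈ P2.support, z ≠ p2 → z ≠ q2 → z ∉ C'.support) ∧
  (∀ z ∈ Q.support, z ≠ x1 → z ≠ x2 → z ∉ C'.support) ∧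
  x1 ∈ C'.support ∧ x2 ∈ C'.support ∧
  p1 ∈ C'.support ∧ q1 ∈ C4verts a1 b1 a2 b2 ∧
  p2 ∈ C'.support ∧ q2 ∈ C4verts a1 b1 a2 b2 ∧
  (∀ Wk : G.Walk p1 p2, (∀ e ∈ Wk.edges, e ∈ C'.edges) → ∃ z ∈ Wk.support, z ∈ Q.support) ∧
  (∀ U ∈ ({V1, V2} : Set (Set V)), (q1 ∈ U ∨ q2 ∈ U) →
    ∃ q : V, (q = q1 ∨ q = q2) ∧ q ∈ U ∧ ∃ e ∈ M, e ∈ C4edges a1 b1 a2 b2 ∧ q ∈ e)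

/-- A daring diffuse precross is successful. -/
def PrecrossSuccessful (G : SimpleGraph V) (V1 V2 : Set V) (M : Set (Sym2 V))
    {p1 q1 p2 q2 : V} (P1 : G.Walk p1 q1) (P2 : G.Walk p2 q2) : Prop :=
  PrecrossDaring V1 V2 q1 q2 ∧
  ((InternallyMConformal G M P1 ∧ MConformalWalk G M P2) ∨
   (InternallyMConformal G M P2 ∧ MConformalWalk G M P1) ∨
   (Even P1.length ∧ Even P2.length ∧
     ((∃ e ∈ M, e ∈ P1.edges ∧ p1 ∈ e) ↔ ¬ ∃ e ∈ M, e ∈ P2.edges ∧ p2 ∈ e)))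

section comb
variable {V : Type*}

/-- Basic data: a two-coloured graph, `isA` is the first colour class. -/
structure BG (V : Type*) where
  isA : V → Prop
  r : V → V → Prop
  rA : ∀ {x y}, r x y → isA x
  rB : ∀ {x y}, r x y → ¬ isA y

namespace BG
variable (g : BG V)

def Ad (b : V) (P : Multiset V) : Prop := ∃ x ∈ P, g.r x b

inductive ATree : Multiset V → Prop
  | single (a : V) (h : g.isA a) : ATree {a}
  | join (P Q : Multiset V) (b : V) (hP : ATree P) (hQ : ATree Q) (h1 : g.Ad b P) (h2 : g.Ad b Q) :
      ATree (P + {b} + Q)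

inductive Mt : Multiset V → Prop
  | zero : Mt 0
  | pair (Z : Multiset V) (x y : V) (h : Mt Z) (hr : g.r x y) : Mt (Z + {x} + {y})

def adj (x y : V) : Prop := g.r x y ∨ g.r y x

inductive Path : V → V → Multiset V → Prop
  | nil (s : V) : Path s s {s}
  | cons (s t u : V) (G : Multiset V) (h : Path s t G) (ha : g.adj t u) : Path s u (G + {u})

def PC (s t : V) (N : Multiset V) : Prop := ∃ G Z, g.Path s t G ∧ g.Mt Z ∧ N = G + Z

/-- `s` reaches `e` using `M` (not counting `e`). -/
def Reach (s e : V) (M : Multiset V) : Prop := ∃ G Z, g.Path s e (G + {e}) ∧ g.Mt Z ∧ M = G + Z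

variable {g}

theorem Ad.notA {b : V} {P : Multiset V} (h : g.Ad b P) : ¬ g.isA b := by
  obtain ⟨x, _, hx⟩ := h; exact g.rB hx

theorem Ad_add {b : V} {P Q : Multiset V} : g.Ad b (P + Q) ↔ g.Ad b P ∨ g.Ad b Q := by
  unfold Ad; constructor
  · rintro ⟨x, hx, h⟩
    rcases Multiset.mem_add.1 hx with h' | h'
    · exact Or.inl ⟨x, h', h⟩
    · exact Or.inr ⟨x, h', h⟩
  · rintro (⟨x, hx, h⟩ | ⟨x, hx, h⟩)
    · exact ⟨x, Multiset.mem_add.2 (Or.inl hx), h⟩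
    · exact ⟨x, Multiset.mem_add.2 (Or.inr hx), h⟩

theorem Ad.of_mem {a b : V} {P : Multiset V} (h : g.r a b) (ha : a ∈ P) : g.Ad b P := ⟨a, ha, h⟩

theorem Mt.add {Z Z' : Multiset V} (h : g.Mt Z) (h' : g.Mt Z') : g.Mt (Z + Z') := by
  induction h' with
  | zero => simpa using h
  | pair W x y _ hr ih =>
    have := Mt.pair _ x y ih hr
    simpa only [add_assoc] using this

theorem Mt.pair' {x y : V} (hr : g.r x y) : g.Mt ({x} + {y}) := by
  simpa using Mt.pair 0 x y Mt.zero hr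

theorem adj.symm {x y : V} (h : g.adj x y) : g.adj y x := Or.symm h

theorem Path.single_append {s t u : V} {G : Multiset V} (h : g.Path t u G) (ha : g.adj s t) :
    g.Path s u ({s} + G) := by
  induction h with
  | nil => exact Path.cons _ _ _ _ (Path.nil _) ha
  | cons v w G _ hvw ih =>
    have := Path.cons _ _ _ _ ih hvw
    simpa only [add_assoc] using this

theorem Path.append {s t u v : V} {G H : Multiset V} (h : g.Path s t G) (h' : g.Path u v H)
    (ha : g.adj t u) : g.Path s v (G + H) := by
  induction h' with
  | nil => exact Path.cons _ _ _ _ h ha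
  | cons v w H _ hvw ih =>
    have := Path.cons _ _ _ _ ih hvw
    simpa only [add_assoc] using this

theorem Path.symm {s t : V} {G : Multiset V} (h : g.Path s t G) : g.Path t s G := by
  induction h with
  | nil => exact Path.nil s
  | cons t u G _ ha ih =>
    have := ih.single_append ha.symm
    rwa [add_comm] at this

theorem PC.symm {s t : V} {N : Multiset V} (h : g.PC s t N) : g.PC t s N := by
  obtain ⟨G, Z, h1, h2, h3⟩ := h
  exact ⟨G, Z, h1.symm, h2, h3⟩

theorem PC.addMt {s t : V} {N Z : Multiset V} (h : g.PC s t N) (hz : g.Mt Z) : g.PC s t (N + Z) := by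
  obtain ⟨G, Z', h1, h2, rfl⟩ := h
  exact ⟨G, Z' + Z, h1, h2.add hz, by abel⟩

theorem Path.join_at {s e t : V} {G H : Multiset V} (h : g.Path s e G) (h' : g.Path t e (H + {e})) :
    g.Path s t (G + H) := by
  generalize hK : H + {e} = K at h'
  induction h' generalizing H with
  | nil =>
    have : H = 0 := by
      have := congrArg Multiset.card hK
      simp at this; exact this
    subst this; simpa using h
  | cons v w L hL hvw _ =>
    have : H = L := by simpa using hK
    subst this
    exact h.append hL.symm hvw.symm

theorem Reach.conn {s e t : V} {M N : Multiset V} (h : g.Reach s e M) (h' : g.Reach t e N) :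
    g.PC s t (M + {e} + N) := by
  obtain ⟨G, Z, h1, h2, rfl⟩ := h
  obtain ⟨G', Z', h1', h2', rfl⟩ := h'
  exact ⟨G + {e} + G', Z + Z', h1.join_at h1', h2.add h2', by abel⟩

theorem ATree.exists_isA {P : Multiset V} (h : g.ATree P) : ∃ a ∈ P, g.isA a := by
  induction h with
  | single a h => exact ⟨a, by simp, h⟩
  | join P Q b _ _ _ _ ih _ =>
    obtain ⟨a, ha, h⟩ := ih
    exact ⟨a, by simp [ha], h⟩

theorem ATree.split {P : Multiset V} (h : g.ATree P) {e : V} (he : e ∈ P) (hA : ¬ g.isA e) :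
    ∃ U1 U2, g.ATree U1 ∧ g.ATree U2 ∧ g.Ad e U1 ∧ g.Ad e U2 ∧ P = U1 + {e} + U2 := by
  induction h with
  | single a h =>
    have : e = a := by simpa using he
    subst this; exact absurd h hA
  | join P Q b hP hQ h1 h2 ihP ihQ =>
    have hb : ∀ {K : Multiset V}, g.Ad b (K + {e}) → g.Ad b K := by
      intro K hK
      rcases Ad_add.1 hK with h | h
      · exact h
      · obtain ⟨x, hx, hr⟩ := h
        have : x = e := by simpa using hx
        subst this; exact absurd (g.rA hr) hA
    simp only [Multiset.mem_add, Multiset.mem_singleton] at he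
    rcases he with (he | he) | he
    · obtain ⟨U1, U2, t1, t2, a1, a2, rfl⟩ := ihP he
      rcases Ad_add.1 h1 with h | h
      · have h := hb h
        exact ⟨U1 + {b} + Q, U2, .join _ _ _ t1 hQ h h2, t2, by simp [Ad_add, a1], a2, by abel⟩
      · exact ⟨U1, U2 + {b} + Q, t1, .join _ _ _ t2 hQ h h2, a1, by simp [Ad_add, a2], by abel⟩
    · subst he; exact ⟨P, Q, hP, hQ, h1, h2, rfl⟩
    · obtain ⟨U1, U2, t1, t2, a1, a2, rfl⟩ := ihQ he
      rcases Ad_add.1 h2 with h | h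
      · have h := hb h
        exact ⟨P + {b} + U1, U2, .join _ _ _ hP t1 h1 h, t2, by simp [Ad_add, a1], a2, by abel⟩
      · exact ⟨U1, P + {b} + U2, t1, .join _ _ _ hP t2 h1 h, a1, by simp [Ad_add, a2], by abel⟩

/-- Splitting with a prescribed A-vertex on the first side. -/
theorem ATree.splitA {P : Multiset V} (h : g.ATree P) {e a : V} (he : e ∈ P) (hA : ¬ g.isA e)
    (ha : a ∈ P) (haA : g.isA a) :
    ∃ U1 U2, g.ATree U1 ∧ g.ATree U2 ∧ g.Ad e U1 ∧ g.Ad e U2 ∧ P = U1 + {e} + U2 ∧ a ∈ U1 := by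
  obtain ⟨U1, U2, t1, t2, a1, a2, rfl⟩ := h.split he hA
  simp only [Multiset.mem_add, Multiset.mem_singleton] at ha
  rcases ha with (ha | ha) | ha
  · exact ⟨U1, U2, t1, t2, a1, a2, rfl, ha⟩
  · subst ha; exact absurd haA hA
  · exact ⟨U2, U1, t2, t1, a2, a1, by abel, ha⟩

/-- Splitting with a prescribed B-vertex adjacent to the first side. -/
theorem ATree.splitB {P : Multiset V} (h : g.ATree P) {e c : V} (he : e ∈ P) (hA : ¬ g.isA e)
    (hc : g.Ad c P) :
    ∃ U1 U2, g.ATree U1 ∧ g.ATree U2 ∧ g.Ad e U1 ∧ g.Ad e U2 ∧ P = U1 + {e} + U2 ∧ g.Ad c U1 := by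
  obtain ⟨x, hx, hr⟩ := hc
  obtain ⟨U1, U2, t1, t2, a1, a2, h, hx'⟩ := h.splitA he hA hx (g.rA hr)
  exact ⟨U1, U2, t1, t2, a1, a2, h, x, hx', hr⟩

theorem ATree.critical {P : Multiset V} (h : g.ATree P) {a : V} (ha : a ∈ P) (hA : g.isA a) :
    ∃ Z, g.Mt Z ∧ P = {a} + Z := by
  induction h generalizing a with
  | single b h =>
    have : a = b := by simpa using ha
    subst this; exact ⟨0, .zero, by simp⟩
  | join P Q b hP hQ h1 h2 ihP ihQ =>
    obtain ⟨x, hx, hrx⟩ := h1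
    obtain ⟨y, hy, hry⟩ := h2
    simp only [Multiset.mem_add, Multiset.mem_singleton] at ha
    rcases ha with (ha | ha) | ha
    · obtain ⟨Z, hZ, rfl⟩ := ihP ha hA
      obtain ⟨Z', hZ', rfl⟩ := ihQ hy (g.rA hry)
      exact ⟨Z + Z' + ({y} + {b}), (hZ.add hZ').add (.pair' hry), by abel⟩
    · subst ha; exact absurd hA (g.rB hrx)
    · obtain ⟨Z, hZ, rfl⟩ := ihP hx (g.rA hrx)
      obtain ⟨Z', hZ', rfl⟩ := ihQ ha hA
      exact ⟨Z + Z' + ({x} + {b}), (hZ.add hZ').add (.pair' hrx), by abel⟩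

/-- A tree together with an adjacent B-vertex is matchable. -/
theorem ATree.mt_add {P : Multiset V} (h : g.ATree P) {b : V} (hb : g.Ad b P) : g.Mt (P + {b}) := by
  obtain ⟨x, hx, hr⟩ := hb
  obtain ⟨Z, hZ, rfl⟩ := h.critical hx (g.rA hr)
  have := hZ.pair _ x b hr
  rwa [add_comm Z] at this

theorem ATree.pc {P : Multiset V} (h : g.ATree P) {a a' : V} (ha : a ∈ P) (hA : g.isA a)
    (ha' : a' ∈ P) (hA' : g.isA a') : g.PC a a' P := by
  induction h generalizing a a' with
  | single b h =>
    have h1 : a = b := by simpa using ha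
    have h2 : a' = b := by simpa using ha'
    subst h1; subst h2; exact ⟨{a'}, 0, .nil _, .zero, by simp⟩
  | join P Q b hP hQ h1 h2 ihP ihQ =>
    have key : ∀ {P Q : Multiset V} {a a' : V}, g.ATree P → g.ATree Q → g.Ad b P → g.Ad b Q →
        (∀ {a a' : V}, a ∈ P → g.isA a → a' ∈ P → g.isA a' → g.PC a a' P) →
        (∀ {a a' : V}, a ∈ Q → g.isA a → a' ∈ Q → g.isA a' → g.PC a a' Q) →
        a ∈ P → g.isA a → a' ∈ Q → g.isA a' → g.PC a a' (P + {b} + Q) := by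
      intro P Q a a' _ _ ⟨x, hx, hrx⟩ ⟨y, hy, hry⟩ ihP ihQ ha hA ha' hA'
      obtain ⟨G, Z, p1, m1, rfl⟩ := ihP ha hA hx (g.rA hrx)
      obtain ⟨G', Z', p2, m2, rfl⟩ := ihQ hy (g.rA hry) ha' hA'
      refine ⟨G + {b} + G', Z + Z', (p1.cons _ _ _ _ (Or.inl hrx)).append p2 (Or.inr hry),
        m1.add m2, by abel⟩
    simp only [Multiset.mem_add, Multiset.mem_singleton] at ha ha'
    rcases ha with (ha | ha) | ha
    · rcases ha' with (ha' | ha') | ha'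
      · have := (ihP ha hA ha' hA').addMt (hQ.mt_add h2)
        convert this using 1; abel
      · subst ha'; exact absurd hA' h1.notA
      · exact key hP hQ h1 h2 ihP ihQ ha hA ha' hA'
    · subst ha; exact absurd hA h1.notA
    · rcases ha' with (ha' | ha') | ha'
      · have := key hQ hP h2 h1 ihQ ihP ha hA ha' hA'
        convert this using 1; abel
      · subst ha'; exact absurd hA' h1.notA
      · have := (ihQ ha hA ha' hA').addMt (hP.mt_add h1)
        convert this using 1; abel

theorem ATree.reach {P : Multiset V} (h : g.ATree P) {a e : V} (ha : a ∈ P) (hA : g.isA a)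
    (he : g.Ad e P) : g.Reach a e P := by
  obtain ⟨y, hy, hr⟩ := he
  obtain ⟨G, Z, p, m, rfl⟩ := h.pc ha hA hy (g.rA hr)
  exact ⟨G, Z, p.cons _ _ _ _ (Or.inl hr), m, rfl⟩

theorem Reach.through {s e p : V} {M P : Multiset V} (h : g.Reach s e M) (hP : g.ATree P)
    (h1 : g.Ad e P) (h2 : g.Ad p P) : g.Reach s p (M + {e} + P) := by
  obtain ⟨G, Z, pa, m, rfl⟩ := h
  obtain ⟨x, hx, hrx⟩ := h1
  obtain ⟨G', Z', pa', m', rfl⟩ := hP.reach hx (g.rA hrx) h2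
  refine ⟨G + {e} + G', Z + Z', ?_, m.add m', by abel⟩
  have := pa.append pa' (Or.inr hrx)
  simpa only [add_assoc] using this

theorem Reach.self (e : V) : g.Reach e e 0 := ⟨0, 0, by simpa using Path.nil e, .zero, by simp⟩

theorem Reach.to_mem {s e y : V} {M P : Multiset V} (h : g.Reach s e M) (hP : g.ATree P)
    (h1 : g.Ad e P) (hy : y ∈ P) (hA : g.isA y) : g.PC s y (M + {e} + P) := 
  h.conn (hP.reach hy hA h1)

theorem Reach.addMt {s t : V} {N Z : Multiset V} (h : g.Reach s t N) (hz : g.Mt Z) :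
    g.Reach s t (N + Z) := by
  obtain ⟨G, Z', h1, h2, rfl⟩ := h
  exact ⟨G, Z' + Z, h1, h2.add hz, by abel⟩

theorem PC.reach {s x e : V} {N : Multiset V} (h : g.PC s x N) (hr : g.r x e) : g.Reach s e N := by
  obtain ⟨G, Z, h1, h2, rfl⟩ := h
  exact ⟨G, Z, h1.cons _ _ _ _ (Or.inl hr), h2, rfl⟩

end BG
end comb

section comb2
variable {V : Type*}
namespace BG
variable (g : BG V)

open Classical in
/-- Excess: number of A-vertices minus number of B-vertices. -/
noncomputable def exc (P : Multiset V) : ℤ := (P.map (fun x => if g.isA x then (1 : ℤ) else -1)).sum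

structure Hyp (U : Multiset V) : Prop where
  HA : ∀ {R C rest : Multiset V} {a b : V}, R + C + rest = U → a ∈ R → g.isA a →
    (Multiset.card C : ℤ) ≤ g.exc R + 1 → b ∈ rest → ¬ g.isA b → ∃ e ∈ rest, g.Ad e R
  HB : ∀ {X rest : Multiset V} {u a : V}, g.ATree X → u ∈ X → ¬ g.isA u → X + rest = U →
    a ∈ rest → g.isA a → ∃ u ∈ X, ∃ y ∈ rest, g.r y u

/-- `s`-`t` and `s'`-`t'` can be simultaneously connected, with the rest matched. -/
def Conn (U : Multiset V) (s t s' t' : V) : Prop := ∃ N N', g.PC s t N ∧ g.PC s' t' N' ∧ N + N' = U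

variable {g}

@[simp] theorem exc_add (P Q : Multiset V) : g.exc (P + Q) = g.exc P + g.exc Q := by
  simp [exc]
@[simp] theorem exc_zero : g.exc 0 = 0 := by simp [exc]
theorem exc_A {x : V} (h : g.isA x) : g.exc {x} = 1 := by simp [exc, h]
theorem exc_B {x : V} (h : ¬ g.isA x) : g.exc {x} = -1 := by simp [exc, h]
theorem ATree.exc {P : Multiset V} (h : g.ATree P) : g.exc P = 1 := by
  induction h with
  | single a h => exact exc_A h
  | join P Q b _ _ h1 _ ih ih' => simp [ih, ih', exc_B h1.notA]
theorem Mt.exc {P : Multiset V} (h : g.Mt P) : g.exc P = 0 := by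
  induction h with
  | zero => simp
  | pair Z x y _ hr ih => simp [ih, exc_A (g.rA hr), exc_B (g.rB hr)]

theorem crossXY {U X Y : Multiset V} {a a' b1 b2 : V} (hU : X + Y + {b1} + {b2} = U)
    (hX : g.ATree X) (hY : g.ATree Y) (ha : a ∈ X) (hA : g.isA a) (ha' : a' ∈ X) (hA' : g.isA a')
    (h1 : g.Ad b1 Y) (h2 : g.Ad b2 Y) : g.Conn U a a' b1 b2 := by
  refine ⟨X, {b1} + Y + {b2}, hX.pc ha hA ha' hA', ?_, by rw [← hU]; abel⟩
  have h := ((Reach.self b1).through hY h1 h2).conn (Reach.self b2)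
  simpa using h

theorem Conn.comm {U : Multiset V} {s t s' t' : V} (h : g.Conn U s t s' t') : g.Conn U s' t' s t := by
  obtain ⟨N, N', h1, h2, h3⟩ := h
  exact ⟨N', N, h2, h1, by rw [← h3]; abel⟩
theorem Conn.symm {U : Multiset V} {s t s' t' : V} (h : g.Conn U s t s' t') : g.Conn U t s s' t' := by
  obtain ⟨N, N', h1, h2, h3⟩ := h
  exact ⟨N, N', h1.symm, h2, h3⟩

theorem Path.mem_end {s t : V} {G : Multiset V} (h : g.Path s t G) : t ∈ G := by
  cases h <;> simp

theorem PC.toReach {s e : V} {M : Multiset V} (h : g.PC s e (M + {e})) : g.Reach s e M := by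
  obtain ⟨G, Z, h1, h2, h3⟩ := h
  obtain ⟨G', rfl⟩ := Multiset.exists_cons_of_mem h1.mem_end
  refine ⟨G', Z, by rwa [← Multiset.singleton_add, add_comm] at h1, h2, ?_⟩
  rw [← Multiset.singleton_add] at h3
  have : {e} + M = {e} + (G' + Z) := by rw [add_comm, h3, add_assoc]
  exact add_left_cancel this

theorem Reach.toPC {s e : V} {M : Multiset V} (h : g.Reach s e M) : g.PC s e (M + {e}) := by
  obtain ⟨G, Z, h1, h2, rfl⟩ := h
  exact ⟨G + {e}, Z, h1, h2, by abel⟩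

end BG

/-- Feet. -/
inductive Foot (V : Type*)
  | att (s : V)
  | via (c : V)

namespace BG
variable (g : BG V)

def conn : Foot V → Multiset V
  | .att _ => 0
  | .via c => {c}

def FPath : Foot V → V → Multiset V → Prop
  | .att s0, s, G => s = s0 ∧ G = 0
  | .via c, s, G => g.PC s c G

def FIn : Foot V → Multiset V → Prop
  | .att s0, P => s0 ∈ P ∧ g.isA s0
  | .via c, P => g.Ad c P

def Valid (U : Multiset V) (X : Prop) (s1 s2 s3 s4 : V) : Prop :=
  (g.Conn U s4 s1 s2 s3 → X) ∨ (g.Conn U s4 s2 s1 s3 → X) ∨ (g.Conn U s4 s3 s1 s2 → X)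

def Lk (U : Multiset V) (X : Prop) (f1 f2 f3 : Foot V) (N : Multiset V) (x : V) : Prop :=
  ∃ s1 s2 s3 s4 G1 G2 G3 G4, g.Valid U X s1 s2 s3 s4 ∧ g.FPath f1 s1 G1 ∧ g.FPath f2 s2 G2 ∧
    g.FPath f3 s3 G3 ∧ g.PC s4 x G4 ∧ N = G1 + G2 + G3 + G4

variable {g}

theorem FIn_add {f : Foot V} {P Q : Multiset V} : g.FIn f (P + Q) ↔ g.FIn f P ∨ g.FIn f Q := by
  cases f with
  | att s => simp [FIn, or_and_right]
  | via c => exact Ad_add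

theorem FIn_B {f : Foot V} {e : V} (he : ¬ g.isA e) : ¬ g.FIn f {e} := by
  cases f with
  | att s =>
    rintro ⟨h1, h2⟩
    have : s = e := by simpa using h1
    subst this; exact he h2
  | via c =>
    rintro ⟨x, hx, h⟩
    have : x = e := by simpa using hx
    subst this; exact he (g.rA h)

theorem ATree.splitF {P : Multiset V} (h : g.ATree P) {e : V} {f : Foot V} (he : e ∈ P)
    (hA : ¬ g.isA e) (hf : g.FIn f P) :
    ∃ U1 U2, g.ATree U1 ∧ g.ATree U2 ∧ g.Ad e U1 ∧ g.Ad e U2 ∧ P = U1 + {e} + U2 ∧ g.FIn f U1 := by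
  obtain ⟨U1, U2, t1, t2, a1, a2, rfl⟩ := h.split he hA
  rw [FIn_add, FIn_add] at hf
  rcases hf with (hf | hf) | hf
  · exact ⟨U1, U2, t1, t2, a1, a2, rfl, hf⟩
  · exact absurd hf (FIn_B hA)
  · exact ⟨U2, U1, t2, t1, a2, a1, by abel, hf⟩

theorem FPath.to_mem {f : Foot V} {s x : V} {G P : Multiset V} (h : g.FPath f s G)
    (hP : g.ATree P) (hf : g.FIn f P) (hx : x ∈ P) (hA : g.isA x) : g.PC s x (G + P) := by
  cases f with
  | att s0 =>
    obtain ⟨rfl, rfl⟩ := h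
    simpa using hP.pc hf.1 hf.2 hx hA
  | via c =>
    obtain ⟨H, Z, p, m, rfl⟩ := h
    obtain ⟨y, hy, hr⟩ := hf
    obtain ⟨H', Z', p', m', rfl⟩ := hP.pc hy (g.rA hr) hx hA
    exact ⟨H + H', Z + Z', p.append p' (Or.inr hr), m.add m', by abel⟩

theorem FPath.reach {f : Foot V} {s e : V} {G P : Multiset V} (h : g.FPath f s G)
    (hP : g.ATree P) (hf : g.FIn f P) (he : g.Ad e P) : g.Reach s e (G + P) := by
  obtain ⟨y, hy, hr⟩ := he
  exact (h.to_mem hP hf hy (g.rA hr)).reach hr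

theorem Valid.p12 {U : Multiset V} {X : Prop} {s1 s2 s3 s4 : V} (h : g.Valid U X s1 s2 s3 s4) :
    g.Valid U X s2 s1 s3 s4 := by
  rcases h with h | h | h
  · exact Or.inr (Or.inl h)
  · exact Or.inl h
  · exact Or.inr (Or.inr fun k => h k.comm.symm.comm)
theorem Valid.p23 {U : Multiset V} {X : Prop} {s1 s2 s3 s4 : V} (h : g.Valid U X s1 s2 s3 s4) :
    g.Valid U X s1 s3 s2 s4 := by
  rcases h with h | h | h
  · exact Or.inl fun k => h k.comm.symm.comm
  · exact Or.inr (Or.inr h)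
  · exact Or.inr (Or.inl h)
theorem Valid.p14 {U : Multiset V} {X : Prop} {s1 s2 s3 s4 : V} (h : g.Valid U X s1 s2 s3 s4) :
    g.Valid U X s4 s2 s3 s1 := by
  rcases h with h | h | h
  · exact Or.inl fun k => h k.symm
  · exact Or.inr (Or.inr fun k => h k.comm)
  · exact Or.inr (Or.inl fun k => h k.comm)
theorem Valid.win {U : Multiset V} {X : Prop} {s1 s2 s3 s4 : V} (h : g.Valid U X s1 s2 s3 s4)
    (h1 : g.Conn U s4 s1 s2 s3) (h2 : g.Conn U s4 s2 s1 s3) (h3 : g.Conn U s4 s3 s1 s2) : X := by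
  rcases h with h | h | h
  · exact h h1
  · exact h h2
  · exact h h3

theorem Lk.p12 {U : Multiset V} {X : Prop} {f1 f2 f3 : Foot V} {N N' : Multiset V} {x : V}
    (h : g.Lk U X f1 f2 f3 N x) (hN : N = N') : g.Lk U X f2 f1 f3 N' x := by
  obtain ⟨s1, s2, s3, s4, G1, G2, G3, G4, v, h1, h2, h3, h4, rfl⟩ := h
  exact ⟨s2, s1, s3, s4, G2, G1, G3, G4, v.p12, h2, h1, h3, h4, by rw [← hN]; abel⟩
theorem Lk.p23 {U : Multiset V} {X : Prop} {f1 f2 f3 : Foot V} {N N' : Multiset V} {x : V}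
    (h : g.Lk U X f1 f2 f3 N x) (hN : N = N') : g.Lk U X f1 f3 f2 N' x := by
  obtain ⟨s1, s2, s3, s4, G1, G2, G3, G4, v, h1, h2, h3, h4, rfl⟩ := h
  exact ⟨s1, s3, s2, s4, G1, G3, G2, G4, v.p23, h1, h3, h2, h4, by rw [← hN]; abel⟩

theorem Lk.step {U : Multiset V} {X : Prop} {f1 f2 f3 : Foot V} {N : Multiset V} {x e : V}
    (h : g.Lk U X f1 f2 f3 N x) (hr : g.r x e) : g.Lk U X f1 f2 f3 (N + {e}) e := by
  obtain ⟨s1, s2, s3, s4, G1, G2, G3, G4, v, h1, h2, h3, h4, rfl⟩ := h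
  exact ⟨s1, s2, s3, s4, G1, G2, G3, G4 + {e}, v, h1, h2, h3, (h4.reach hr).toPC, by abel⟩

theorem Lk.addMt {U : Multiset V} {X : Prop} {f1 f2 f3 : Foot V} {N Z : Multiset V} {x : V}
    (h : g.Lk U X f1 f2 f3 N x) (hz : g.Mt Z) : g.Lk U X f1 f2 f3 (N + Z) x := by
  obtain ⟨s1, s2, s3, s4, G1, G2, G3, G4, v, h1, h2, h3, h4, rfl⟩ := h
  exact ⟨s1, s2, s3, s4, G1, G2, G3, G4 + Z, v, h1, h2, h3, h4.addMt hz, by abel⟩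

theorem PC.to_mem {s e y : V} {M P : Multiset V} (h : g.PC s e M) (hP : g.ATree P)
    (h1 : g.Ad e P) (hy : y ∈ P) (hA : g.isA y) : g.PC s y (M + P) := 
  FPath.to_mem (f := .via e) h hP h1 hy hA

theorem PC.through {s e p : V} {M P : Multiset V} (h : g.PC s e M) (hP : g.ATree P)
    (h1 : g.Ad e P) (h2 : g.Ad p P) : g.Reach s p (M + P) := by
  obtain ⟨y, hy, hr⟩ := h2
  exact (h.to_mem hP h1 hy (g.rA hr)).reach hr

theorem PC.connR {s e t : V} {M N : Multiset V} (h : g.PC s e M) (h' : g.Reach t e N) :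
    g.PC s t (M + N) := by
  obtain ⟨G, Z, h1, h2, rfl⟩ := h
  obtain ⟨G', Z', h1', h2', rfl⟩ := h'
  exact ⟨G + G', Z + Z', h1.join_at h1', h2.add h2', by abel⟩

end BG
end comb2

section comb3
variable {V : Type*}
namespace BG
variable (g : BG V)

structure GS (U : Multiset V) (X : Prop) (R : Multiset V) (f1 f2 f3 : Foot V)
    (P1 P2 P3 : Multiset V) (p q : V) : Prop where
  eq : R + (conn f1 + conn f2 + conn f3) + (P1 + P2 + P3 + {p} + {q}) = U
  ex : g.exc R + 1 = (conn f1).card + (conn f2).card + (conn f3).card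
  t1 : g.ATree P1
  t2 : g.ATree P2
  t3 : g.ATree P3
  p1 : g.Ad p P1
  p2 : g.Ad p P2
  p3 : g.Ad p P3
  q1 : g.Ad q P1
  q2 : g.Ad q P2
  q3 : g.Ad q P3
  F1 : g.FIn f1 P1
  F2 : g.FIn f2 P2
  F3 : g.FIn f3 P3
  lk : ∀ x ∈ R, g.isA x → g.Lk U X f1 f2 f3 (R + (conn f1 + conn f2 + conn f3)) x

variable {g} {U : Multiset V} {X : Prop} {R : Multiset V} {f1 f2 f3 : Foot V}
    {P1 P2 P3 : Multiset V} {p q : V}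

theorem GS.s12 (h : g.GS U X R f1 f2 f3 P1 P2 P3 p q) : g.GS U X R f2 f1 f3 P2 P1 P3 p q where
  eq := by rw [← h.eq]; abel
  ex := by rw [h.ex]; abel
  t1 := h.t2
  t2 := h.t1
  t3 := h.t3
  p1 := h.p2
  p2 := h.p1
  p3 := h.p3
  q1 := h.q2
  q2 := h.q1
  q3 := h.q3
  F1 := h.F2
  F2 := h.F1
  F3 := h.F3
  lk := fun x hx hA => (h.lk x hx hA).p12 (by abel)

theorem GS.s23 (h : g.GS U X R f1 f2 f3 P1 P2 P3 p q) : g.GS U X R f1 f3 f2 P1 P3 P2 p q where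
  eq := by rw [← h.eq]; abel
  ex := by rw [h.ex]; abel
  t1 := h.t1
  t2 := h.t3
  t3 := h.t2
  p1 := h.p1
  p2 := h.p3
  p3 := h.p2
  q1 := h.q1
  q2 := h.q3
  q3 := h.q2
  F1 := h.F1
  F2 := h.F3
  F3 := h.F2
  lk := fun x hx hA => (h.lk x hx hA).p23 (by abel)

theorem GS.spq (h : g.GS U X R f1 f2 f3 P1 P2 P3 p q) : g.GS U X R f1 f2 f3 P1 P2 P3 q p where
  eq := by rw [← h.eq]; abel
  ex := h.ex
  t1 := h.t1
  t2 := h.t2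
  t3 := h.t3
  p1 := h.q1
  p2 := h.q2
  p3 := h.q3
  q1 := h.p1
  q2 := h.p2
  q3 := h.p3
  F1 := h.F1
  F2 := h.F2
  F3 := h.F3
  lk := h.lk

/-- landing on a centre -/
theorem GS.land_p (h : g.GS U X R f1 f2 f3 P1 P2 P3 p q)
    (hl : g.Lk U X f1 f2 f3 (R + (conn f1 + conn f2 + conn f3) + {p}) p) : X := by
  obtain ⟨s1, s2, s3, s4, G1, G2, G3, G4, v, h1, h2, h3, h4, hN⟩ := hl
  have e : (G1 + G2 + G3 + G4) + (P1 + P2 + P3 + {q}) = U := by rw [← hN, ← h.eq]; abel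
  have a1 := h1.reach h.t1 h.F1 h.p1
  have a2 := h2.reach h.t2 h.F2 h.p2
  have a3 := h3.reach h.t3 h.F3 h.p3
  have b1 := h1.reach h.t1 h.F1 h.q1
  have b2 := h2.reach h.t2 h.F2 h.q2
  have b3 := h3.reach h.t3 h.F3 h.q3
  refine v.win ⟨_, _, h4.connR a1, b2.conn b3, ?_⟩ ⟨_, _, h4.connR a2, b1.conn b3, ?_⟩
    ⟨_, _, h4.connR a3, b1.conn b2, ?_⟩ <;> (rw [← e]; abel)

theorem GS.win_split {U1 U2 : Multiset V} {e : V}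
    (h : g.GS U X R f1 f2 f3 (U1 + {e} + U2) P2 P3 p q)
    (hl : g.Lk U X f1 f2 f3 (R + (conn f1 + conn f2 + conn f3) + {e}) e)
    (t1 : g.ATree U1) (t2 : g.ATree U2) (e1 : g.Ad e U1) (e2 : g.Ad e U2) (hF : g.FIn f1 U1)
    (hp : g.Ad p U2) (hq : g.Ad q U1) : X := by
  obtain ⟨s1, s2, s3, s4, G1, G2, G3, G4, v, h1, h2, h3, h4, hN⟩ := hl
  have e : (G1 + G2 + G3 + G4) + (U1 + U2 + P2 + P3 + {p} + {q}) = U := by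
    rw [← hN, ← h.eq]; abel
  have a1 := h1.reach t1 hF e1
  have c1 := h1.reach t1 hF hq
  have a2 := h2.reach h.t2 h.F2 h.p2
  have a3 := h3.reach h.t3 h.F3 h.p3
  have b2 := h2.reach h.t2 h.F2 h.q2
  have b3 := h3.reach h.t3 h.F3 h.q3
  have d := h4.through t2 e2 hp
  refine v.win ⟨_, _, h4.connR a1, (b2.conn b3).addMt (t2.mt_add hp), ?_⟩
    ⟨_, _, d.conn a2, c1.conn b3, ?_⟩ ⟨_, _, d.conn a3, c1.conn b2, ?_⟩ <;> (rw [← e]; abel)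

theorem conn_notA {f : Foot V} {P : Multiset V} (hF : g.FIn f P) {x : V} (hx : x ∈ conn f) :
    ¬ g.isA x := by
  cases f with
  | att s => simp [conn] at hx
  | via c =>
    have : x = c := by simpa [conn] using hx
    subst this; exact hF.notA

theorem conn_exc {f : Foot V} {P : Multiset V} (hF : g.FIn f P) :
    g.exc (conn f) = - ((conn f).card : ℤ) := by
  cases f with
  | att s => simp [conn]
  | via c => simp [conn, exc_B hF.notA]

theorem GS.land_1 {e : V} (h : g.GS U X R f1 f2 f3 P1 P2 P3 p q) (he : e ∈ P1) (hA : ¬ g.isA e)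
    (hl : g.Lk U X f1 f2 f3 (R + (conn f1 + conn f2 + conn f3) + {e}) e) :
    X ∨ ∃ R' f' P', g.GS U X R' f' f2 f3 P' P2 P3 p q ∧ P'.card < P1.card ∧ ∃ a ∈ R', g.isA a := by
  obtain ⟨U1, U2, t1, t2, e1, e2, rfl, hF⟩ := h.t1.splitF he hA h.F1
  have hN : ∀ {p}, ¬ g.isA p → ¬ g.Ad p {e} := by
    rintro p - ⟨x, hx, hr⟩
    have : x = e := by simpa using hx
    subst this; exact hA (g.rA hr)
  have hp := h.p1
  have hq := h.q1
  have hpA := h.p1.notA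
  have hqA := h.q1.notA
  simp only [Ad_add, hN hpA, hN hqA, or_false] at hp hq
  by_cases c2 : ¬ g.Ad p U2 ∧ ¬ g.Ad q U2
  · right
    have hp1 : g.Ad p U1 := by tauto
    have hq1 : g.Ad q U1 := by tauto
    obtain ⟨z, hz, hzA⟩ := t2.exists_isA
    refine ⟨R + {e} + U2, f1, U1, ⟨?_, ?_, t1, h.t2, h.t3, hp1, h.p2, h.p3, hq1, h.q2, h.q3, hF,
      h.F2, h.F3, ?_⟩, by simp; omega, z, by simp [hz], hzA⟩
    · rw [← h.eq]; abel
    · have := h.ex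
      simp [t2.exc, exc_B hA] at *; omega
    · intro x hx hxA
      simp only [Multiset.mem_add, Multiset.mem_singleton] at hx
      rcases hx with (hx | hx) | hx
      · have := (h.lk x hx hxA).addMt (t2.mt_add e2)
        convert this using 1; abel
      · subst hx; exact absurd hxA hA
      · obtain ⟨s1, s2, s3, s4, G1, G2, G3, G4, v, h1, h2, h3, h4, hN⟩ := hl
        refine ⟨s1, s2, s3, s4, G1, G2, G3, _, v, h1, h2, h3, h4.to_mem t2 e2 hx hxA, ?_⟩
        have : R + {e} + U2 + (conn f1 + conn f2 + conn f3) =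
          (R + (conn f1 + conn f2 + conn f3) + {e}) + U2 := by abel
        rw [this, hN]; abel
  by_cases c1 : ¬ g.Ad p U1 ∧ ¬ g.Ad q U1
  · right
    have hp2 : g.Ad p U2 := by tauto
    have hq2 : g.Ad q U2 := by tauto
    obtain ⟨z, hz, hzA⟩ := t1.exists_isA
    refine ⟨R + conn f1 + U1, .via e, U2, ⟨?_, ?_, t2, h.t2, h.t3, hp2, h.p2, h.p3, hq2, h.q2, h.q3,
      e2, h.F2, h.F3, ?_⟩, by simp, z, by simp [hz], hzA⟩
    · rw [← h.eq]; simp only [conn]; abel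
    · have := h.ex
      have h' : (conn (Foot.via e)).card = 1 := rfl
      simp [t1.exc, conn_exc hF, h'] at *; omega
    · intro x hx hxA
      simp only [Multiset.mem_add] at hx
      rcases hx with (hx | hx) | hx
      · obtain ⟨s1, s2, s3, s4, G1, G2, G3, G4, v, h1, h2, h3, h4, hN⟩ := h.lk x hx hxA
        refine ⟨s1, s2, s3, s4, _, G2, G3, _, v, (h1.reach t1 hF e1).toPC, h2, h3, h4, ?_⟩
        have : R + conn f1 + U1 + (conn (.via e) + conn f2 + conn f3) =
          (R + (conn f1 + conn f2 + conn f3)) + (U1 + {e}) := by simp only [conn]; abel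
        rw [this, hN]; abel
      · exact absurd hxA (conn_notA hF hx)
      · obtain ⟨s1, s2, s3, s4, G1, G2, G3, G4, v, h1, h2, h3, h4, hN⟩ := hl
        refine ⟨s4, s2, s3, s1, _, G2, G3, _, v.p14, h4, h2, h3, h1.to_mem t1 hF hx hxA, ?_⟩
        have : R + conn f1 + U1 + (conn (.via e) + conn f2 + conn f3) =
          (R + (conn f1 + conn f2 + conn f3) + {e}) + U1 := by simp only [conn]; abel
        rw [this, hN]; abel
  left
  by_cases c : g.Ad p U2 ∧ g.Ad q U1
  · exact h.win_split hl t1 t2 e1 e2 hF c.1 c.2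
  · exact h.spq.win_split hl t1 t2 e1 e2 hF (by tauto) (by tauto)

theorem GS.main (H : g.Hyp U) (n : ℕ) : ∀ {R : Multiset V} {f1 f2 f3 : Foot V}
    {P1 P2 P3 : Multiset V} {p q e : V}, g.GS U X R f1 f2 f3 P1 P2 P3 p q →
    (P1 + P2 + P3).card ≤ n → e ∈ P1 + P2 + P3 + {p} + {q} → ¬ g.isA e →
    g.Lk U X f1 f2 f3 (R + (conn f1 + conn f2 + conn f3) + {e}) e → X := by
  induction n with
  | zero =>
    intro R f1 f2 f3 P1 P2 P3 p q e h hn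
    obtain ⟨a, ha, -⟩ := h.t1.exists_isA
    have : 0 < P1.card := Multiset.card_pos_iff_exists_mem.2 ⟨a, ha⟩
    simp at hn; simp [hn] at this
  | succ n ih =>
    have step : ∀ {R : Multiset V} {f1 f2 f3 : Foot V}
        {P1 P2 P3 : Multiset V} {p q : V}, g.GS U X R f1 f2 f3 P1 P2 P3 p q →
        (P1 + P2 + P3).card ≤ n → (∃ a ∈ R, g.isA a) → X := by
      rintro R f1 f2 f3 P1 P2 P3 p q h hn ⟨a, ha, hA⟩
      obtain ⟨e, he, x, hx, hr⟩ := H.HA h.eq ha hA (by rw [h.ex]; simp)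
        (b := p) (by simp) h.p1.notA
      exact ih h hn he (g.rB hr) ((h.lk x hx (g.rA hr)).step hr)
    have L1 : ∀ {R : Multiset V} {f1 f2 f3 : Foot V}
        {P1 P2 P3 : Multiset V} {p q e : V}, g.GS U X R f1 f2 f3 P1 P2 P3 p q →
        (P1 + P2 + P3).card ≤ n + 1 → e ∈ P1 → ¬ g.isA e →
        g.Lk U X f1 f2 f3 (R + (conn f1 + conn f2 + conn f3) + {e}) e → X := by
      intro R f1 f2 f3 P1 P2 P3 p q e h hn he hA hl
      rcases h.land_1 he hA hl with h' | ⟨R', f', P', h', hlt, ha⟩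
      · exact h'
      · exact step h' (by simp at *; omega) ha
    intro R f1 f2 f3 P1 P2 P3 p q e h hn he hA hl
    simp only [Multiset.mem_add, Multiset.mem_singleton] at he
    rcases he with (((he | he) | he) | he) | he
    · exact L1 h hn he hA hl
    · exact L1 h.s12 (by simp at *; omega) he hA (hl.p12 (by abel))
    · exact L1 h.s23.s12 (by simp at *; omega) he hA ((hl.p23 rfl).p12 (by abel))
    · subst he; exact h.land_p hl
    · subst he; exact h.spq.land_p hl

end BG
end comb3

section comb4
variable {V : Type*}
namespace BG
variable (g : BG V)

structure Quad (a a' b1 b2 : V) : Prop where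
  h11 : g.r a b1
  h12 : g.r a b2
  h21 : g.r a' b1
  h22 : g.r a' b2

variable {g} {U : Multiset V} {a a' b1 b2 : V}

theorem Quad.A (h : g.Quad a a' b1 b2) : g.isA a := g.rA h.h11
theorem Quad.A' (h : g.Quad a a' b1 b2) : g.isA a' := g.rA h.h21
theorem Quad.B1 (h : g.Quad a a' b1 b2) : ¬ g.isA b1 := g.rB h.h11
theorem Quad.B2 (h : g.Quad a a' b1 b2) : ¬ g.isA b2 := g.rB h.h12
theorem Quad.swap (h : g.Quad a a' b1 b2) : g.Quad a' a b1 b2 := ⟨h.3, h.4, h.1, h.2⟩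

theorem not_Ad_B {p e : V} (hA : ¬ g.isA e) : ¬ g.Ad p {e} := by
  rintro ⟨x, hx, hr⟩
  have : x = e := by simpa using hx
  subst this; exact hA (g.rA hr)

theorem Ad_split {p e : V} {P Q : Multiset V} (hA : ¬ g.isA e) (h : g.Ad p (P + {e} + Q)) :
    g.Ad p P ∨ g.Ad p Q := by
  simpa only [Ad_add, not_Ad_B hA, or_false] using h

theorem t1 (H : g.Hyp U) (qd : g.Quad a a' b1 b2) {R P1 P2 P3 : Multiset V} {p q : V}
    (hU : R + P1 + P2 + P3 + {p} + {q} + {b1} + {b2} = U) (tR : g.ATree R) (t1 : g.ATree P1)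
    (t2 : g.ATree P2) (t3 : g.ATree P3) (ha : a ∈ R) (ha' : a' ∈ P1) (h1 : g.Ad b1 P2)
    (h2 : g.Ad b2 P3) (p1 : g.Ad p P1) (p2 : g.Ad p P2) (p3 : g.Ad p P3)
    (q1 : g.Ad q P1) (q2 : g.Ad q P2) (q3 : g.Ad q P3) : g.Conn U a a' b1 b2 := by
  have lk : ∀ x ∈ R, g.isA x → g.Lk U (g.Conn U a a' b1 b2) (.att a') (.via b1) (.via b2)
      (R + (conn (.att a') + conn (.via b1) + conn (.via b2))) x := by
    intro x hx hA
    refine ⟨a', b1, b2, a, 0, {b1}, {b2}, R, Or.inl id, ⟨rfl, rfl⟩, ?_, ?_, tR.pc ha qd.A hx hA, ?_⟩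
    · exact ⟨{b1}, 0, .nil _, .zero, by simp⟩
    · exact ⟨{b2}, 0, .nil _, .zero, by simp⟩
    · simp only [conn]; abel
  have h : g.GS U (g.Conn U a a' b1 b2) R (.att a') (.via b1) (.via b2) P1 P2 P3 p q :=
    ⟨by rw [← hU]; simp only [conn]; abel, by simp [tR.exc, conn], t1, t2, t3, p1, p2, p3, q1, q2, q3,
      ⟨ha', qd.A'⟩, h1, h2, lk⟩
  obtain ⟨e, he, x, hx, hr⟩ := H.HA h.eq ha qd.A (by rw [h.ex]; simp)
        (b := p) (by simp) h.p1.notA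
  exact h.main H _ le_rfl he (g.rB hr) ((h.lk x hx (g.rA hr)).step hr)

theorem t2 (H : g.Hyp U) (qd : g.Quad a a' b1 b2) {P1 P2 P3 : Multiset V} {p q : V}
    (hU : P1 + P2 + P3 + {p} + {q} + {b1} = U) (t1 : g.ATree P1)
    (t2 : g.ATree P2) (t3 : g.ATree P3) (ha : a ∈ P1) (ha' : a' ∈ P2) (h1 : g.Ad b1 P3)
    (h2 : b2 ∈ P1 + P2 + P3) (p1 : g.Ad p P1) (p2 : g.Ad p P2) (p3 : g.Ad p P3)
    (q1 : g.Ad q P1) (q2 : g.Ad q P2) (q3 : g.Ad q P3) : g.Conn U a a' b1 b2 := by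
  have h : g.GS U (g.Conn U a a' b1 b2) 0 (.att a) (.att a') (.via b1) P1 P2 P3 p q :=
    ⟨by rw [← hU]; simp only [conn]; abel, by simp [conn], t1, t2, t3, p1, p2, p3, q1, q2, q3,
      ⟨ha, qd.A⟩, ⟨ha', qd.A'⟩, h1, by simp⟩
  refine h.main H _ le_rfl (e := b2) (by simp at h2 ⊢; tauto) qd.B2 ?_
  refine ⟨a, a', b1, b2, 0, 0, {b1}, {b2}, Or.inr (Or.inr fun k => k.symm.comm), ⟨rfl, rfl⟩,
    ⟨rfl, rfl⟩, ?_, ?_, ?_⟩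
  · exact ⟨{b1}, 0, .nil _, .zero, by simp⟩
  · exact ⟨{b2}, 0, .nil _, .zero, by simp⟩
  · simp only [conn]; abel

variable (g) in
structure F2p (U : Multiset V) (a a' b1 b2 : V) (S S' P Q R : Multiset V) (u j k : V) : Prop where
  qd : g.Quad a a' b1 b2
  eq : S + {b2} + S' + (P + Q + R + {b1} + {u} + {j} + {k}) = U
  tS : g.ATree S
  tS' : g.ATree S'
  tP : g.ATree P
  tQ : g.ATree Q
  tR : g.ATree R
  aS : a ∈ S
  aS' : a' ∈ S'
  jP : g.Ad j P
  jQ : g.Ad j Q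
  jR : g.Ad j R
  kP : g.Ad k P
  kQ : g.Ad k Q
  kR : g.Ad k R
  bQ : g.Ad b1 Q
  bR : g.Ad b1 R
  uS : g.Ad u S ∨ g.Ad u S'
  uP : g.Ad u P
  uQ : g.Ad u Q

theorem F2p.symm {S S' P Q R : Multiset V} {u j k : V} (h : g.F2p U a a' b1 b2 S S' P Q R u j k) :
    g.F2p U a' a b1 b2 S' S P Q R u j k where
  qd := h.qd.swap
  eq := by rw [← h.eq]; abel
  tS := h.tS'
  tS' := h.tS
  tP := h.tP
  tQ := h.tQ
  tR := h.tR
  aS := h.aS'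
  aS' := h.aS
  jP := h.jP
  jQ := h.jQ
  jR := h.jR
  kP := h.kP
  kQ := h.kQ
  kR := h.kR
  bQ := h.bQ
  bR := h.bR
  uS := h.uS.symm
  uP := h.uP
  uQ := h.uQ

theorem F2p.center {S S' P Q R : Multiset V} {u j k : V} (H : g.Hyp U)
    (h : g.F2p U a a' b1 b2 S S' P Q R u j k)
    (hu : g.Ad u S') (hy : g.Ad b2 P ∨ g.Ad b2 Q ∨ g.Ad b2 R) : g.Conn U a a' b1 b2 := by
  obtain ⟨qd, eq, tS, tS', tP, tQ, tR, aS, aS', jP, jQ, jR, kP, kQ, kR, bQ, bR, uS, uP, uQ⟩ := h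
  rcases hy with hy | hy | hy
  · exact t1 H qd (R := S) (P1 := S' + {u} + Q) (P2 := R) (P3 := P) (p := j) (q := k)
      (by rw [← eq]; abel) tS (.join _ _ _ tS' tQ hu uQ) tR tP aS (by simp [aS']) bR hy
      (by simp [Ad_add, *]) jR jP (by simp [Ad_add, *]) kR kP
  · exact t1 H qd (R := S) (P1 := S' + {u} + P) (P2 := R) (P3 := Q) (p := j) (q := k)
      (by rw [← eq]; abel) tS (.join _ _ _ tS' tP hu uP) tR tQ aS (by simp [aS']) bR hy
      (by simp [Ad_add, *]) jR jQ (by simp [Ad_add, *]) kR kQ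
  · exact t1 H qd (R := S) (P1 := S' + {u} + P) (P2 := Q) (P3 := R) (p := j) (q := k)
      (by rw [← eq]; abel) tS (.join _ _ _ tS' tP hu uP) tQ tR aS (by simp [aS']) bQ hy
      (by simp [Ad_add, *]) jQ jR (by simp [Ad_add, *]) kQ kR

theorem F2p.side {S S' P Q R : Multiset V} {u j k u' : V}
    (h : g.F2p U a a' b1 b2 S S' P Q R u j k) (hu : u' ∈ S) (hA : ¬ g.isA u')
    (hy : g.Ad u' P ∨ g.Ad u' Q ∨ g.Ad u' R) :
    ∃ S1 P1 Q1 R1 u1, g.F2p U a a' b1 b2 S1 S' P1 Q1 R1 u1 j k ∧ S1.card < S.card := by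
  obtain ⟨qd, eq, tS, tS', tP, tQ, tR, aS, aS', jP, jQ, jR, kP, kQ, kR, bQ, bR, uS, uP, uQ⟩ := h
  obtain ⟨S1, X, t1, tX, u1, uX, rfl, aS1⟩ := tS.splitA hu hA aS qd.A
  have hc : S1.card < (S1 + {u'} + X).card := by simp; omega
  by_cases c : g.Ad u S1 ∨ g.Ad u S'
  · rcases hy with hy | hy | hy
    · exact ⟨S1, P + {u'} + X, Q, R, u, ⟨qd, by rw [← eq]; abel, t1, tS', .join _ _ _ tP tX hy uX,
        tQ, tR, aS1, aS', by simp [Ad_add, *], jQ, jR, by simp [Ad_add, *], kQ, kR, bQ, bR, c,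
        by simp [Ad_add, *], uQ⟩, hc⟩
    · exact ⟨S1, P, Q + {u'} + X, R, u, ⟨qd, by rw [← eq]; abel, t1, tS', tP, .join _ _ _ tQ tX hy uX,
        tR, aS1, aS', jP, by simp [Ad_add, *], jR, kP, by simp [Ad_add, *], kR,
        by simp [Ad_add, *], bR, c, uP, by simp [Ad_add, *]⟩, hc⟩
    · exact ⟨S1, P, Q, R + {u'} + X, u, ⟨qd, by rw [← eq]; abel, t1, tS', tP, tQ, .join _ _ _ tR tX hy uX,
        aS1, aS', jP, jQ, by simp [Ad_add, *], kP, kQ, by simp [Ad_add, *],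
        bQ, by simp [Ad_add, *], c, uP, uQ⟩, hc⟩
  · have huX : g.Ad u X := by
      rcases uS with h | h
      · rcases Ad_split hA h with h | h <;> tauto
      · tauto
    rcases hy with hy | hy | hy
    · exact ⟨S1, P, Q + {u} + X, R, u', ⟨qd, by rw [← eq]; abel, t1, tS', tP, .join _ _ _ tQ tX uQ huX,
        tR, aS1, aS', jP, by simp [Ad_add, *], jR, kP, by simp [Ad_add, *], kR,
        by simp [Ad_add, *], bR, Or.inl u1, hy, by simp [Ad_add, *]⟩, hc⟩
    · exact ⟨S1, X + {u} + P, Q, R, u', ⟨qd, by rw [← eq]; abel, t1, tS', .join _ _ _ tX tP huX uP, tQ,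
        tR, aS1, aS', by simp [Ad_add, *], jQ, jR, by simp [Ad_add, *], kQ, kR,
        bQ, bR, Or.inl u1, by simp [Ad_add, *], hy⟩, hc⟩
    · exact ⟨S1, X + {u} + P, R, Q, u', ⟨qd, by rw [← eq]; abel, t1, tS', .join _ _ _ tX tP huX uP, tR,
        tQ, aS1, aS', by simp [Ad_add, *], jR, jQ, by simp [Ad_add, *], kR, kQ,
        bR, bQ, Or.inl u1, by simp [Ad_add, *], hy⟩, hc⟩

theorem Ad_of_A {y u : V} {P : Multiset V} (h : y ∈ P) (hr : g.r y u) : g.Ad u P := ⟨y, h, hr⟩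

theorem F2p.main (H : g.Hyp U) (n : ℕ) : ∀ {a a' : V} {S S' P Q R : Multiset V} {u j k : V},
    g.F2p U a a' b1 b2 S S' P Q R u j k → (S + S').card ≤ n → g.Conn U a a' b1 b2 := by
  induction n with
  | zero =>
    intro a a' S S' P Q R u j k h hn
    have : 0 < S.card := Multiset.card_pos_iff_exists_mem.2 ⟨a, h.aS⟩
    simp at hn; simp [hn] at this
  | succ n ih =>
    intro a a' S S' P Q R u j k h hn
    obtain ⟨z, hz, hzA⟩ := h.tQ.exists_isA
    have hX : g.ATree (S + {b2} + S') := .join _ _ _ h.tS h.tS' ⟨a, h.aS, h.qd.h12⟩ ⟨a', h.aS', h.qd.h22⟩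
    obtain ⟨u', hu', y, hy, hr⟩ := H.HB hX (u := b2) (by simp) h.qd.B2 h.eq (a := z)
      (by simp [hz]) hzA
    have hyA := g.rA hr
    have hA := g.rB hr
    have hy' : g.Ad u' P ∨ g.Ad u' Q ∨ g.Ad u' R := by
      have hb : ∀ {v P}, g.Ad v P → y ≠ v := by
        rintro v P hv rfl; exact hv.notA hyA
      simp only [Multiset.mem_add, Multiset.mem_singleton, hb h.bQ, hb h.uP, hb h.jP, hb h.kP,
        or_false] at hy
      rcases hy with (hy | hy) | hy
      · exact Or.inl ⟨y, hy, hr⟩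
      · exact Or.inr (Or.inl ⟨y, hy, hr⟩)
      · exact Or.inr (Or.inr ⟨y, hy, hr⟩)
    simp only [Multiset.mem_add, Multiset.mem_singleton] at hu'
    rcases hu' with (hu' | hu') | hu'
    · obtain ⟨S1, P1, Q1, R1, u1, h1, hc⟩ := h.side hu' hA hy'
      exact ih h1 (by simp at *; omega)
    · subst hu'
      rcases h.uS with hu | hu
      · exact (h.symm.center H hu hy').symm
      · exact h.center H hu hy'
    · obtain ⟨S1, P1, Q1, R1, u1, h1, hc⟩ := h.symm.side hu' hA hy'
      exact (ih h1 (by simp at *; omega)).symm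

variable (g) in
structure F3p (U : Multiset V) (a a' b1 b2 : V) (S S' Q R : Multiset V) (p q : V) : Prop where
  qd : g.Quad a a' b1 b2
  eq : S + {b2} + S' + (Q + R + {b1} + {p} + {q}) = U
  tS : g.ATree S
  tS' : g.ATree S'
  tQ : g.ATree Q
  tR : g.ATree R
  aS : a ∈ S
  aS' : a' ∈ S'
  bQ : g.Ad b1 Q
  bR : g.Ad b1 R
  pS : g.Ad p S ∨ g.Ad p S'
  pQ : g.Ad p Q
  pR : g.Ad p R
  qS : g.Ad q S ∨ g.Ad q S'
  qQ : g.Ad q Q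
  qR : g.Ad q R

theorem F3p.symm {S S' Q R : Multiset V} {p q : V} (h : g.F3p U a a' b1 b2 S S' Q R p q) :
    g.F3p U a' a b1 b2 S' S Q R p q := by
  obtain ⟨qd, eq, tS, tS', tQ, tR, aS, aS', bQ, bR, pS, pQ, pR, qS, qQ, qR⟩ := h
  exact ⟨qd.swap, by rw [← eq]; abel, tS', tS, tQ, tR, aS', aS, bQ, bR, pS.symm, pQ, pR, qS.symm, qQ, qR⟩

theorem F3p.sQ {S S' Q R : Multiset V} {p q : V} (h : g.F3p U a a' b1 b2 S S' Q R p q) :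
    g.F3p U a a' b1 b2 S S' R Q p q := by
  obtain ⟨qd, eq, tS, tS', tQ, tR, aS, aS', bQ, bR, pS, pQ, pR, qS, qQ, qR⟩ := h
  exact ⟨qd, by rw [← eq]; abel, tS, tS', tR, tQ, aS, aS', bR, bQ, pS, pR, pQ, qS, qR, qQ⟩

theorem F3p.sp {S S' Q R : Multiset V} {p q : V} (h : g.F3p U a a' b1 b2 S S' Q R p q) :
    g.F3p U a a' b1 b2 S S' Q R q p := by
  obtain ⟨qd, eq, tS, tS', tQ, tR, aS, aS', bQ, bR, pS, pQ, pR, qS, qQ, qR⟩ := h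
  exact ⟨qd, by rw [← eq]; abel, tS, tS', tQ, tR, aS, aS', bQ, bR, qS, qQ, qR, pS, pQ, pR⟩

theorem F3p.center1 {S S' Q R : Multiset V} {p q : V}
    (h : g.F3p U a a' b1 b2 S S' Q R p q) (hy : g.Ad b2 Q) (hp : g.Ad p S) (hq : g.Ad q S') :
    g.Conn U a a' b1 b2 := by
  obtain ⟨qd, eq, tS, tS', tQ, tR, aS, aS', bQ, bR, pS, pQ, pR, qS, qQ, qR⟩ := h
  exact crossXY (X := S + {p} + R + {q} + S') (Y := Q) (by rw [← eq]; abel)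
    (.join _ _ _ (.join _ _ _ tS tR hp pR) tS' (by simp [Ad_add, *]) hq) tQ (by simp [aS]) qd.A
    (by simp [aS']) qd.A' bQ hy

theorem F3p.center2 {S S' Q R : Multiset V} {p q : V} (H : g.Hyp U)
    (h : g.F3p U a a' b1 b2 S S' Q R p q) (hy : g.Ad b2 Q) (hp : g.Ad p S') (hq : g.Ad q S') :
    g.Conn U a a' b1 b2 := by
  obtain ⟨qd, eq, tS, tS', tQ, tR, aS, aS', bQ, bR, pS, pQ, pR, qS, qQ, qR⟩ := h
  exact t1 H qd (R := S) (P1 := S') (P2 := R) (P3 := Q) (p := p) (q := q)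
      (by rw [← eq]; abel) tS tS' tR tQ aS aS' bR hy hp pR pQ hq qR qQ

theorem F3p.center {S S' Q R : Multiset V} {p q : V} (H : g.Hyp U)
    (h : g.F3p U a a' b1 b2 S S' Q R p q) (hy : g.Ad b2 Q) : g.Conn U a a' b1 b2 := by
  rcases h.pS with hp | hp <;> rcases h.qS with hq | hq
  · exact (h.symm.center2 H hy hp hq).symm
  · exact h.center1 hy hp hq
  · exact h.sp.center1 hy hq hp
  · exact h.center2 H hy hp hq

theorem F3p.side1 {S1 X u' S' Q R p q} (h : g.F3p U a a' b1 b2 (S1 + {u'} + X) S' Q R p q)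
    (t1 : g.ATree S1) (tX : g.ATree X) (u1 : g.Ad u' S1) (uX : g.Ad u' X) (aS1 : a ∈ S1)
    (hy : g.Ad u' Q) (hp : g.Ad p S1 ∨ g.Ad p S') (hq : g.Ad q X) :
    g.F3p U a a' b1 b2 S1 S' Q (X + {q} + R) p u' := by
  obtain ⟨qd, eq, tS, tS', tQ, tR, aS, aS', bQ, bR, pS, pQ, pR, qS, qQ, qR⟩ := h
  exact ⟨qd, by rw [← eq]; abel, t1, tS', tQ, .join _ _ _ tX tR hq qR, aS1, aS', bQ,
    by simp [Ad_add, *], hp, pQ, by simp [Ad_add, *], Or.inl u1, hy, by simp [Ad_add, *]⟩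

theorem F3p.side (H : g.Hyp U) {S S' Q R : Multiset V} {p q u' : V}
    (h : g.F3p U a a' b1 b2 S S' Q R p q) (hu : u' ∈ S) (hA : ¬ g.isA u') (hy : g.Ad u' Q) :
    g.Conn U a a' b1 b2 ∨
    ∃ S1 Q1 R1 p1 q1, g.F3p U a a' b1 b2 S1 S' Q1 R1 p1 q1 ∧ S1.card < S.card := by
  have h0 := h
  obtain ⟨qd, eq, tS, tS', tQ, tR, aS, aS', bQ, bR, pS, pQ, pR, qS, qQ, qR⟩ := h
  obtain ⟨S1, X, t1, tX, u1, uX, rfl, aS1⟩ := tS.splitA hu hA aS qd.A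
  have hc : S1.card < (S1 + {u'} + X).card := by simp; omega
  have hp : (g.Ad p S1 ∨ g.Ad p S') ∨ g.Ad p X := by
    rcases pS with h | h
    · rcases Ad_split hA h with h | h <;> tauto
    · tauto
  have hq : (g.Ad q S1 ∨ g.Ad q S') ∨ g.Ad q X := by
    rcases qS with h | h
    · rcases Ad_split hA h with h | h <;> tauto
    · tauto
  rcases hp with hp | hp <;> rcases hq with hq | hq
  · right
    exact ⟨S1, Q + {u'} + X, R, p, q, ⟨qd, by rw [← eq]; abel, t1, tS', .join _ _ _ tQ tX hy uX, tR,
      aS1, aS', by simp [Ad_add, *], bR, hp, by simp [Ad_add, *], pR, hq, by simp [Ad_add, *], qR⟩, hc⟩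
  · right
    exact ⟨_, _, _, _, _, h0.side1 t1 tX u1 uX aS1 hy hp hq, hc⟩
  · right
    exact ⟨_, _, _, _, _, h0.sp.side1 t1 tX u1 uX aS1 hy hq hp, hc⟩
  · left
    have : g.F2p U a a' b1 b2 S1 S' X Q R u' p q :=
      ⟨qd, by rw [← eq]; abel, t1, tS', tX, tQ, tR, aS1, aS', hp, pQ, pR, hq, qQ, qR, bQ, bR, Or.inl u1,
        uX, hy⟩
    exact this.main H _ le_rfl

theorem F3p.main (H : g.Hyp U) (n : ℕ) : ∀ {a a' : V} {S S' Q R : Multiset V} {p q : V},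
    g.F3p U a a' b1 b2 S S' Q R p q → (S + S').card ≤ n → g.Conn U a a' b1 b2 := by
  induction n with
  | zero =>
    intro a a' S S' Q R p q h hn
    have : 0 < S.card := Multiset.card_pos_iff_exists_mem.2 ⟨a, h.aS⟩
    simp at hn; simp [hn] at this
  | succ n ih =>
    have key : ∀ {a a' : V} {S S' Q R : Multiset V} {p q u' : V},
        g.F3p U a a' b1 b2 S S' Q R p q → (S + S').card ≤ n + 1 → u' ∈ S + {b2} + S' → ¬ g.isA u' →
        g.Ad u' Q → g.Conn U a a' b1 b2 := by
      intro a a' S S' Q R p q u' h hn hu' hA hy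
      simp only [Multiset.mem_add, Multiset.mem_singleton] at hu'
      rcases hu' with (hu' | hu') | hu'
      · rcases h.side H hu' hA hy with h' | ⟨S1, Q1, R1, p1, q1, h1, hc⟩
        · exact h'
        · exact ih h1 (by simp at *; omega)
      · subst hu'; exact h.center H hy
      · rcases h.symm.side H hu' hA hy with h' | ⟨S1, Q1, R1, p1, q1, h1, hc⟩
        · exact h'.symm
        · exact (ih h1 (by simp at *; omega)).symm
    intro a a' S S' Q R p q h hn
    obtain ⟨z, hz, hzA⟩ := h.tQ.exists_isA
    have hX : g.ATree (S + {b2} + S') := .join _ _ _ h.tS h.tS' ⟨a, h.aS, h.qd.h12⟩ ⟨a', h.aS', h.qd.h22⟩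
    obtain ⟨u', hu', y, hy, hr⟩ := H.HB hX (u := b2) (by simp) h.qd.B2 h.eq (a := z)
      (by simp [hz]) hzA
    have hyA := g.rA hr
    have hA := g.rB hr
    have hb : ∀ {v P}, g.Ad v P → y ≠ v := by
      rintro v P hv rfl; exact hv.notA hyA
    simp only [Multiset.mem_add, Multiset.mem_singleton, hb h.bQ, hb h.pQ, hb h.qQ,
        or_false] at hy
    rcases hy with hy | hy
    · exact key h hn hu' hA ⟨y, hy, hr⟩
    · exact key h.sQ hn hu' hA ⟨y, hy, hr⟩

end BG
end comb4

section comb5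
variable {V : Type*}
namespace BG
variable (g : BG V)

/-- `K₃,₃`-model with centres `b p q`, without the requirement that it spans everything. -/
structure MB (K1 K2 K3 : Multiset V) (b p q : V) : Prop where
  t1 : g.ATree K1
  t2 : g.ATree K2
  t3 : g.ATree K3
  b1 : g.Ad b K1
  b2 : g.Ad b K2
  b3 : g.Ad b K3
  p1 : g.Ad p K1
  p2 : g.Ad p K2
  p3 : g.Ad p K3
  q1 : g.Ad q K1
  q2 : g.Ad q K2
  q3 : g.Ad q K3

variable {g} {U : Multiset V} {a a' b1 b2 : V}

theorem MB.s12 {K1 K2 K3 : Multiset V} {b p q : V} (h : g.MB K1 K2 K3 b p q) : g.MB K2 K1 K3 b p q := by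
  obtain ⟨t1, t2, t3, b1, b2, b3, p1, p2, p3, q1, q2, q3⟩ := h
  exact ⟨t2, t1, t3, b2, b1, b3, p2, p1, p3, q2, q1, q3⟩
theorem MB.s23 {K1 K2 K3 : Multiset V} {b p q : V} (h : g.MB K1 K2 K3 b p q) : g.MB K1 K3 K2 b p q := by
  obtain ⟨t1, t2, t3, b1, b2, b3, p1, p2, p3, q1, q2, q3⟩ := h
  exact ⟨t1, t3, t2, b1, b3, b2, p1, p3, p2, q1, q3, q2⟩
theorem MB.spq {K1 K2 K3 : Multiset V} {b p q : V} (h : g.MB K1 K2 K3 b p q) : g.MB K1 K2 K3 b q p := by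
  obtain ⟨t1, t2, t3, b1, b2, b3, p1, p2, p3, q1, q2, q3⟩ := h
  exact ⟨t1, t2, t3, b1, b2, b3, q1, q2, q3, p1, p2, p3⟩
theorem MB.sbp {K1 K2 K3 : Multiset V} {b p q : V} (h : g.MB K1 K2 K3 b p q) : g.MB K1 K2 K3 p b q := by
  obtain ⟨t1, t2, t3, b1, b2, b3, p1, p2, p3, q1, q2, q3⟩ := h
  exact ⟨t1, t2, t3, p1, p2, p3, b1, b2, b3, q1, q2, q3⟩

variable (g) in
structure DG (U : Multiset V) (a a' b1 b2 : V) (D K1 K2 K3 : Multiset V) (p q : V) : Prop where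
  qd : g.Quad a a' b1 b2
  eq : D + {b2} + (K1 + K2 + K3 + {b1} + {p} + {q}) = U
  tD : g.ATree D
  dD : g.Ad b2 D
  m : g.MB K1 K2 K3 b1 p q
  ha : a ∈ K1
  ha' : a' ∈ K1

theorem DG.spq {D K1 K2 K3 : Multiset V} {p q : V} (h : g.DG U a a' b1 b2 D K1 K2 K3 p q) :
    g.DG U a a' b1 b2 D K1 K2 K3 q p :=
  ⟨h.qd, by rw [← h.eq]; abel, h.tD, h.dD, h.m.spq, h.ha, h.ha'⟩
theorem DG.s23 {D K1 K2 K3 : Multiset V} {p q : V} (h : g.DG U a a' b1 b2 D K1 K2 K3 p q) :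
    g.DG U a a' b1 b2 D K1 K3 K2 p q :=
  ⟨h.qd, by rw [← h.eq]; abel, h.tD, h.dD, h.m.s23, h.ha, h.ha'⟩

theorem DG.at_p {D K1 K2 K3 : Multiset V} {p q : V} (h : g.DG U a a' b1 b2 D K1 K2 K3 p q)
    (he : g.Ad p D) : g.Conn U a a' b1 b2 := by
  obtain ⟨qd, eq, tD, dD, ⟨t1, t2, t3, c1, c2, c3, p1, p2, p3, q1, q2, q3⟩, ha, ha'⟩ := h
  exact crossXY (X := K1) (Y := D + {p} + K2 + {q} + K3) (by rw [← eq]; abel) t1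
    (.join _ _ _ (.join _ _ _ tD t2 he p2) t3 (by simp [Ad_add, *]) q3) ha qd.A ha' qd.A'
    (by simp [Ad_add, *]) (by simp [Ad_add, *])

theorem DG.at_b {D K1 K2 K3 : Multiset V} {p q : V} (h : g.DG U a a' b1 b2 D K1 K2 K3 p q)
    (he : g.Ad b1 D) : g.Conn U a a' b1 b2 := by
  obtain ⟨qd, eq, tD, dD, ⟨t1, t2, t3, c1, c2, c3, p1, p2, p3, q1, q2, q3⟩, ha, ha'⟩ := h
  exact crossXY (X := K1 + {p} + K2 + {q} + K3) (Y := D) (by rw [← eq]; abel) 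
    (.join _ _ _ (.join _ _ _ t1 t2 p1 p2) t3 (by simp [Ad_add, *]) q3) tD (by simp [ha]) qd.A
    (by simp [ha']) qd.A' he dD

theorem DG.dist2 {D K1 U1 U2 K3 : Multiset V} {p q e : V}
    (h : g.DG U a a' b1 b2 D K1 (U1 + {e} + U2) K3 p q)
    (t1 : g.ATree U1) (t2 : g.ATree U2) (e2 : g.Ad e U2) (he : g.Ad e D)
    (hp : g.Ad p U1) (hq : g.Ad q U2) : g.Conn U a a' b1 b2 := by
  obtain ⟨qd, eq, tD, dD, ⟨s1, s2, s3, c1, c2, c3, p1, p2, p3, q1, q2, q3⟩, ha, ha'⟩ := h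
  have hY : g.ATree (D + {e} + U2 + {q} + K3 + {p} + U1) := by
    refine .join _ _ _ (.join _ _ _ (.join _ _ _ tD t2 he e2) s3 ?_ q3) t1 ?_ hp <;>
      simp [Ad_add, *]
  exact crossXY (X := K1) (by rw [← eq]; abel) s1 hY ha qd.A ha' qd.A'
    (by simp [Ad_add, *]) (by simp [Ad_add, *])

theorem DG.grow2 {D K1 U1 U2 K3 : Multiset V} {p q e : V}
    (h : g.DG U a a' b1 b2 D K1 (U1 + {e} + U2) K3 p q)
    (t1 : g.ATree U1) (t2 : g.ATree U2) (e1 : g.Ad e U1) (hA : ¬ g.isA e) (he : g.Ad e D)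
    (hp : g.Ad p U2) (hq : g.Ad q U2) : g.Conn U a a' b1 b2 ∨ 
      g.DG U a a' b1 b2 (D + {e} + U1) K1 U2 K3 p q := by
  obtain ⟨qd, eq, tD, dD, ⟨s1, s2, s3, c1, c2, c3, p1, p2, p3, q1, q2, q3⟩, ha, ha'⟩ := h
  by_cases c : g.Ad b1 U1
  · left
    exact crossXY (X := K1 + {p} + K3 + {q} + U2) (Y := D + {e} + U1) (by rw [← eq]; abel)
      (.join _ _ _ (.join _ _ _ s1 s3 p1 p3) t2 (by simp [Ad_add, *]) hq)
      (.join _ _ _ tD t1 he e1) (by simp [ha]) qd.A (by simp [ha']) qd.A' (by simp [Ad_add, *])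
      (by simp [Ad_add, *])
  · right
    have c2' : g.Ad b1 U2 := by
      rcases Ad_split hA c2 with h | h <;> tauto
    exact ⟨qd, by rw [← eq]; abel, .join _ _ _ tD t1 he e1, by simp [Ad_add, *],
      ⟨s1, t2, s3, c1, c2', c3, p1, hp, p3, q1, hq, q3⟩, ha, ha'⟩

theorem DG.in2 {D K1 K2 K3 : Multiset V} {p q e : V}
    (h : g.DG U a a' b1 b2 D K1 K2 K3 p q) (hA : ¬ g.isA e) (he : g.Ad e D) (heK : e ∈ K2) :
    g.Conn U a a' b1 b2 ∨
      ∃ D' K2', g.DG U a a' b1 b2 D' K1 K2' K3 p q ∧ K2'.card < K2.card := by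
  obtain ⟨U1, U2, t1, t2, e1, e2, rfl⟩ := h.m.t2.split heK hA
  rcases Ad_split hA h.m.p2 with hp | hp <;> rcases Ad_split hA h.m.q2 with hq | hq
  · have h' : g.DG U a a' b1 b2 D K1 (U2 + {e} + U1) K3 p q := by
      convert h using 1; abel
    exact (h'.grow2 t2 t1 e2 hA he hp hq).imp id fun k => ⟨_, _, k, by simp; omega⟩
  · exact Or.inl (h.dist2 t1 t2 e2 he hp hq)
  · exact Or.inl (h.spq.dist2 t1 t2 e2 he hq hp)
  · exact (h.grow2 t1 t2 e1 hA he hp hq).imp id fun k => ⟨_, _, k, by simp⟩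

theorem DG.in1p {D U1 U2 K2 K3 : Multiset V} {p q e : V}
    (h : g.DG U a a' b1 b2 D (U1 + {e} + U2) K2 K3 p q) (t1 : g.ATree U1) (t2 : g.ATree U2)
    (e2 : g.Ad e U2) (he : g.Ad e D) (ha : a ∈ U1) (ha' : a' ∈ U1) (hp : g.Ad p U2) :
    g.Conn U a a' b1 b2 := by
  obtain ⟨qd, eq, tD, dD, ⟨s1, s2, s3, c1, c2, c3, p1, p2, p3, q1, q2, q3⟩, -, -⟩ := h
  have hY : g.ATree (D + {e} + U2 + {p} + K2 + {q} + K3) := by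
    refine .join _ _ _ (.join _ _ _ (.join _ _ _ tD t2 he e2) s2 ?_ p2) s3 ?_ q3 <;>
      simp [Ad_add, *]
  exact crossXY (X := U1) (by rw [← eq]; abel) t1 hY ha qd.A ha' qd.A'
    (by simp [Ad_add, *]) (by simp [Ad_add, *])

theorem DG.in1 (H : g.Hyp U) {D K1 K2 K3 : Multiset V} {p q e : V}
    (h : g.DG U a a' b1 b2 D K1 K2 K3 p q) (hA : ¬ g.isA e) (he : g.Ad e D) (heK : e ∈ K1) :
    g.Conn U a a' b1 b2 ∨
      ∃ D' K1', g.DG U a a' b1 b2 D' K1' K2 K3 p q ∧ K1'.card < K1.card := by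
  obtain ⟨U1, U2, t1, t2, e1, e2, rfl, ha⟩ := h.m.t1.splitA heK hA h.ha h.qd.A
  have ha' := h.ha'
  simp only [Multiset.mem_add, Multiset.mem_singleton] at ha'
  rcases ha' with (ha' | ha') | ha'
  · by_cases cp : g.Ad p U2
    · exact Or.inl (h.in1p t1 t2 e2 he ha ha' cp)
    by_cases cq : g.Ad q U2
    · exact Or.inl (h.spq.in1p t1 t2 e2 he ha ha' cq)
    obtain ⟨qd, eq, tD, dD, ⟨s1, s2, s3, c1, c2, c3, p1, p2, p3, q1, q2, q3⟩, -, -⟩ := h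
    have hp : g.Ad p U1 := by rcases Ad_split hA p1 with h | h <;> tauto
    have hq : g.Ad q U1 := by rcases Ad_split hA q1 with h | h <;> tauto
    by_cases cb : g.Ad b1 U2
    · left
      exact crossXY (X := U1 + {p} + K2 + {q} + K3) (Y := D + {e} + U2) (by rw [← eq]; abel)
        (.join _ _ _ (.join _ _ _ t1 s2 hp p2) s3 (by simp [Ad_add, *]) q3)
        (.join _ _ _ tD t2 he e2) (by simp [ha]) qd.A (by simp [ha']) qd.A' (by simp [Ad_add, *])
        (by simp [Ad_add, *])
    · right
      have hb : g.Ad b1 U1 := by rcases Ad_split hA c1 with h | h <;> tauto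
      exact ⟨D + {e} + U2, U1, ⟨qd, by rw [← eq]; abel, .join _ _ _ tD t2 he e2, by simp [Ad_add, *],
        ⟨t1, s2, s3, hb, c2, c3, hp, p2, p3, hq, q2, q3⟩, ha, ha'⟩, by simp; omega⟩
  · subst ha'; exact absurd h.qd.A' hA
  · left
    obtain ⟨qd, eq, tD, dD, ⟨s1, s2, s3, c1, c2, c3, p1, p2, p3, q1, q2, q3⟩, -, -⟩ := h
    have : g.F3p U a a' b1 b2 (U1 + {e} + D) U2 K2 K3 p q :=
      ⟨qd, by rw [← eq]; abel, .join _ _ _ t1 tD e1 he, t2, s2, s3, by simp [ha], ha', c2, c3,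
        by rcases Ad_split hA p1 with h | h <;> simp [Ad_add, h], p2, p3,
        by rcases Ad_split hA q1 with h | h <;> simp [Ad_add, h], q2, q3⟩
    exact this.main H _ le_rfl

theorem DG.main (H : g.Hyp U) (n : ℕ) : ∀ {D K1 K2 K3 : Multiset V} {p q : V},
    g.DG U a a' b1 b2 D K1 K2 K3 p q → (K1 + K2 + K3).card ≤ n → g.Conn U a a' b1 b2 := by
  induction n with
  | zero =>
    intro D K1 K2 K3 p q h hn
    have : 0 < K1.card := Multiset.card_pos_iff_exists_mem.2 ⟨a, h.ha⟩
    simp at hn; simp [hn] at this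
  | succ n ih =>
    intro D K1 K2 K3 p q h hn
    obtain ⟨z, hz, hzA⟩ := h.tD.exists_isA
    obtain ⟨e, he, hea⟩ := H.HA h.eq hz hzA (by simp [h.tD.exc]) (b := p) (by simp) h.m.p1.notA
    have hA := hea.notA
    simp only [Multiset.mem_add, Multiset.mem_singleton] at he
    rcases he with ((((he | he) | he) | he) | he) | he
    · rcases h.in1 H hA hea he with h' | ⟨D', K', h', hc⟩
      · exact h'
      · exact ih h' (by simp at *; omega)
    · rcases h.in2 hA hea he with h' | ⟨D', K', h', hc⟩
      · exact h'
      · exact ih h' (by simp at *; omega)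
    · rcases h.s23.in2 hA hea he with h' | ⟨D', K', h', hc⟩
      · exact h'
      · exact ih h' (by simp at *; omega)
    · subst he; exact h.at_b hea
    · subst he; exact h.at_p hea
    · subst he; exact h.spq.at_p hea

theorem MB.center {K1 K2 K3 : Multiset V} {q : V} (qd : g.Quad a a' b1 b2)
    (h : g.MB K1 K2 K3 b1 b2 q) (eq : K1 + K2 + K3 + {b1} + {b2} + {q} = U)
    (ha : a ∈ K1) (ha' : a' ∈ K1 + K2) : g.Conn U a a' b1 b2 := by
  obtain ⟨s1, s2, s3, c1, c2, c3, p1, p2, p3, q1, q2, q3⟩ := h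
  exact crossXY (X := K1 + {q} + K2) (Y := K3) (by rw [← eq]; abel) (.join _ _ _ s1 s2 q1 q2)
    s3 (by simp [ha]) qd.A (by simp at ha' ⊢; tauto) qd.A' c3 p3

theorem MB.same2d {K1 S S' K3 : Multiset V} {p q : V} (qd : g.Quad a a' b1 b2)
    (h : g.MB K1 (S + {b2} + S') K3 b1 p q) (eq : K1 + (S + {b2} + S') + K3 + {b1} + {p} + {q} = U)
    (ha : a ∈ K1) (ha' : a' ∈ K1) (tS : g.ATree S) (tS' : g.ATree S') (e1 : g.Ad b2 S)
    (hp : g.Ad p S) (hq : g.Ad q S') : g.Conn U a a' b1 b2 := by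
  obtain ⟨s1, s2, s3, c1, c2, c3, p1, p2, p3, q1, q2, q3⟩ := h
  exact crossXY (X := K1) (Y := S + {p} + K3 + {q} + S') (by rw [← eq]; abel) s1
    (.join _ _ _ (.join _ _ _ tS s3 hp p3) tS' (by simp [Ad_add, *]) hq) ha qd.A ha' qd.A'
    (by simp [Ad_add, *]) (by simp [Ad_add, *])

theorem MB.same2g (H : g.Hyp U) {K1 S S' K3 : Multiset V} {p q : V} (qd : g.Quad a a' b1 b2)
    (h : g.MB K1 (S + {b2} + S') K3 b1 p q) (eq : K1 + (S + {b2} + S') + K3 + {b1} + {p} + {q} = U)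
    (ha : a ∈ K1) (ha' : a' ∈ K1) (tS : g.ATree S) (tS' : g.ATree S') (e1 : g.Ad b2 S)
    (hp : g.Ad p S') (hq : g.Ad q S') : g.Conn U a a' b1 b2 := by
  obtain ⟨s1, s2, s3, c1, c2, c3, p1, p2, p3, q1, q2, q3⟩ := h
  by_cases c : g.Ad b1 S
  · exact crossXY (X := K1 + {p} + K3 + {q} + S') (Y := S) (by rw [← eq]; abel)
      (.join _ _ _ (.join _ _ _ s1 s3 p1 p3) tS' (by simp [Ad_add, *]) hq) tS
      (by simp [ha]) qd.A (by simp [ha']) qd.A' c e1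
  · have hb : g.Ad b1 S' := by rcases Ad_split qd.B2 c2 with h | h <;> tauto
    have : g.DG U a a' b1 b2 S K1 S' K3 p q :=
      ⟨qd, by rw [← eq]; abel, tS, e1, ⟨s1, tS', s3, c1, hb, c3, p1, hp, p3, q1, hq, q3⟩, ha, ha'⟩
    exact this.main H _ le_rfl

theorem MB.same2 (H : g.Hyp U) {K1 K2 K3 : Multiset V} {p q : V} (qd : g.Quad a a' b1 b2)
    (h : g.MB K1 K2 K3 b1 p q) (eq : K1 + K2 + K3 + {b1} + {p} + {q} = U)
    (ha : a ∈ K1) (ha' : a' ∈ K1) (hb : b2 ∈ K2) : g.Conn U a a' b1 b2 := by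
  obtain ⟨S, S', t1, t2, e1, e2, rfl⟩ := h.t2.split hb qd.B2
  rcases Ad_split qd.B2 h.p2 with hp | hp <;> rcases Ad_split qd.B2 h.q2 with hq | hq
  · have e : S + {b2} + S' = S' + {b2} + S := by abel
    rw [e] at h eq
    exact h.same2g H qd eq ha ha' t2 t1 e2 hp hq
  · exact h.same2d qd eq ha ha' t1 t2 e1 hp hq
  · exact h.spq.same2d qd (by rw [← eq]; abel) ha ha' t1 t2 e1 hq hp
  · exact h.same2g H qd eq ha ha' t1 t2 e1 hp hq

theorem MB.same1p {S S' K2 K3 : Multiset V} {p q : V} (qd : g.Quad a a' b1 b2)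
    (h : g.MB (S + {b2} + S') K2 K3 b1 p q) (eq : (S + {b2} + S') + K2 + K3 + {b1} + {p} + {q} = U)
    (ha : a ∈ S) (ha' : a' ∈ S) (tS : g.ATree S) (tS' : g.ATree S') (e2 : g.Ad b2 S')
    (hp : g.Ad p S') : g.Conn U a a' b1 b2 := by
  obtain ⟨s1, s2, s3, c1, c2, c3, p1, p2, p3, q1, q2, q3⟩ := h
  exact crossXY (X := S) (Y := S' + {p} + K2 + {q} + K3) (by rw [← eq]; abel) tS
    (.join _ _ _ (.join _ _ _ tS' s2 hp p2) s3 (by simp [Ad_add, *]) q3) ha qd.A ha' qd.A'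
    (by simp [Ad_add, *]) (by simp [Ad_add, *])

theorem MB.same1 (H : g.Hyp U) {K1 K2 K3 : Multiset V} {p q : V} (qd : g.Quad a a' b1 b2)
    (h : g.MB K1 K2 K3 b1 p q) (eq : K1 + K2 + K3 + {b1} + {p} + {q} = U)
    (ha : a ∈ K1) (ha' : a' ∈ K1) (hb : b2 ∈ K1) : g.Conn U a a' b1 b2 := by
  obtain ⟨S, S', t1, t2, e1, e2, rfl, haS⟩ := h.t1.splitA hb qd.B2 ha qd.A
  clear ha
  have ha := haS
  simp only [Multiset.mem_add, Multiset.mem_singleton] at ha'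
  rcases ha' with (ha' | ha') | ha'
  · by_cases cp : g.Ad p S'
    · exact h.same1p qd eq ha ha' t1 t2 e2 cp
    by_cases cq : g.Ad q S'
    · exact h.spq.same1p qd (by rw [← eq]; abel) ha ha' t1 t2 e2 cq
    obtain ⟨s1, s2, s3, c1, c2, c3, p1, p2, p3, q1, q2, q3⟩ := h
    have hp : g.Ad p S := by rcases Ad_split qd.B2 p1 with h | h <;> tauto
    have hq : g.Ad q S := by rcases Ad_split qd.B2 q1 with h | h <;> tauto
    by_cases cb : g.Ad b1 S'
    · exact crossXY (X := S + {p} + K2 + {q} + K3) (Y := S') (by rw [← eq]; abel)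
        (.join _ _ _ (.join _ _ _ t1 s2 hp p2) s3 (by simp [Ad_add, *]) q3) t2
        (by simp [ha]) qd.A (by simp [ha']) qd.A' cb e2
    · have hb : g.Ad b1 S := ⟨a, ha, qd.h11⟩
      have : g.DG U a a' b1 b2 S' S K2 K3 p q :=
        ⟨qd, by rw [← eq]; abel, t2, e2, ⟨t1, s2, s3, hb, c2, c3, hp, p2, p3, hq, q2, q3⟩, ha, ha'⟩
      exact this.main H _ le_rfl
  · subst ha'; exact absurd qd.A' qd.B2
  · obtain ⟨s1, s2, s3, c1, c2, c3, p1, p2, p3, q1, q2, q3⟩ := h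
    have : g.F3p U a a' b1 b2 S S' K2 K3 p q :=
      ⟨qd, by rw [← eq]; abel, t1, t2, s2, s3, ha, ha', c2, c3, Ad_split qd.B2 p1, p2, p3,
        Ad_split qd.B2 q1, q2, q3⟩
    exact this.main H _ le_rfl

/-- Main analysis once a centre is `b1`. -/
theorem MB.cross (H : g.Hyp U) {K1 K2 K3 : Multiset V} {p q : V} (qd : g.Quad a a' b1 b2)
    (hne : b2 ≠ b1) (haU : a ∈ U) (haU' : a' ∈ U) (hbU : b2 ∈ U)
    (h : g.MB K1 K2 K3 b1 p q) (eq : K1 + K2 + K3 + {b1} + {p} + {q} = U) :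
    g.Conn U a a' b1 b2 := by
  have key : ∀ {K1 K2 K3 : Multiset V} {p q : V}, g.MB K1 K2 K3 b1 p q →
      K1 + K2 + K3 + {b1} + {p} + {q} = U → a ∈ K1 → a' ∈ K1 ∨ a' ∈ K2 → g.Conn U a a' b1 b2 := by
    intro K1 K2 K3 p q h eq ha ha'
    rw [← eq] at hbU
    simp only [Multiset.mem_add, Multiset.mem_singleton, hne, or_false] at hbU
    by_cases e1 : b2 = p
    · subst e1; exact h.center qd eq ha (by simpa using ha')
    by_cases e2 : b2 = q
    · subst e2; exact h.spq.center qd (by rw [← eq]; abel) ha (by simpa using ha')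
    simp only [e1, e2, or_false] at hbU
    rcases ha' with ha' | ha'
    · rcases hbU with (hb | hb) | hb
      · exact h.same1 H qd eq ha ha' hb
      · exact h.same2 H qd eq ha ha' hb
      · exact h.s23.same2 H qd (by rw [← eq]; abel) ha ha' hb
    · exact BG.t2 H qd (P1 := K1) (P2 := K2) (P3 := K3) (p := p) (q := q) (by rw [← eq]; abel)
        h.t1 h.t2 h.t3 ha ha' h.b3 (by simpa using hbU) h.p1 h.p2 h.p3 h.q1 h.q2 h.q3
  have key2 : ∀ {K1 K2 K3 : Multiset V} {p q : V}, g.MB K1 K2 K3 b1 p q →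
      K1 + K2 + K3 + {b1} + {p} + {q} = U → a ∈ K1 → g.Conn U a a' b1 b2 := by
    intro K1 K2 K3 p q h eq ha
    have hb : ∀ {v P}, g.Ad v P → a' ≠ v := by
      rintro v P hv rfl; exact hv.notA qd.A'
    rw [← eq] at haU'
    simp only [Multiset.mem_add, Multiset.mem_singleton, hb h.b1, hb h.p1, hb h.q1, or_false] at haU'
    rcases haU' with (ha' | ha') | ha'
    · exact key h eq ha (Or.inl ha')
    · exact key h eq ha (Or.inr ha')
    · exact key h.s23 (by rw [← eq]; abel) ha (Or.inr ha')
  have hb : ∀ {v P}, g.Ad v P → a ≠ v := by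
    rintro v P hv rfl; exact hv.notA qd.A
  rw [← eq] at haU
  simp only [Multiset.mem_add, Multiset.mem_singleton, hb h.b1, hb h.p1, hb h.q1, or_false] at haU
  rcases haU with (ha | ha) | ha
  · exact key2 h eq ha
  · exact key2 h.s12 (by rw [← eq]; abel) ha
  · exact key2 h.s23.s12 (by rw [← eq]; abel) ha

end BG
end comb5

section comb6
variable {V : Type*}
namespace BG
variable (g : BG V)

def Win (U : Multiset V) (b : V) : Prop :=
  ∃ K1 K2 K3 p q, g.MB K1 K2 K3 b p q ∧ K1 + K2 + K3 + {b} + {p} + {q} = U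

structure F2s (U : Multiset V) (b : V) (S S' P Q R : Multiset V) (i u j k : V) : Prop where
  eq : S + {b} + S' + (P + Q + R + {i} + {u} + {j} + {k}) = U
  tS : g.ATree S
  tS' : g.ATree S'
  tP : g.ATree P
  tQ : g.ATree Q
  tR : g.ATree R
  bS : g.Ad b S
  bS' : g.Ad b S'
  iS : g.Ad i S
  uS' : g.Ad u S'
  iQ : g.Ad i Q
  iR : g.Ad i R
  uP : g.Ad u P
  uQ : g.Ad u Q
  jP : g.Ad j P
  jQ : g.Ad j Q
  jR : g.Ad j R
  kP : g.Ad k P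
  kQ : g.Ad k Q
  kR : g.Ad k R

structure F3s (U : Multiset V) (b : V) (S S' Q R : Multiset V) (i l k : V) : Prop where
  eq : S + {b} + S' + (Q + R + {i} + {l} + {k}) = U
  tS : g.ATree S
  tS' : g.ATree S'
  tQ : g.ATree Q
  tR : g.ATree R
  bS : g.Ad b S
  bS' : g.Ad b S'
  iS : g.Ad i S
  lS' : g.Ad l S'
  kS : g.Ad k S ∨ g.Ad k S'
  iQ : g.Ad i Q
  iR : g.Ad i R
  lQ : g.Ad l Q
  lR : g.Ad l R
  kQ : g.Ad k Q
  kR : g.Ad k R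

variable {g} {U : Multiset V} {b : V}

theorem F2s.symm {S S' P Q R : Multiset V} {i u j k : V} (h : g.F2s U b S S' P Q R i u j k) :
    g.F2s U b S' S R Q P u i j k := by
  obtain ⟨eq, tS, tS', tP, tQ, tR, bS, bS', iS, uS', iQ, iR, uP, uQ, jP, jQ, jR, kP, kQ, kR⟩ := h
  exact ⟨by rw [← eq]; abel, tS', tS, tR, tQ, tP, bS', bS, uS', iS, uQ, uP, iR, iQ, jR, jQ, jP, kR, kQ, kP⟩

theorem F2s.center {S S' P Q R : Multiset V} {i u j k : V} (h : g.F2s U b S S' P Q R i u j k)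
    (hy : g.Ad b P ∨ g.Ad b Q ∨ g.Ad b R) : g.Win U b := by
  obtain ⟨eq, tS, tS', tP, tQ, tR, bS, bS', iS, uS', iQ, iR, uP, uQ, jP, jQ, jR, kP, kQ, kR⟩ := h
  rcases hy with hy | hy | hy
  · refine ⟨S + {i} + R, S' + {u} + Q, P, j, k, ⟨.join _ _ _ tS tR iS iR, .join _ _ _ tS' tQ uS' uQ, tP,
      ?_, ?_, hy, ?_, ?_, jP, ?_, ?_, kP⟩, by rw [← eq]; abel⟩ <;> simp [Ad_add, *]
  · refine ⟨S + {i} + R, S' + {u} + P, Q, j, k, ⟨.join _ _ _ tS tR iS iR, .join _ _ _ tS' tP uS' uP, tQ,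
      ?_, ?_, hy, ?_, ?_, jQ, ?_, ?_, kQ⟩, by rw [← eq]; abel⟩ <;> simp [Ad_add, *]
  · refine ⟨S + {i} + Q, S' + {u} + P, R, j, k, ⟨.join _ _ _ tS tQ iS iQ, .join _ _ _ tS' tP uS' uP, tR,
      ?_, ?_, hy, ?_, ?_, jR, ?_, ?_, kR⟩, by rw [← eq]; abel⟩ <;> simp [Ad_add, *]

theorem F2s.side {S S' P Q R : Multiset V} {i u j k u' : V} (h : g.F2s U b S S' P Q R i u j k)
    (hu : u' ∈ S) (hA : ¬ g.isA u') (hy : g.Ad u' P ∨ g.Ad u' Q ∨ g.Ad u' R) :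
    ∃ S1 P1 Q1 R1 i1, g.F2s U b S1 S' P1 Q1 R1 i1 u j k ∧ S1.card < S.card := by
  obtain ⟨eq, tS, tS', tP, tQ, tR, bS, bS', iS, uS', iQ, iR, uP, uQ, jP, jQ, jR, kP, kQ, kR⟩ := h
  obtain ⟨S1, X, t1, tX, u1, uX, rfl, bS1⟩ := tS.splitB hu hA bS
  have hc : S1.card < (S1 + {u'} + X).card := by simp; omega
  by_cases c : g.Ad i S1
  · rcases hy with hy | hy | hy
    · refine ⟨S1, P + {u'} + X, Q, R, i, ⟨by rw [← eq]; abel, t1, tS', .join _ _ _ tP tX hy uX, tQ, tR,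
        bS1, bS', c, uS', iQ, iR, ?_, uQ, ?_, jQ, jR, ?_, kQ, kR⟩, hc⟩ <;> simp [Ad_add, *]
    · refine ⟨S1, P, Q + {u'} + X, R, i, ⟨by rw [← eq]; abel, t1, tS', tP, .join _ _ _ tQ tX hy uX, tR,
        bS1, bS', c, uS', ?_, iR, uP, ?_, jP, ?_, jR, kP, ?_, kR⟩, hc⟩ <;> simp [Ad_add, *]
    · refine ⟨S1, P, Q, R + {u'} + X, i, ⟨by rw [← eq]; abel, t1, tS', tP, tQ, .join _ _ _ tR tX hy uX,
        bS1, bS', c, uS', iQ, ?_, uP, uQ, jP, jQ, ?_, kP, kQ, ?_⟩, hc⟩ <;> simp [Ad_add, *]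
  · have hiX : g.Ad i X := by rcases Ad_split hA iS with h | h <;> tauto
    rcases hy with hy | hy | hy
    · refine ⟨S1, Q, P, X + {i} + R, u', ⟨by rw [← eq]; abel, t1, tS', tQ, tP, .join _ _ _ tX tR hiX iR,
        bS1, bS', u1, uS', hy, ?_, uQ, uP, jQ, jP, ?_, kQ, kP, ?_⟩, hc⟩ <;> simp [Ad_add, *]
    · refine ⟨S1, P, Q, X + {i} + R, u', ⟨by rw [← eq]; abel, t1, tS', tP, tQ, .join _ _ _ tX tR hiX iR,
        bS1, bS', u1, uS', hy, ?_, uP, uQ, jP, jQ, ?_, kP, kQ, ?_⟩, hc⟩ <;> simp [Ad_add, *]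
    · refine ⟨S1, P, Q + {i} + X, R, u', ⟨by rw [← eq]; abel, t1, tS', tP, .join _ _ _ tQ tX iQ hiX, tR,
        bS1, bS', u1, uS', ?_, hy, uP, ?_, jP, ?_, jR, kP, ?_, kR⟩, hc⟩ <;> simp [Ad_add, *]

theorem F2s.main (H : g.Hyp U) (n : ℕ) : ∀ {S S' P Q R : Multiset V} {i u j k : V},
    g.F2s U b S S' P Q R i u j k → (S + S').card ≤ n → g.Win U b := by
  induction n with
  | zero =>
    intro S S' P Q R i u j k h hn
    obtain ⟨a, ha, -⟩ := h.tS.exists_isA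
    have : 0 < S.card := Multiset.card_pos_iff_exists_mem.2 ⟨a, ha⟩
    simp at hn; simp [hn] at this
  | succ n ih =>
    intro S S' P Q R i u j k h hn
    obtain ⟨z, hz, hzA⟩ := h.tQ.exists_isA
    have hX : g.ATree (S + {b} + S') := .join _ _ _ h.tS h.tS' h.bS h.bS'
    obtain ⟨u', hu', y, hy, hr⟩ := H.HB hX (u := b) (by simp) h.bS.notA h.eq (a := z)
      (by simp [hz]) hzA
    have hyA := g.rA hr
    have hA := g.rB hr
    have hy' : g.Ad u' P ∨ g.Ad u' Q ∨ g.Ad u' R := by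
      have hb : ∀ {v P}, g.Ad v P → y ≠ v := by
        rintro v P hv rfl; exact hv.notA hyA
      simp only [Multiset.mem_add, Multiset.mem_singleton, hb h.iQ, hb h.uP, hb h.jP, hb h.kP,
        or_false] at hy
      rcases hy with (hy | hy) | hy
      · exact Or.inl ⟨y, hy, hr⟩
      · exact Or.inr (Or.inl ⟨y, hy, hr⟩)
      · exact Or.inr (Or.inr ⟨y, hy, hr⟩)
    simp only [Multiset.mem_add, Multiset.mem_singleton] at hu'
    rcases hu' with (hu' | hu') | hu'
    · obtain ⟨S1, P1, Q1, R1, u1, h1, hc⟩ := h.side hu' hA hy'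
      exact ih h1 (by simp at *; omega)
    · subst hu'; exact h.center hy'
    · obtain ⟨S1, P1, Q1, R1, u1, h1, hc⟩ := h.symm.side hu' hA (by tauto)
      exact ih h1 (by simp at *; omega)

theorem F3s.symm {S S' Q R : Multiset V} {i l k : V} (h : g.F3s U b S S' Q R i l k) :
    g.F3s U b S' S Q R l i k := by
  obtain ⟨eq, tS, tS', tQ, tR, bS, bS', iS, lS', kS, iQ, iR, lQ, lR, kQ, kR⟩ := h
  exact ⟨by rw [← eq]; abel, tS', tS, tQ, tR, bS', bS, lS', iS, kS.symm, lQ, lR, iQ, iR, kQ, kR⟩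

theorem F3s.sQ {S S' Q R : Multiset V} {i l k : V} (h : g.F3s U b S S' Q R i l k) :
    g.F3s U b S S' R Q i l k := by
  obtain ⟨eq, tS, tS', tQ, tR, bS, bS', iS, lS', kS, iQ, iR, lQ, lR, kQ, kR⟩ := h
  exact ⟨by rw [← eq]; abel, tS, tS', tR, tQ, bS, bS', iS, lS', kS, iR, iQ, lR, lQ, kR, kQ⟩

theorem F3s.center1 {S S' Q R : Multiset V} {i l k : V} (h : g.F3s U b S S' Q R i l k)
    (hy : g.Ad b Q) (hk : g.Ad k S) : g.Win U b := by
  obtain ⟨eq, tS, tS', tQ, tR, bS, bS', iS, lS', kS, iQ, iR, lQ, lR, kQ, kR⟩ := h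
  refine ⟨S' + {l} + R, S, Q, i, k, ⟨.join _ _ _ tS' tR lS' lR, tS, tQ, ?_, bS, hy, ?_, iS, iQ, ?_, hk,
    kQ⟩, by rw [← eq]; abel⟩ <;> simp [Ad_add, *]

theorem F3s.side1 {S1 X S' Q R : Multiset V} {i l k u' : V}
    (h : g.F3s U b (S1 + {u'} + X) S' Q R i l k) (hA : ¬ g.isA u')
    (t1 : g.ATree S1) (tX : g.ATree X) (u1 : g.Ad u' S1) (uX : g.Ad u' X) (bS1 : g.Ad b S1)
    (hy : g.Ad u' Q) (hi : g.Ad i S1) :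
    ∃ Q1 R1 i1 l1 k1, g.F3s U b S1 S' Q1 R1 i1 l1 k1 := by
  obtain ⟨eq, tS, tS', tQ, tR, bS, bS', iS, lS', kS, iQ, iR, lQ, lR, kQ, kR⟩ := h
  by_cases c : g.Ad k S1 ∨ g.Ad k S'
  · refine ⟨Q + {u'} + X, R, i, l, k, ⟨by rw [← eq]; abel, t1, tS', .join _ _ _ tQ tX hy uX, tR, bS1, bS',
      hi, lS', c, ?_, iR, ?_, lR, ?_, kR⟩⟩ <;> simp [Ad_add, *]
  · have hkX : g.Ad k X := by
      rcases kS with h | h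
      · rcases Ad_split hA h with h | h <;> tauto
      · tauto
    refine ⟨Q, X + {k} + R, i, l, u', ⟨by rw [← eq]; abel, t1, tS', tQ, .join _ _ _ tX tR hkX kR, bS1, bS',
      hi, lS', Or.inl u1, iQ, ?_, lQ, ?_, hy, ?_⟩⟩ <;> simp [Ad_add, *]

theorem F3s.side (H : g.Hyp U) {S S' Q R : Multiset V} {i l k u' : V} (h : g.F3s U b S S' Q R i l k)
    (hu : u' ∈ S) (hA : ¬ g.isA u') (hy : g.Ad u' Q) : g.Win U b ∨ 
    ∃ S1 Q1 R1 i1 l1 k1, g.F3s U b S1 S' Q1 R1 i1 l1 k1 ∧ S1.card < S.card := by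
  have h0 := h
  obtain ⟨eq, tS, tS', tQ, tR, bS, bS', iS, lS', kS, iQ, iR, lQ, lR, kQ, kR⟩ := h
  obtain ⟨S1, X, t1, tX, u1, uX, rfl, bS1⟩ := tS.splitB hu hA bS
  have hc : S1.card < (S1 + {u'} + X).card := by simp; omega
  by_cases ci : g.Ad i S1
  · obtain ⟨Q1, R1, i1, l1, k1, h1⟩ := h0.side1 hA t1 tX u1 uX bS1 hy ci
    exact Or.inr ⟨S1, Q1, R1, i1, l1, k1, h1, hc⟩
  have hiX : g.Ad i X := by rcases Ad_split hA iS with h | h <;> tauto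
  by_cases ck : g.Ad k S1
  · have h2 : g.F3s U b (S1 + {u'} + X) S' Q R k l i :=
      ⟨by rw [← eq]; abel, tS, tS', tQ, tR, bS, bS', by simp [Ad_add, ck], lS', Or.inl iS, kQ, kR, lQ, lR,
        iQ, iR⟩
    obtain ⟨Q1, R1, i1, l1, k1, h1⟩ := h2.side1 hA t1 tX u1 uX bS1 hy ck
    exact Or.inr ⟨S1, Q1, R1, i1, l1, k1, h1, hc⟩
  by_cases ck' : g.Ad k S'
  · right
    refine ⟨S1, Q, X + {i} + R, u', l, k, ⟨by rw [← eq]; abel, t1, tS', tQ, .join _ _ _ tX tR hiX iR, bS1,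
      bS', u1, lS', Or.inr ck', hy, ?_, lQ, ?_, kQ, ?_⟩, hc⟩ <;> simp [Ad_add, *]
  · have hkX : g.Ad k X := by
      rcases kS with h | h
      · rcases Ad_split hA h with h | h <;> tauto
      · tauto
    left
    have : g.F2s U b S1 S' R Q X u' l i k :=
      ⟨by rw [← eq]; abel, t1, tS', tR, tQ, tX, bS1, bS', u1, lS', hy, uX, lR, lQ, iR, iQ, hiX, kR, kQ, hkX⟩
    exact this.main H _ le_rfl

theorem F3s.main (H : g.Hyp U) (n : ℕ) : ∀ {S S' Q R : Multiset V} {i l k : V},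
    g.F3s U b S S' Q R i l k → (S + S').card ≤ n → g.Win U b := by
  induction n with
  | zero =>
    intro S S' Q R i l k h hn
    obtain ⟨a, ha, -⟩ := h.tS.exists_isA
    have : 0 < S.card := Multiset.card_pos_iff_exists_mem.2 ⟨a, ha⟩
    simp at hn; simp [hn] at this
  | succ n ih =>
    have key : ∀ {S S' Q R : Multiset V} {i l k u' : V},
        g.F3s U b S S' Q R i l k → (S + S').card ≤ n + 1 → u' ∈ S + {b} + S' → ¬ g.isA u' →
        g.Ad u' Q → g.Win U b := by
      intro S S' Q R i l k u' h hn hu' hA hy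
      simp only [Multiset.mem_add, Multiset.mem_singleton] at hu'
      rcases hu' with (hu' | hu') | hu'
      · rcases h.side H hu' hA hy with h' | ⟨S1, Q1, R1, i1, l1, k1, h1, hc⟩
        · exact h'
        · exact ih h1 (by simp at *; omega)
      · subst hu'
        rcases h.kS with hk | hk
        · exact h.center1 hy hk
        · exact h.symm.center1 hy hk
      · rcases h.symm.side H hu' hA hy with h' | ⟨S1, Q1, R1, i1, l1, k1, h1, hc⟩
        · exact h'
        · exact ih h1 (by simp at *; omega)
    intro S S' Q R i l k h hn
    obtain ⟨z, hz, hzA⟩ := h.tQ.exists_isA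
    have hX : g.ATree (S + {b} + S') := .join _ _ _ h.tS h.tS' h.bS h.bS'
    obtain ⟨u', hu', y, hy, hr⟩ := H.HB hX (u := b) (by simp) h.bS.notA h.eq (a := z)
      (by simp [hz]) hzA
    have hyA := g.rA hr
    have hA := g.rB hr
    have hb : ∀ {v P}, g.Ad v P → y ≠ v := by
      rintro v P hv rfl; exact hv.notA hyA
    simp only [Multiset.mem_add, Multiset.mem_singleton, hb h.iQ, hb h.lQ, hb h.kQ,
        or_false] at hy
    rcases hy with hy | hy
    · exact key h hn hu' hA ⟨y, hy, hr⟩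
    · exact key h.sQ hn hu' hA ⟨y, hy, hr⟩

/-- convenient form -/
theorem F3s.of (H : g.Hyp U) {S S' Q R : Multiset V} {t1 t2 t3 : V} 
    (eq : S + {b} + S' + (Q + R + {t1} + {t2} + {t3}) = U)
    (tS : g.ATree S) (tS' : g.ATree S') (bS : g.Ad b S) (bS' : g.Ad b S')
    (tQ : g.ATree Q) (tR : g.ATree R)
    (q1 : g.Ad t1 Q) (q2 : g.Ad t2 Q) (q3 : g.Ad t3 Q) (r1 : g.Ad t1 R) (r2 : g.Ad t2 R) (r3 : g.Ad t3 R)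
    (c1 : g.Ad t1 S ∨ g.Ad t1 S') (c2 : g.Ad t2 S ∨ g.Ad t2 S') (c3 : g.Ad t3 S ∨ g.Ad t3 S')
    (h : g.Ad t1 S ∨ g.Ad t2 S ∨ g.Ad t3 S) (h' : g.Ad t1 S' ∨ g.Ad t2 S' ∨ g.Ad t3 S') :
    g.Win U b := by
  have k : ∀ {i l k : V}, S + {b} + S' + (Q + R + {i} + {l} + {k}) = U → g.Ad i S → g.Ad l S' →
      (g.Ad k S ∨ g.Ad k S') → g.Ad i Q → g.Ad i R → g.Ad l Q → g.Ad l R → g.Ad k Q → g.Ad k R →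
      g.Win U b := by
    intro i l k e h1 h2 h3 h4 h5 h6 h7 h8 h9
    have hf : g.F3s U b S S' Q R i l k :=
      ⟨e, tS, tS', tQ, tR, bS, bS', h1, h2, h3, h4, h5, h6, h7, h8, h9⟩
    exact hf.main H _ le_rfl
  by_cases d12 : g.Ad t1 S ∧ g.Ad t2 S'
  · exact k (by rw [← eq]) d12.1 d12.2 c3 q1 r1 q2 r2 q3 r3
  by_cases d21 : g.Ad t2 S ∧ g.Ad t1 S'
  · exact k (by rw [← eq]; abel) d21.1 d21.2 c3 q2 r2 q1 r1 q3 r3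
  by_cases d13 : g.Ad t1 S ∧ g.Ad t3 S'
  · exact k (by rw [← eq]; abel) d13.1 d13.2 c2 q1 r1 q3 r3 q2 r2
  by_cases d31 : g.Ad t3 S ∧ g.Ad t1 S'
  · exact k (by rw [← eq]; abel) d31.1 d31.2 c2 q3 r3 q1 r1 q2 r2
  by_cases d23 : g.Ad t2 S ∧ g.Ad t3 S'
  · exact k (by rw [← eq]; abel) d23.1 d23.2 c1 q2 r2 q3 r3 q1 r1
  by_cases d32 : g.Ad t3 S ∧ g.Ad t2 S'
  · exact k (by rw [← eq]; abel) d32.1 d32.2 c1 q3 r3 q2 r2 q1 r1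
  exfalso
  clear k eq tS tS' bS bS' tQ tR q1 q2 q3 r1 r2 r3 H
  generalize g.Ad t1 S = A1 at *
  generalize g.Ad t2 S = A2 at *
  generalize g.Ad t3 S = A3 at *
  generalize g.Ad t1 S' = B1 at *
  generalize g.Ad t2 S' = B2 at *
  generalize g.Ad t3 S' = B3 at *
  grind

end BG
end comb6

section comb7
variable {V : Type*}
namespace BG
variable (g : BG V)

def cn : Option V → Multiset V
  | none => 0
  | some c => {c}

def Hook (b : V) (f : Option V) (H : Multiset V) : Prop :=
  (f = none ∧ H = 0) ∨ ∃ c G2, f = some c ∧ H = G2 + {c} ∧ g.ATree G2 ∧ g.Ad b G2 ∧ g.Ad c G2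

def Link (b : V) (f : Option V) (R : Multiset V) (x : V) : Prop :=
  ∃ G1 H, R + cn f = G1 + {b} + H ∧ g.ATree G1 ∧ x ∈ G1 ∧ g.Ad b G1 ∧ g.Hook b f H

structure St (U : Multiset V) (b t1 t2 t3 : V) (R : Multiset V) (f : Option V) (P Q W : Multiset V) :
    Prop where
  eq : R + cn f + (P + Q + W + {t1} + {t2} + {t3}) = U
  m : g.MB P Q W t1 t2 t3
  ft : g.Ad (f.getD b) P
  ne : ∃ x ∈ R, g.isA x
  lk : ∀ x ∈ R, g.isA x → g.Link b f R x

variable {g} {U : Multiset V} {b t1 t2 t3 : V}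

theorem Hook.join {f : Option V} {H P : Multiset V} (h : g.Hook b f H) (tP : g.ATree P)
    (hf : g.Ad (f.getD b) P) : g.ATree (P + H) ∧ g.Ad b (P + H) := by
  rcases h with ⟨rfl, rfl⟩ | ⟨c, G2, rfl, rfl, t2, h1, h2⟩
  · simpa using ⟨tP, hf⟩
  · have : P + (G2 + {c}) = P + {c} + G2 := by abel
    rw [this]
    exact ⟨.join _ _ _ tP t2 hf h2, by simp [Ad_add, h1]⟩

theorem Hook.notA {f : Option V} {H : Multiset V} (h : g.Hook b f H) {x : V} (hx : x ∈ cn f) :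
    ¬ g.isA x := by
  rcases h with ⟨rfl, rfl⟩ | ⟨c, G2, rfl, rfl, t2, h1, h2⟩
  · simp [cn] at hx
  · simp [cn] at hx; subst hx; exact h2.notA

theorem Link.exc {f : Option V} {R : Multiset V} {x : V} (h : g.Link b f R x) :
    g.exc R = ((cn f).card : ℤ) := by
  obtain ⟨G1, H, eq, t, -, hb, hk⟩ := h
  have h0 := congrArg g.exc eq
  have hb' := exc_B hb.notA
  rcases hk with ⟨rfl, rfl⟩ | ⟨c, G2, rfl, rfl, t2, h1, h2⟩
  · simp [cn, t.exc, hb'] at h0 ⊢; exact h0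
  · have hc := exc_B h2.notA
    simp [cn, t.exc, t2.exc, hb', hc] at h0 ⊢; linarith

theorem Link.absorb {f : Option V} {R D : Multiset V} {e x0 : V}
    (lk : ∀ x ∈ R, g.isA x → g.Link b f R x) (hx0 : x0 ∈ R) (hr : g.r x0 e) (tD : g.ATree D)
    (eD : g.Ad e D) : ∀ x ∈ R + {e} + D, g.isA x → g.Link b f (R + {e} + D) x := by
  have base : ∀ x ∈ R + D, ∀ {G1 H}, R + cn f = G1 + {b} + H → g.ATree G1 → x ∈ G1 + D → g.Ad b G1 →
      g.Hook b f H → x0 ∈ G1 → g.Link b f (R + {e} + D) x := by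
    intro x _ G1 H eq tG hx hb hk h0
    refine ⟨G1 + {e} + D, H, ?_, .join _ _ _ tG tD ⟨x0, h0, hr⟩ eD, ?_, by simp [Ad_add, hb], hk⟩
    · have : R + {e} + D + cn f = (R + cn f) + {e} + D := by abel
      rw [this, eq]; abel
    · simp at hx ⊢; tauto
  intro x hx hA
  simp only [Multiset.mem_add, Multiset.mem_singleton] at hx
  rcases hx with (hx | rfl) | hx
  · obtain ⟨G1, H, eq, tG, hxG, hb, hk⟩ := lk x hx hA
    have hm : x0 ∈ G1 + {b} + H := by rw [← eq]; simp [hx0]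
    simp only [Multiset.mem_add, Multiset.mem_singleton] at hm
    rcases hm with (hm | rfl) | hm
    · exact base x (by simp [hx]) eq tG (by simp [hxG]) hb hk hm
    · exact absurd (g.rA hr) hb.notA
    · rcases hk with ⟨rfl, rfl⟩ | ⟨c, G2, rfl, rfl, t2, h1, h2⟩
      · simp at hm
      · simp only [Multiset.mem_add, Multiset.mem_singleton] at hm
        rcases hm with hm | rfl
        · refine ⟨G1, G2 + {e} + D + {c}, ?_, tG, hxG, hb, Or.inr ⟨c, _, rfl, rfl,
            .join _ _ _ t2 tD ⟨x0, hm, hr⟩ eD, by simp [Ad_add, h1], by simp [Ad_add, h2]⟩⟩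
          have : R + {e} + D + cn (some c) = (R + cn (some c)) + {e} + D := by abel
          rw [this, eq]; abel
        · exact absurd (g.rA hr) h2.notA
  · exact absurd hA (g.rB hr)
  · obtain ⟨G1, H, eq, tG, hxG, hb, hk⟩ := lk x0 hx0 (g.rA hr)
    exact base x (by simp [hx]) eq tG (by simp [hx]) hb hk hxG

theorem St.at_t {R P Q W G1 H : Multiset V} {f : Option V} (h : g.St U b t1 t2 t3 R f P Q W)
    (Hy : g.Hyp U) (eq' : R + cn f = G1 + {b} + H) (tG : g.ATree G1) (hb : g.Ad b G1)
    (hk : g.Hook b f H) (ht : g.Ad t1 G1 ∨ g.Ad t2 G1 ∨ g.Ad t3 G1) : g.Win U b := by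
  obtain ⟨eq, ⟨m1, m2, m3, b1, b2, b3, p1, p2, p3, q1, q2, q3⟩, ft, ne, lk⟩ := h
  obtain ⟨tPH, bPH⟩ := hk.join m1 ft
  refine F3s.of Hy (S := P + H) (S' := G1) (Q := Q) (R := W) (t1 := t1) (t2 := t2) (t3 := t3) ?_
    tPH tG bPH hb m2 m3 b2 p2 q2 b3 p3 q3 ?_ ?_ ?_ ?_ ht
  · rw [← eq, eq']; abel
  · simp [Ad_add, b1]
  · simp [Ad_add, p1]
  · simp [Ad_add, q1]
  · simp [Ad_add, b1]

/-- exit at a B-vertex inside `P`, both sides hit -/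
theorem St.at_P {R Q W G1 H U1 U2 : Multiset V} {e : V} {f : Option V}
    (h : g.St U b t1 t2 t3 R f (U1 + {e} + U2) Q W)
    (Hy : g.Hyp U) (eq' : R + cn f = G1 + {b} + H) (tG : g.ATree G1) (hb : g.Ad b G1)
    (hk : g.Hook b f H) (he : g.Ad e G1) (tU1 : g.ATree U1) (tU2 : g.ATree U2)
    (e2 : g.Ad e U2) (hf : g.Ad (f.getD b) U1)
    (n1 : g.Ad t1 U1 ∨ g.Ad t2 U1 ∨ g.Ad t3 U1) (n2 : g.Ad t1 U2 ∨ g.Ad t2 U2 ∨ g.Ad t3 U2) :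
    g.Win U b := by
  obtain ⟨eq, ⟨m1, m2, m3, b1, b2, b3, p1, p2, p3, q1, q2, q3⟩, ft, ne, lk⟩ := h
  obtain ⟨tPH, bPH⟩ := hk.join tU1 hf
  have tX : g.ATree (G1 + {e} + U2) := .join _ _ _ tG tU2 he e2
  have c1 := Ad_split he.notA b1
  have c2 := Ad_split he.notA p1
  have c3 := Ad_split he.notA q1
  refine F3s.of Hy (S := U1 + H) (S' := G1 + {e} + U2) (Q := Q) (R := W) (t1 := t1) (t2 := t2)
    (t3 := t3) ?_ tPH tX bPH ?_ m2 m3 b2 p2 q2 b3 p3 q3 ?_ ?_ ?_ ?_ ?_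
  · rw [← eq, eq']; abel
  · simp [Ad_add, hb]
  · rcases c1 with c | c <;> simp [Ad_add, c]
  · rcases c2 with c | c <;> simp [Ad_add, c]
  · rcases c3 with c | c <;> simp [Ad_add, c]
  · rcases n1 with c | c | c <;> simp [Ad_add, c]
  · rcases n2 with c | c | c <;> simp [Ad_add, c]

/-- exit at a B-vertex inside `Q`, both sides hit -/
theorem at_Q {P R W G1 H U1 U2 : Multiset V} {e i j k : V} {f : Option V}
    (Hy : g.Hyp U) (eq : R + cn f + (P + (U1 + {e} + U2) + W + {i} + {j} + {k}) = U)
    (tP : g.ATree P) (tW : g.ATree W) (ft : g.Ad (f.getD b) P)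
    (jP : g.Ad j P) (kP : g.Ad k P) (iW : g.Ad i W) (jW : g.Ad j W) (kW : g.Ad k W)
    (eq' : R + cn f = G1 + {b} + H) (tG : g.ATree G1) (hb : g.Ad b G1)
    (hk : g.Hook b f H) (he : g.Ad e G1) (tU1 : g.ATree U1) (tU2 : g.ATree U2)
    (e1 : g.Ad e U1) (e2 : g.Ad e U2) (i2 : g.Ad i U2) (j1 : g.Ad j U1) (k1 : g.Ad k U1) :
    g.Win U b := by
  obtain ⟨tPH, bPH⟩ := hk.join tP ft
  have tX : g.ATree (U2 + {i} + W) := .join _ _ _ tU2 tW i2 iW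
  refine F3s.of Hy (S := P + H) (S' := G1) (Q := U1) (R := U2 + {i} + W) (t1 := j) (t2 := k)
    (t3 := e) ?_ tPH tG bPH hb tU1 tX j1 k1 e1 ?_ ?_ ?_ ?_ ?_ (Or.inr he) ?_ (Or.inr (Or.inr he))
  · rw [← eq, eq']; abel
  · simp [Ad_add, jW]
  · simp [Ad_add, kW]
  · simp [Ad_add, e2]
  · simp [Ad_add, jP]
  · simp [Ad_add, kP]
  · simp [Ad_add, jP]

theorem St.at_Q {R P W G1 H U1 U2 : Multiset V} {e : V} {f : Option V}
    (h : g.St U b t1 t2 t3 R f P (U1 + {e} + U2) W)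
    (Hy : g.Hyp U) (eq' : R + cn f = G1 + {b} + H) (tG : g.ATree G1) (hb : g.Ad b G1)
    (hk : g.Hook b f H) (he : g.Ad e G1) (tU1 : g.ATree U1) (tU2 : g.ATree U2)
    (e1 : g.Ad e U1) (e2 : g.Ad e U2)
    (n1 : g.Ad t1 U1 ∨ g.Ad t2 U1 ∨ g.Ad t3 U1) (n2 : g.Ad t1 U2 ∨ g.Ad t2 U2 ∨ g.Ad t3 U2) :
    g.Win U b := by
  obtain ⟨eq, ⟨m1, m2, m3, b1, b2, b3, p1, p2, p3, q1, q2, q3⟩, ft, ne, lk⟩ := h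
  have c1 := Ad_split he.notA b2
  have c2 := Ad_split he.notA p2
  have c3 := Ad_split he.notA q2
  have key : ∀ {U1 U2 : Multiset V}, R + cn f + (P + (U1 + {e} + U2) + W + {t1} + {t2} + {t3}) = U →
      g.ATree U1 → g.ATree U2 → g.Ad e U1 → g.Ad e U2 → 
      ((g.Ad t1 U2 ∧ g.Ad t2 U1 ∧ g.Ad t3 U1) ∨ (g.Ad t2 U2 ∧ g.Ad t1 U1 ∧ g.Ad t3 U1) ∨
        (g.Ad t3 U2 ∧ g.Ad t1 U1 ∧ g.Ad t2 U1)) → g.Win U b := by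
    intro U1 U2 eq tU1 tU2 e1 e2 hh
    rcases hh with ⟨i, j, k⟩ | ⟨i, j, k⟩ | ⟨i, j, k⟩
    · exact BG.at_Q Hy (by rw [← eq]) m1 m3 ft p1 q1 b3 p3 q3 eq' tG hb hk he tU1 tU2 e1 e2 i j k
    · exact BG.at_Q Hy (i := t2) (j := t1) (k := t3) (by rw [← eq]; abel) m1 m3 ft b1 q1 p3 b3 q3 eq'
        tG hb hk he tU1 tU2 e1 e2 i j k
    · exact BG.at_Q Hy (i := t3) (j := t1) (k := t2) (by rw [← eq]; abel) m1 m3 ft b1 p1 q3 b3 p3 eq'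
        tG hb hk he tU1 tU2 e1 e2 i j k
  have hor : ((g.Ad t1 U2 ∧ g.Ad t2 U1 ∧ g.Ad t3 U1) ∨ (g.Ad t2 U2 ∧ g.Ad t1 U1 ∧ g.Ad t3 U1) ∨
        (g.Ad t3 U2 ∧ g.Ad t1 U1 ∧ g.Ad t2 U1)) ∨
      ((g.Ad t1 U1 ∧ g.Ad t2 U2 ∧ g.Ad t3 U2) ∨ (g.Ad t2 U1 ∧ g.Ad t1 U2 ∧ g.Ad t3 U2) ∨
        (g.Ad t3 U1 ∧ g.Ad t1 U2 ∧ g.Ad t2 U2)) := by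
    clear key
    generalize g.Ad t1 U1 = A1 at *
    generalize g.Ad t2 U1 = A2 at *
    generalize g.Ad t3 U1 = A3 at *
    generalize g.Ad t1 U2 = B1 at *
    generalize g.Ad t2 U2 = B2 at *
    generalize g.Ad t3 U2 = B3 at *
    clear eq' eq
    grind
  rcases hor with hor | hor
  · exact key eq tU1 tU2 e1 e2 hor
  · exact key (by rw [← eq]; abel) tU2 tU1 e2 e1 hor

theorem St.s23 {R P Q W : Multiset V} {f : Option V} (h : g.St U b t1 t2 t3 R f P Q W) :
    g.St U b t1 t2 t3 R f P W Q :=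
  ⟨by rw [← h.eq]; abel, h.m.s23, h.ft, h.ne, h.lk⟩

/-- step at an exit in `Q` -/
theorem St.step_Q {R P Q W : Multiset V} {f : Option V} {e x0 : V}
    (h : g.St U b t1 t2 t3 R f P Q W) (Hy : g.Hyp U) (hx0 : x0 ∈ R) (hr : g.r x0 e) (he : e ∈ Q) :
    g.Win U b ∨ ∃ R' Q', g.St U b t1 t2 t3 R' f P Q' W ∧ Q'.card < Q.card := by
  obtain ⟨U1, U2, tU1, tU2, e1, e2, rfl⟩ := h.m.t2.split he (g.rB hr)
  obtain ⟨G1, H, eq', tG, hxG, hb, hk⟩ := h.lk x0 hx0 (g.rA hr)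
  have abs : ∀ {U1 U2 : Multiset V}, g.St U b t1 t2 t3 R f P (U1 + {e} + U2) W → 
      g.ATree U1 → g.ATree U2 → g.Ad e U1 → g.Ad e U2 →
      ¬ (g.Ad t1 U2 ∨ g.Ad t2 U2 ∨ g.Ad t3 U2) → g.St U b t1 t2 t3 (R + {e} + U2) f P U1 W := by
    intro U1 U2 h tU1 tU2 e1 e2 hn
    have lk' := Link.absorb h.lk hx0 hr tU2 e2
    obtain ⟨eq, ⟨m1, m2, m3, b1, b2, b3, p1, p2, p3, q1, q2, q3⟩, ft, ⟨x, hx, hxA⟩, lk⟩ := h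
    have c1 := Ad_split e1.notA b2
    have c2 := Ad_split e1.notA p2
    have c3 := Ad_split e1.notA q2
    exact ⟨by rw [← eq]; abel, ⟨m1, tU1, m3, b1, by tauto, b3, p1, by tauto, p3, q1, by tauto, q3⟩, ft,
      ⟨x, by simp [hx], hxA⟩, lk'⟩
  by_cases n2 : g.Ad t1 U2 ∨ g.Ad t2 U2 ∨ g.Ad t3 U2
  · by_cases n1 : g.Ad t1 U1 ∨ g.Ad t2 U1 ∨ g.Ad t3 U1
    · exact Or.inl (h.at_Q Hy eq' tG hb hk ⟨x0, hxG, hr⟩ tU1 tU2 e1 e2 n1 n2)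
    · have h' : g.St U b t1 t2 t3 R f P (U2 + {e} + U1) W := by
        convert h using 1; abel
      exact Or.inr ⟨_, U2, abs h' tU2 tU1 e2 e1 n1, by simp⟩
  · exact Or.inr ⟨_, U1, abs h tU1 tU2 e1 e2 n2, by simp; omega⟩

theorem St.step_P {R P Q W : Multiset V} {f : Option V} {e x0 : V}
    (h : g.St U b t1 t2 t3 R f P Q W) (Hy : g.Hyp U) (hx0 : x0 ∈ R) (hr : g.r x0 e) (he : e ∈ P) :
    g.Win U b ∨ ∃ R' f' P', g.St U b t1 t2 t3 R' f' P' Q W ∧ P'.card < P.card := by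
  obtain ⟨U1, U2, tU1, tU2, e1, e2, rfl, hf⟩ := h.m.t1.splitB he (g.rB hr) h.ft
  obtain ⟨G1, H, eq', tG, hxG, hb, hk⟩ := h.lk x0 hx0 (g.rA hr)
  by_cases n2 : g.Ad t1 U2 ∨ g.Ad t2 U2 ∨ g.Ad t3 U2
  · by_cases n1 : g.Ad t1 U1 ∨ g.Ad t2 U1 ∨ g.Ad t3 U1
    · exact Or.inl (h.at_P Hy eq' tG hb hk ⟨x0, hxG, hr⟩ tU1 tU2 e2 hf n1 n2)
    · right
      refine ⟨R + cn f + U1, some e, U2, ?_, by simp⟩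
      have lk' : ∀ x ∈ R + cn f + U1, g.isA x → g.Link b (some e) (R + cn f + U1) x := by
        intro x hx hA
        simp only [Multiset.mem_add] at hx
        rcases hx with (hx | hx) | hx
        · obtain ⟨G1, H, eq', tG, hxG, hb, hk⟩ := h.lk x hx hA
          obtain ⟨tH, bH⟩ := hk.join tU1 hf
          refine ⟨G1, U1 + H + {e}, ?_, tG, hxG, hb, Or.inr ⟨e, _, rfl, rfl, tH, bH, ?_⟩⟩
          · rw [eq', cn]; abel
          · simp [Ad_add, e1]
        · exact absurd hA (hk.notA hx)
        · obtain ⟨tH, bH⟩ := hk.join tU1 hf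
          refine ⟨U1 + H, G1 + {e}, ?_, tH, by simp [hx], bH, Or.inr ⟨e, _, rfl, rfl, tG, hb,
            ⟨x0, hxG, hr⟩⟩⟩
          rw [eq', cn]; abel
      obtain ⟨eq, ⟨m1, m2, m3, b1, b2, b3, p1, p2, p3, q1, q2, q3⟩, ft, ⟨x, hx, hxA⟩, lk⟩ := h
      have c1 := Ad_split e1.notA b1
      have c2 := Ad_split e1.notA p1
      have c3 := Ad_split e1.notA q1
      exact ⟨by rw [← eq, cn]; abel, ⟨tU2, m2, m3, by tauto, b2, b3, by tauto, p2, p3, by tauto, q2, q3⟩,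
        e2, ⟨x, by simp [hx], hxA⟩, lk'⟩
  · right
    refine ⟨R + {e} + U2, f, U1, ?_, by simp; omega⟩
    have lk' := Link.absorb h.lk hx0 hr tU2 e2
    obtain ⟨eq, ⟨m1, m2, m3, b1, b2, b3, p1, p2, p3, q1, q2, q3⟩, ft, ⟨x, hx, hxA⟩, lk⟩ := h
    have c1 := Ad_split e1.notA b1
    have c2 := Ad_split e1.notA p1
    have c3 := Ad_split e1.notA q1
    exact ⟨by rw [← eq]; abel, ⟨tU1, m2, m3, by tauto, b2, b3, by tauto, p2, p3, by tauto, q2, q3⟩, hf,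
      ⟨x, by simp [hx], hxA⟩, lk'⟩

theorem St.main (Hy : g.Hyp U) (n : ℕ) : ∀ {R P Q W : Multiset V} {f : Option V},
    g.St U b t1 t2 t3 R f P Q W → (P + Q + W).card ≤ n → g.Win U b := by
  induction n with
  | zero =>
    intro R P Q W f h hn
    obtain ⟨a, ha, -⟩ := h.m.t1.exists_isA
    have : 0 < P.card := Multiset.card_pos_iff_exists_mem.2 ⟨a, ha⟩
    simp at hn; simp [hn] at this
  | succ n ih =>
    intro R P Q W f h hn
    obtain ⟨x, hx, hxA⟩ := h.ne
    have hexc := (h.lk x hx hxA).exc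
    obtain ⟨e, he, x0, hx0, hr⟩ := Hy.HA h.eq hx hxA (by omega) (b := t1) (by simp) h.m.b1.notA
    obtain ⟨G1, H, eq', tG, hxG, hb, hk⟩ := h.lk x0 hx0 (g.rA hr)
    have heG : g.Ad e G1 := ⟨x0, hxG, hr⟩
    simp only [Multiset.mem_add, Multiset.mem_singleton] at he
    rcases he with ((((he | he) | he) | rfl) | rfl) | rfl
    · rcases h.step_P Hy hx0 hr he with h' | ⟨R', f', P', h', hc⟩
      · exact h'
      · exact ih h' (by simp at *; omega)
    · rcases h.step_Q Hy hx0 hr he with h' | ⟨R', P', h', hc⟩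
      · exact h'
      · exact ih h' (by simp at *; omega)
    · rcases h.s23.step_Q Hy hx0 hr he with h' | ⟨R', P', h', hc⟩
      · exact h'
      · exact ih h' (by simp at *; omega)
    · exact h.at_t Hy eq' tG hb hk (by tauto)
    · exact h.at_t Hy eq' tG hb hk (by tauto)
    · exact h.at_t Hy eq' tG hb hk (by tauto)

theorem MB.win1 (Hy : g.Hyp U) {P Q W : Multiset V} (h : g.MB P Q W t1 t2 t3)
    (eq : P + Q + W + {t1} + {t2} + {t3} = U) (hb : b ∈ P) (hA : ¬ g.isA b) : g.Win U b := by
  obtain ⟨S, S', tS, tS', bS, bS', rfl⟩ := h.t1.split hb hA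
  have key : ∀ {S S' : Multiset V}, S + {b} + S' + Q + W + {t1} + {t2} + {t3} = U → g.ATree S →
      g.ATree S' → g.Ad b S → g.Ad b S' → g.MB S Q W t1 t2 t3 → g.Win U b := by
    intro S S' eq tS tS' bS bS' h
    obtain ⟨x, hx, hxA⟩ := tS'.exists_isA
    have : g.St U b t1 t2 t3 (S' + {b}) none S Q W := by
      refine ⟨by rw [← eq, cn]; abel, h, bS, ⟨x, by simp [hx], hxA⟩, ?_⟩
      intro y hy hyA
      simp only [Multiset.mem_add, Multiset.mem_singleton] at hy
      rcases hy with hy | rfl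
      · exact ⟨S', 0, by simp [cn], tS', hy, bS', Or.inl ⟨rfl, rfl⟩⟩
      · exact absurd hyA hA
    exact this.main Hy _ le_rfl
  obtain ⟨m1, m2, m3, b1, b2, b3, p1, p2, p3, q1, q2, q3⟩ := h
  have c1 := Ad_split hA b1
  have c2 := Ad_split hA p1
  have c3 := Ad_split hA q1
  by_cases n2 : g.Ad t1 S' ∨ g.Ad t2 S' ∨ g.Ad t3 S'
  · by_cases n1 : g.Ad t1 S ∨ g.Ad t2 S ∨ g.Ad t3 S
    · exact F3s.of Hy (by rw [← eq]; abel) tS tS' bS bS' m2 m3 b2 p2 q2 b3 p3 q3 c1 c2 c3 n1 n2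
    · exact key (by rw [← eq]; abel) tS' tS bS' bS
        ⟨tS', m2, m3, by tauto, b2, b3, by tauto, p2, p3, by tauto, q2, q3⟩
  · exact key (by rw [← eq]) tS tS' bS bS'
      ⟨tS, m2, m3, by tauto, b2, b3, by tauto, p2, p3, by tauto, q2, q3⟩

theorem MB.win (Hy : g.Hyp U) {P Q W : Multiset V} (h : g.MB P Q W t1 t2 t3)
    (eq : P + Q + W + {t1} + {t2} + {t3} = U) (hb : b ∈ U) (hA : ¬ g.isA b) : g.Win U b := by
  rw [← eq] at hb
  simp only [Multiset.mem_add, Multiset.mem_singleton] at hb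
  rcases hb with ((((hb | hb) | hb) | rfl) | rfl) | rfl
  · exact h.win1 Hy eq hb hA
  · exact h.s12.win1 Hy (by rw [← eq]; abel) hb hA
  · exact h.s23.s12.win1 Hy (by rw [← eq]; abel) hb hA
  · exact ⟨_, _, _, _, _, h, eq⟩
  · exact ⟨_, _, _, _, _, h.sbp, by rw [← eq]; abel⟩
  · exact ⟨_, _, _, _, _, h.spq.sbp, by rw [← eq]; abel⟩

theorem Mt.split {Z : Multiset V} (h : g.Mt Z) {e : V} (he : e ∈ Z) (hA : ¬ g.isA e) :
    ∃ Z' z, g.Mt Z' ∧ g.r z e ∧ Z = Z' + {z} + {e} := by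
  induction h with
  | zero => simp at he
  | pair Z x y h hr ih =>
    simp only [Multiset.mem_add, Multiset.mem_singleton] at he
    rcases he with (he | rfl) | rfl
    · obtain ⟨Z', z, h', hr', rfl⟩ := ih he
      exact ⟨Z' + {x} + {y}, z, .pair _ _ _ h' hr, hr', by abel⟩
    · exact absurd (g.rA hr) hA
    · exact ⟨Z, x, h, hr, rfl⟩

/-- Absorbing a leftover matching. -/
theorem MB.absorb (Hy : g.Hyp U) (n : ℕ) : ∀ {P Q W Z : Multiset V}, g.MB P Q W t1 t2 t3 → g.Mt Z →
    P + Q + W + {t1} + {t2} + {t3} + Z = U → Z.card ≤ n → 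
    ∃ P' Q' W', g.MB P' Q' W' t1 t2 t3 ∧ P' + Q' + W' + {t1} + {t2} + {t3} = U := by
  induction n with
  | zero =>
    intro P Q W Z h hZ eq hn
    have : Z = 0 := by simpa using hn
    subst this
    exact ⟨P, Q, W, h, by simpa using eq⟩
  | succ n ih =>
    intro P Q W Z h hZ eq hn
    have step : ∀ {P Q W Z : Multiset V} {e x0 : V}, g.MB P Q W t1 t2 t3 → g.Mt Z →
        P + Q + W + {t1} + {t2} + {t3} + Z = U → Z.card ≤ n + 1 → e ∈ Z → x0 ∈ P → g.r x0 e →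
        ∃ P' Q' W', g.MB P' Q' W' t1 t2 t3 ∧ P' + Q' + W' + {t1} + {t2} + {t3} = U := by
      intro P Q W Z e x0 h hZ eq hn he hx hr
      obtain ⟨Z', z, hZ', hz, rfl⟩ := hZ.split he (g.rB hr)
      have tP : g.ATree (P + {e} + {z}) :=
        .join _ _ _ h.t1 (.single z (g.rA hz)) ⟨x0, hx, hr⟩ ⟨z, by simp, hz⟩
      obtain ⟨m1, m2, m3, b1, b2, b3, p1, p2, p3, q1, q2, q3⟩ := h
      have hm : g.MB (P + {e} + {z}) Q W t1 t2 t3 :=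
        ⟨tP, m2, m3, by simp [Ad_add, b1], b2, b3, by simp [Ad_add, p1], p2, p3, by simp [Ad_add, q1],
          q2, q3⟩
      exact ih hm hZ' (by rw [← eq]; abel) (by simp at hn; omega)
    cases hZ with
    | zero => exact ⟨P, Q, W, h, by simpa using eq⟩
    | pair Z' x y hZ' hr =>
      obtain ⟨a, ha, haA⟩ := h.t1.exists_isA
      obtain ⟨e, he, x0, hx0, hr0⟩ := Hy.HA (R := P + Q + W + {t1} + {t2} + {t3}) (C := 0)
        (rest := Z' + {x} + {y}) (by simpa using eq) (a := a) (by simp [ha]) haA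
        (by simp [h.t1.exc, h.t2.exc, h.t3.exc, exc_B h.b1.notA, exc_B h.p1.notA, exc_B h.q1.notA])
        (b := y) (by simp) (g.rB hr)
      simp only [Multiset.mem_add, Multiset.mem_singleton] at hx0
      have hZZ := hZ'.pair _ _ _ hr
      rcases hx0 with ((((hx | hx) | hx) | rfl) | rfl) | rfl
      · exact step h hZZ eq hn he hx hr0
      · exact step h.s12 hZZ (by rw [← eq]; abel) hn he hx hr0
      · exact step h.s23.s12 hZZ (by rw [← eq]; abel) hn he hx hr0
      · exact absurd (g.rA hr0) h.b1.notA
      · exact absurd (g.rA hr0) h.p1.notA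
      · exact absurd (g.rA hr0) h.q1.notA

/-- The full combinatorial core. -/
theorem MB.core (Hy : g.Hyp U) {P Q W Z : Multiset V} (h : g.MB P Q W t1 t2 t3) (hZ : g.Mt Z)
    (eq : P + Q + W + {t1} + {t2} + {t3} + Z = U) {a a' b1 b2 : V} (qd : g.Quad a a' b1 b2)
    (hne : b2 ≠ b1) (haU : a ∈ U) (haU' : a' ∈ U) (hb1 : b1 ∈ U) (hb2 : b2 ∈ U) :
    g.Conn U a a' b1 b2 := by
  obtain ⟨P', Q', W', h', eq'⟩ := h.absorb Hy _ hZ eq le_rfl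
  obtain ⟨K1, K2, K3, p, q, hm, he⟩ := h'.win Hy eq' hb1 (g.rB qd.h11)
  exact hm.cross Hy qd hne haU haU' hb2 he

end BG
end comb7

section hall
variable {V : Type*}
open SimpleGraph

/-- mate function of a perfect matching -/
structure Mate (B : SimpleGraph V) (μ : V → V) : Prop where
  adj : ∀ v, B.Adj v (μ v)
  inv : ∀ v, μ (μ v) = v

theorem IsPM.mate {B : SimpleGraph V} {M : Set (Sym2 V)} (h : IsPMOn B Set.univ M) :
    ∃ μ, Mate B μ ∧ ∀ v w, s(v, w) ∈ M ↔ w = μ v := by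
  obtain ⟨h1, -, h3⟩ := h
  have h4 : ∀ v, ∃ w, s(v, w) ∈ M := by
    intro v
    obtain ⟨e, ⟨he, hv⟩, -⟩ := h3 v trivial
    obtain ⟨w, rfl⟩ := hv
    exact ⟨w, he⟩
  choose μ hμ using h4
  have h5 : ∀ v w, s(v, w) ∈ M ↔ w = μ v := by
    intro v w
    constructor
    · intro hw
      have := (h3 v trivial).unique ⟨hw, by simp⟩ ⟨hμ v, by simp⟩
      exact Sym2.congr_right.1 this
    · rintro rfl; exact hμ v
  refine ⟨μ, ⟨fun v => h1 _ (hμ v), fun v => ?_⟩, h5⟩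
  exact ((h5 _ _).1 (by rw [Sym2.eq_swap]; exact hμ v)).symm

theorem IsBrace.ext2 {B : SimpleGraph V} (h : IsBrace B) {x1 y1 x2 y2 : V} (h1 : B.Adj x1 y1)
    (h2 : B.Adj x2 y2) (hx : x1 ≠ x2) (hy : y1 ≠ y2) (h12 : x1 ≠ y2) (h21 : x2 ≠ y1) :
    ∃ μ, Mate B μ ∧ μ x1 = y1 ∧ μ x2 = y2 := by
  obtain ⟨-, -, h⟩ := h
  obtain ⟨M, hM, hF⟩ := h {s(x1, y1), s(x2, y2)} (by
      intro e he
      rcases he with rfl | rfl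
      · exact h1
      · exact h2) (by
      intro e he f hf hef x hxe hxf
      rcases he with rfl | rfl <;> rcases hf with rfl | rfl
      · exact hef rfl
      · simp at hxe hxf; rcases hxe with rfl | rfl <;> rcases hxf with h | h <;> subst h <;>
          first | exact hx rfl | exact hy rfl | exact h12 rfl | exact h21 rfl
      · simp at hxe hxf; rcases hxe with rfl | rfl <;> rcases hxf with h | h <;> subst h <;>
          first | exact hx rfl | exact hy rfl | exact h12 rfl | exact h21 rfl
      · exact hef rfl) (by
      refine (Set.ncard_insert_le _ _).trans ?_
      simp)
  obtain ⟨μ, hm, hμ⟩ := IsPM.mate hM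
  exact ⟨μ, hm, ((hμ _ _).1 (hF (by simp))).symm, ((hμ _ _).1 (hF (by simp))).symm⟩

theorem IsBrace.ext1 {B : SimpleGraph V} (h : IsBrace B) {x1 y1 : V} (h1 : B.Adj x1 y1) :
    ∃ μ, Mate B μ ∧ μ x1 = y1 := by
  obtain ⟨-, -, h⟩ := h
  obtain ⟨M, hM, hF⟩ := h {s(x1, y1)} (by
      intro e he
      rcases he with rfl
      exact h1) (by
      intro e he f hf hef x hxe hxf
      rcases he with rfl; rcases hf with rfl
      exact hef rfl) (by simp)
  obtain ⟨μ, hm, hμ⟩ := IsPM.mate hM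
  exact ⟨μ, hm, ((hμ _ _).1 (hF (by simp))).symm⟩

theorem IsBrace.cut {B : SimpleGraph V} (h : IsBrace B) (X : Set V) {x y : V} (hx : x ∈ X) (hy : y ∉ X) :
    ∃ u ∈ X, ∃ v, v ∉ X ∧ B.Adj u v := by
  obtain ⟨w⟩ := h.2.1.2 x trivial y trivial
  obtain ⟨d, -, h1, h2⟩ := w.exists_boundary_dart X hx hy
  exact ⟨d.fst, h1, d.snd, h2, d.adj⟩

theorem IsBipartitionOf.swap {B : SimpleGraph V} {V1 V2 : Set V} (h : IsBipartitionOf B V1 V2) :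
    IsBipartitionOf B V2 V1 :=
  ⟨h.1.symm, by rw [Set.union_comm]; exact h.2.1, fun _ _ ha => (h.2.2 ha.symm).symm⟩

theorem IsBipartitionOf.not1 {B : SimpleGraph V} {V1 V2 : Set V} (h : IsBipartitionOf B V1 V2) {x : V} :
    x ∉ V1 ↔ x ∈ V2 := by
  constructor
  · intro hx
    have : x ∈ V1 ∪ V2 := by rw [h.2.1]; trivial
    exact this.resolve_left hx
  · intro hx hx'
    exact Set.disjoint_left.1 h.1 hx' hx

open Classical in
theorem Mate.count {B : SimpleGraph V} {μ : V → V} (hm : Mate B μ) {S T : Finset V}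
    (hN : ∀ x ∈ S, ∀ y, B.Adj x y → y ∈ T) :
    S.card + (T.filter (fun y => μ y ∉ S)).card = T.card := by
  have h1 : S.image μ = T.filter (fun y => μ y ∈ S) := by
    ext y
    simp only [Finset.mem_image, Finset.mem_filter]
    constructor
    · rintro ⟨x, hx, rfl⟩
      exact ⟨hN x hx _ (hm.adj x), by rwa [hm.inv]⟩
    · rintro ⟨h1, h2⟩
      exact ⟨μ y, h2, hm.inv y⟩
  have h2 : (S.image μ).card = S.card :=
    Finset.card_image_of_injective _ (Function.LeftInverse.injective hm.inv)
  rw [← h2, h1]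
  exact Finset.card_filter_add_card_filter_not _

open Classical in
theorem hall {B : SimpleGraph V} {V1 V2 : Set V} (hb : IsBipartitionOf B V1 V2) (hbr : IsBrace B)
    {S T : Finset V} (hS : ∀ x ∈ S, x ∈ V1) (hT : ∀ y ∈ T, y ∈ V2)
    (hN : ∀ x ∈ S, ∀ y, B.Adj x y → y ∈ T) {a b : V} (ha : a ∈ S) (hbV : b ∈ V2) (hbT : b ∉ T) :
    S.card + 2 ≤ T.card := by
  have dis : ∀ {x y}, x ∈ V1 → y ∈ V2 → x ≠ y := by
    rintro x y hx hy rfl; exact Set.disjoint_left.1 hb.1 hx hy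
  have hNT : ∀ y ∈ T, ∀ x, B.Adj y x → x ∈ V1 := fun y hy x hxy => (hb.2.2 hxy.symm).2 (hT y hy)
  have hNS : ∀ y ∈ V1, ∀ x, B.Adj y x → x ∈ V2 := fun y hy x hxy => (hb.2.2 hxy).1 hy
  -- one leaving edge
  have cut1 : ∃ y ∈ T, ∃ x ∉ S, B.Adj x y := by
    obtain ⟨u, hu, v, hv, huv⟩ := hbr.cut ((S : Set V) ∪ T) (x := a) (y := b) (by simp [ha])
      (by simp [hbT]; intro h; exact dis (hS _ h) hbV rfl)
    simp at hu hv
    rcases hu with hu | hu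
    · exact absurd (hN u hu v huv) hv.2
    · exact ⟨u, hu, v, hv.1, huv.symm⟩
  obtain ⟨y, hy, x, hx, hxy⟩ := cut1
  have hxV : x ∈ V1 := hNT y hy x hxy.symm
  have pos : S.card + 1 ≤ T.card := by
    obtain ⟨μ, hm, hμ⟩ := hbr.ext1 hxy.symm
    have := hm.count hN
    have : 0 < (T.filter (fun y => μ y ∉ S)).card := Finset.card_pos.2 ⟨y, by simp [hy, hμ, hx]⟩
    omega
  by_contra hlt
  have htight : T.card = S.card + 1 := by omega
  -- no two disjoint edges
  have nodis : ∀ x' y', y' ∈ T → x' ∉ S → B.Adj x' y' → x' = x ∨ y' = y := by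
    intro x' y' hy' hx' hxy'
    by_contra hcon
    push Not at hcon
    have hxV' : x' ∈ V1 := hNT y' hy' x' hxy'.symm
    obtain ⟨μ, hm, hμ1, hμ2⟩ := hbr.ext2 hxy.symm hxy'.symm hcon.2.symm hcon.1.symm
      (dis hxV' (hT y hy)).symm (dis hxV (hT y' hy')).symm
    have := hm.count hN
    have h2 : ({y, y'} : Finset V) ⊆ T.filter (fun y => μ y ∉ S) := by
      intro z hz
      simp at hz
      rcases hz with rfl | rfl
      · simp [hy, hμ1, hx]
      · simp [hy', hμ2, hx']
    have := Finset.card_le_card h2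
    rw [Finset.card_pair hcon.2.symm] at this
    omega
  -- a perfect matching with no leaving edge is impossible
  have noPM : ∀ μ, Mate B μ → (∀ z ∈ T, μ z ∈ S) → False := by
    intro μ hm hz
    have h0 := hm.count hN
    have : T.filter (fun y => μ y ∉ S) = ∅ := by
      rw [Finset.filter_eq_empty_iff]; intro z hzT; simp [hz z hzT]
    rw [this] at h0; simp at h0; omega
  by_cases hall_x : ∀ x' y', y' ∈ T → x' ∉ S → B.Adj x' y' → x' = x
  · -- all leaving edges at x
    obtain ⟨u, hu, v, hv, huv⟩ := hbr.cut (insert x ((S : Set V) ∪ T)) (x := a) (y := b) (by simp [ha])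
      (by
        simp [hbT]
        exact ⟨(dis hxV hbV).symm, fun h => dis (hS _ h) hbV rfl⟩)
    simp at hu hv
    rcases hu with rfl | hu | hu
    · obtain ⟨μ, hm, hμ⟩ := hbr.ext1 huv
      refine noPM μ hm fun z hz => ?_
      by_contra hzS
      have h1 := hall_x (μ z) z hz hzS (hm.adj z).symm
      have h2 := hm.inv z
      rw [h1, hμ] at h2
      subst h2; exact hv.2.2 hz
    · exact hv.2.2 (hN u hu v huv)
    · exact hv.1 (hall_x v u hu hv.2.1 huv.symm)
  · push Not at hall_x
    obtain ⟨x1, y1, hy1, hx1, h1, hne⟩ := hall_x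
    have hy1' : y1 = y := (nodis x1 y1 hy1 hx1 h1).resolve_left hne
    subst hy1'
    have ally : ∀ x' y', y' ∈ T → x' ∉ S → B.Adj x' y' → y' = y1 := by
      intro x' y' hy' hx' hxy'
      by_contra hc
      have e1 := (nodis x' y' hy' hx' hxy').resolve_right hc
      subst e1
      have hxV1 : x1 ∈ V1 := hNT y1 hy1 x1 h1.symm
      obtain ⟨μ, hm, hμ1, hμ2⟩ := hbr.ext2 h1.symm hxy'.symm (Ne.symm hc) hne
        (dis hxV (hT y1 hy)).symm (dis hxV1 (hT y' hy')).symm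
      have := hm.count hN
      have h2 : ({y1, y'} : Finset V) ⊆ T.filter (fun y => μ y ∉ S) := by
        intro z hz
        simp at hz
        rcases hz with rfl | rfl
        · simp [hy, hμ1, hx1]
        · simp [hy', hμ2, hx']
      have := Finset.card_le_card h2
      rw [Finset.card_pair (Ne.symm hc)] at this
      omega
    by_cases hs : ∃ s ∈ S, B.Adj s y1
    · obtain ⟨s, hs, hsy⟩ := hs
      obtain ⟨μ, hm, hμ⟩ := hbr.ext1 hsy.symm
      refine noPM μ hm fun z hz => ?_
      by_contra hzS
      have h1 := ally (μ z) z hz hzS (hm.adj z).symm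
      subst h1
      rw [hμ] at hzS
      exact hzS hs
    · push Not at hs
      obtain ⟨u, hu, v, hv, huv⟩ := hbr.cut ((S : Set V) ∪ (T \ {y1} : Set V)) (x := a) (y := b)
        (by simp [ha]) (by
        simp [hbT]
        exact fun h => dis (hS _ h) hbV rfl)
      simp at hu hv
      rcases hu with hu | hu
      · have h1 := hv.2 (hN u hu v huv)
        subst h1
        exact hs u hu huv
      · exact hu.2 (ally v u hu.1 hv.1 huv.symm)

/-- The two-coloured graph associated with a bipartite graph. -/
def bgOf {B : SimpleGraph V} {V1 V2 : Set V} (hb : IsBipartitionOf B V1 V2) : BG V where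
  isA x := x ∈ V1
  r x y := x ∈ V1 ∧ B.Adj x y
  rA h := h.1
  rB h := hb.not1.2 ((hb.2.2 h.2).1 h.1)

open Classical in
theorem BG.exc_eq (g : BG V) (R : Multiset V) :
    g.exc R = ((R.filter g.isA).card : ℤ) - (R.filter (fun x => ¬ g.isA x)).card := by
  induction R using Multiset.induction with
  | empty => simp
  | cons x R ih =>
    rw [← Multiset.singleton_add, BG.exc_add, ih]
    by_cases h : g.isA x
    · simp [BG.exc_A h, h]; ring
    · simp [BG.exc_B h, h]; ring

open Classical in
theorem bgOf_hyp [Fintype V] {B : SimpleGraph V} {V1 V2 : Set V} (hb : IsBipartitionOf B V1 V2)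
    (hbr : IsBrace B) : (bgOf hb).Hyp (Finset.univ : Finset V).val := by
  have nd : ∀ {R C : Multiset V}, R + C = (Finset.univ : Finset V).val → 
      R.Nodup ∧ C.Nodup ∧ ∀ x, x ∈ R ↔ x ∉ C := by
    intro R C h
    have := (Finset.univ : Finset V).nodup
    rw [← h, Multiset.nodup_add] at this
    refine ⟨this.1, this.2.1, fun x => ⟨fun hx hx' => Multiset.disjoint_left.1 this.2.2 hx hx', fun hx => ?_⟩⟩
    have : x ∈ R + C := by rw [h]; simp
    exact (Multiset.mem_add.1 this).resolve_right hx
  constructor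
  · intro R C rest a b eq haR haA hC hbr' hbA
    by_contra hcon
    push Not at hcon
    obtain ⟨nd1, nd2, hmem⟩ := nd eq
    have nR := (Multiset.nodup_add.1 nd1).1
    let S : Finset V := R.toFinset.filter (· ∈ V1)
    let T : Finset V := (R + C).toFinset.filter (fun x => ¬ x ∈ V1)
    have := hall hb hbr (S := S) (T := T) (a := a) (b := b) (by simp [S]) 
      (by intro y hy; exact hb.not1.1 (Finset.mem_filter.1 hy).2) (by
        intro x hx y hxy
        simp only [S, Finset.mem_filter, Multiset.mem_toFinset] at hx
        have hy : ¬ y ∈ V1 := hb.not1.2 ((hb.2.2 hxy).1 hx.2)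
        simp only [T, Finset.mem_filter, Multiset.mem_toFinset]
        refine ⟨?_, hy⟩
        by_contra hyR
        have hyr : y ∈ rest := by
          by_contra h
          exact hyR ((hmem y).2 h)
        exact hcon y hyr ⟨x, hx.1, hx.2, hxy⟩) (by simp [S, haR]; exact haA) (hb.not1.1 hbA) (by
        simp only [T, Finset.mem_filter, Multiset.mem_toFinset]
        rintro ⟨h, -⟩
        exact (hmem b).1 h hbr')
    have e1 : S.card = (R.filter (bgOf hb).isA).card := by
      rw [← Multiset.toFinset_card_of_nodup (nR.filter _), Multiset.toFinset_filter]; rfl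
    have e2 : T.card = ((R + C).filter (fun x => ¬ (bgOf hb).isA x)).card := by
      rw [← Multiset.toFinset_card_of_nodup (nd1.filter _), Multiset.toFinset_filter]; rfl
    rw [Multiset.filter_add, Multiset.card_add] at e2
    have e3 := Multiset.card_le_card (Multiset.filter_le (fun x => ¬ (bgOf hb).isA x) C)
    rw [BG.exc_eq] at hC
    omega
  · intro X rest u a tX hu huA eq har haA
    by_contra hcon
    push Not at hcon
    obtain ⟨nd1, nd2, hmem⟩ := nd eq
    let S : Finset V := X.toFinset.filter (fun x => ¬ x ∈ V1)
    let T : Finset V := X.toFinset.filter (· ∈ V1)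
    have := hall hb.swap hbr (S := S) (T := T) (a := u) (b := a)
      (by intro y hy; exact hb.not1.1 (Finset.mem_filter.1 hy).2) (by simp [T]) (by
        intro x hx y hxy
        simp only [S, Finset.mem_filter, Multiset.mem_toFinset] at hx
        have hy : y ∈ V1 := (hb.2.2 hxy.symm).2 (hb.not1.1 hx.2)
        simp only [T, Finset.mem_filter, Multiset.mem_toFinset]
        refine ⟨?_, hy⟩
        by_contra hyR
        have hyr : y ∈ rest := by
          by_contra h
          exact hyR ((hmem y).2 h)
        exact hcon x hx.1 y hyr ⟨hy, hxy.symm⟩) (by simp [S, hu]; exact huA) haA (by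
        simp only [T, Finset.mem_filter, Multiset.mem_toFinset]
        rintro ⟨h, -⟩
        exact (hmem a).1 h har)
    have e1 : T.card = (X.filter (bgOf hb).isA).card := by
      rw [← Multiset.toFinset_card_of_nodup (nd1.filter _), Multiset.toFinset_filter]; rfl
    have e2 : S.card = (X.filter (fun x => ¬ (bgOf hb).isA x)).card := by
      rw [← Multiset.toFinset_card_of_nodup (nd1.filter _), Multiset.toFinset_filter]; rfl
    have e3 := tX.exc
    rw [BG.exc_eq] at e3
    omega

end hall

section build
variable {V : Type*}
open SimpleGraph

/-- `N` is covered by disjoint edges from `Es`. -/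
def Cov (B : SimpleGraph V) (Es : Set (Sym2 V)) (N : Multiset V) : Prop :=
  ∃ E : Multiset (V × V), (∀ p ∈ E, B.Adj p.1 p.2 ∧ s(p.1, p.2) ∈ Es) ∧
    E.map Prod.fst + E.map Prod.snd = N

theorem Cov.zero {B : SimpleGraph V} {Es : Set (Sym2 V)} : Cov B Es 0 := ⟨0, by simp, by simp⟩

theorem Cov.add {B : SimpleGraph V} {Es : Set (Sym2 V)} {N N' : Multiset V} (h : Cov B Es N)
    (h' : Cov B Es N') : Cov B Es (N + N') := by
  obtain ⟨E, h1, rfl⟩ := h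
  obtain ⟨E', h1', rfl⟩ := h'
  refine ⟨E + E', fun p hp => ?_, by simp only [Multiset.map_add]; abel⟩
  rcases Multiset.mem_add.1 hp with hp | hp
  · exact h1 p hp
  · exact h1' p hp

theorem Cov.pair {B : SimpleGraph V} {Es : Set (Sym2 V)} {x y : V} (h : B.Adj x y) (he : s(x, y) ∈ Es) :
    Cov B Es ({x} + {y}) := ⟨{(x, y)}, by simpa using ⟨h, he⟩, by simp⟩

theorem Cov.mono {B : SimpleGraph V} {Es Es' : Set (Sym2 V)} {N : Multiset V} (h : Cov B Es N)
    (hs : Es ⊆ Es') : Cov B Es' N := by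
  obtain ⟨E, h1, rfl⟩ := h
  exact ⟨E, fun p hp => ⟨(h1 p hp).1, hs (h1 p hp).2⟩, rfl⟩

theorem walk_cov {B : SimpleGraph V} (n : ℕ) : ∀ {x y : V} (p : B.Walk x y), p.length = 2 * n + 1 →
    Cov B {e | e ∈ p.edges} (p.support : Multiset V) ∧
    ∃ I : Multiset V, (p.support : Multiset V) = {x} + I + {y} ∧ Cov B {e | e ∈ p.edges} I := by
  induction n with
  | zero =>
    intro x y p hp
    cases p with
    | nil => simp at hp
    | cons h q =>
      cases q with
      | cons h' q => simp at hp
      | nil =>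
        refine ⟨?_, 0, by simp; rfl, .zero⟩
        have := Cov.pair (Es := {e | e ∈ (Walk.cons h Walk.nil).edges}) h (by simp)
        exact this
  | succ n ih =>
    intro x y p hp
    cases p with
    | nil => simp at hp
    | cons h q =>
      rename_i v
      cases q with
      | nil => simp at hp
      | cons h' q =>
        rename_i w
        obtain ⟨c1, I, hI, c2⟩ := ih q (by simp at hp; omega)
        have m : {e | e ∈ q.edges} ⊆ {e | e ∈ (Walk.cons h (Walk.cons h' q)).edges} := by
          intro e he; simp at he ⊢; tauto
        have e1 : ((Walk.cons h (Walk.cons h' q)).support : Multiset V) = {x} + {v} + (q.support : Multiset V) := by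
          simp [← Multiset.cons_coe, ← Multiset.singleton_add, add_assoc]
        refine ⟨?_, {v} + {w} + I, ?_, ?_⟩
        · rw [e1]
          exact (Cov.pair h (by simp)).add (c1.mono m)
        · rw [e1, hI]; abel
        · exact (Cov.pair h' (by simp)).add (c2.mono m)

theorem sum_nodup_disj {κ : Type*} [Fintype κ] [DecidableEq κ] {F : κ → Multiset V} 
    (h : (∑ k, F k).Nodup) {k k' : κ} (hk : k ≠ k') {v : V} (hv : v ∈ F k) : v ∉ F k' := by
  intro hv'
  have h1 : ∑ x ∈ ({k, k'} : Finset κ), F x ≤ ∑ k, F k :=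
    Finset.sum_le_sum_of_subset (Finset.subset_univ _)
  rw [Finset.sum_pair hk] at h1
  have := Multiset.nodup_of_le h1 h
  exact Multiset.disjoint_left.1 (Multiset.nodup_add.1 this).2.2 hv hv'

theorem sum_nodup_single {κ : Type*} [Fintype κ] [DecidableEq κ] {F : κ → Multiset V} 
    (h : (∑ k, F k).Nodup) (k : κ) : (F k).Nodup := by
  have h1 : ∑ x ∈ ({k} : Finset κ), F x ≤ ∑ k, F k :=
    Finset.sum_le_sum_of_subset (Finset.subset_univ _)
  rw [Finset.sum_singleton] at h1
  exact Multiset.nodup_of_le h1 h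

def mkLink {B : SimpleGraph V} {A T : Fin 3 → V} (p : ∀ i j, B.Walk (A i) (T j)) :
    ∀ ⦃x y : Fin 3 ⊕ Fin 3⦄, K33.Adj x y → B.Walk (Sum.elim A T x) (Sum.elim A T y)
  | Sum.inl i, Sum.inr j, _ => p i j
  | Sum.inr j, Sum.inl i, _ => (p i j).reverse
  | Sum.inl i, Sum.inl j, h => absurd h (by simp)
  | Sum.inr i, Sum.inr j, h => absurd h (by simp)

/-- The pieces. -/
def pieces (A T : Fin 3 → V) (I : Fin 3 → Fin 3 → Multiset V) :
    ((Fin 3 ⊕ Fin 3) ⊕ (Fin 3 × Fin 3)) → Multiset V :=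
  Sum.elim (fun w => {Sum.elim A T w}) (fun q => I q.1 q.2)

theorem mkLink_cases {B : SimpleGraph V} {A T : Fin 3 → V} {I : Fin 3 → Fin 3 → Multiset V}
    {p : ∀ i j, B.Walk (A i) (T j)} (ho : ∀ i j, Odd (p i j).length)
    (hs : ∀ i j, ((p i j).support : Multiset V) = {A i} + I i j + {T j})
    ⦃x y : Fin 3 ⊕ Fin 3⦄ (h : K33.Adj x y) :
    ∃ i j, s(x, y) = s(Sum.inl i, Sum.inr j) ∧ Odd (mkLink p h).length ∧ 
      (∀ v, v ∈ (mkLink p h).support ↔ v = A i ∨ v = T j ∨ v ∈ I i j) ∧ 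
      (∀ e, e ∈ (mkLink p h).edges ↔ e ∈ (p i j).edges) ∧ 
      ((mkLink p h).support.Nodup ↔ (p i j).support.Nodup) := by
  have key : ∀ i j v, v ∈ (p i j).support ↔ v = A i ∨ v = T j ∨ v ∈ I i j := by
    intro i j v
    rw [← Multiset.mem_coe, hs]
    simp; tauto
  rcases x with i | j <;> rcases y with i' | j'
  · simp at h
  · exact ⟨i, j', rfl, ho i j', fun v => key i j' v, fun e => Iff.rfl, Iff.rfl⟩
  · have h1 : Odd (p i' j).reverse.length := by rw [Walk.length_reverse]; exact ho i' j
    have h2 : ∀ v, v ∈ (p i' j).reverse.support ↔ v = A i' ∨ v = T j ∨ v ∈ I i' j := by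
      intro v; rw [Walk.support_reverse, List.mem_reverse]; exact key i' j v
    have h3 : ∀ e, e ∈ (p i' j).reverse.edges ↔ e ∈ (p i' j).edges := by
      intro e; rw [Walk.edges_reverse, List.mem_reverse]
    have h4 : (p i' j).reverse.support.Nodup ↔ (p i' j).support.Nodup := by
      rw [Walk.support_reverse, List.nodup_reverse]
    exact ⟨i', j, Sym2.eq_swap, h1, h2, h3, h4⟩
  · simp at h

theorem sym_eq {i j : Fin 3} {x y z : Fin 3 ⊕ Fin 3} (h : s(x, y) = s(Sum.inl i, Sum.inr j)) :
    (z = x ∨ z = y) ↔ (z = Sum.inl i ∨ z = Sum.inr j) := by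
  have : z ∈ s(x, y) ↔ z ∈ s(Sum.inl i, Sum.inr j) := by rw [h]
  simpa using this

def mkBis {B : SimpleGraph V} {A T : Fin 3 → V} {I : Fin 3 → Fin 3 → Multiset V}
    (p : ∀ i j, B.Walk (A i) (T j)) (ho : ∀ i j, Odd (p i j).length)
    (hs : ∀ i j, ((p i j).support : Multiset V) = {A i} + I i j + {T j})
    (hnd : (∑ k, pieces A T I k).Nodup) : Bisubdivision K33 B where
  bv := Sum.elim A T
  bv_inj := by
    intro w w' h
    by_contra hne
    have := sum_nodup_disj hnd (k := Sum.inl w) (k' := Sum.inl w') (by simpa using hne)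
      (v := Sum.elim A T w) (by simp [pieces])
    simp [pieces, h] at this
  link := mkLink p
  link_isPath := by
    intro x y h
    obtain ⟨i, j, hxy, -, -, -, h4⟩ := mkLink_cases ho hs h
    rw [Walk.isPath_def, h4, ← Multiset.coe_nodup, hs]
    have h1 := sum_nodup_single hnd (Sum.inr (i, j))
    have h2 := sum_nodup_disj hnd (k := Sum.inl (Sum.inl i)) (k' := Sum.inr (i, j)) (by simp)
      (v := A i) (by simp [pieces])
    have h3 := sum_nodup_disj hnd (k := Sum.inl (Sum.inr j)) (k' := Sum.inr (i, j)) (by simp)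
      (v := T j) (by simp [pieces])
    have h4 := sum_nodup_disj hnd (k := Sum.inl (Sum.inl i)) (k' := Sum.inl (Sum.inr j)) (by simp)
      (v := A i) (by simp [pieces])
    simp only [pieces, Sum.elim_inl, Sum.elim_inr] at h1 h2 h3 h4
    rw [add_comm, ← add_assoc]
    simp only [Multiset.singleton_add, Multiset.cons_add, Multiset.nodup_cons, Multiset.mem_cons]
    simp at h4
    simp [h1, h2, h3, Ne.symm h4]
  link_odd := by
    intro x y h
    obtain ⟨i, j, hxy, h, -⟩ := mkLink_cases ho hs h
    exact h
  link_symm := by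
    intro x y h
    rcases x with i | j <;> rcases y with i' | j'
    · simp at h
    · rfl
    · simp [mkLink]
    · simp at h
  link_branch := by
    intro x y h z hz
    obtain ⟨i, j, hxy, -, hsup, -⟩ := mkLink_cases ho hs h
    rw [hsup] at hz
    rw [sym_eq hxy]
    have key : ∀ {w}, Sum.elim A T z = Sum.elim A T w → z = w := by
      intro w h
      by_contra hne
      have := sum_nodup_disj hnd (k := Sum.inl z) (k' := Sum.inl w) (by simpa using hne)
        (v := Sum.elim A T z) (by simp [pieces])
      simp [pieces, h] at this
    rcases hz with hz | hz | hz
    · exact Or.inl (key (w := Sum.inl i) hz)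
    · exact Or.inr (key (w := Sum.inr j) hz)
    · have := sum_nodup_disj hnd (k := Sum.inl z) (k' := Sum.inr (i, j)) (by simp)
        (v := Sum.elim A T z) (by simp [pieces])
      exact absurd hz this
  link_meet := by
    intro x y x' y' h h' hne v hv hv'
    obtain ⟨i, j, hxy, -, hsup, -⟩ := mkLink_cases ho hs h
    obtain ⟨i', j', hxy', -, hsup', -⟩ := mkLink_cases ho hs h'
    rw [hsup] at hv
    rw [hsup'] at hv'
    have hne2 : (i, j) ≠ (i', j') := by
      rintro hh
      simp only [Prod.mk.injEq] at hh
      obtain ⟨rfl, rfl⟩ := hh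
      exact hne (hxy.trans hxy'.symm)
    have tr : ∀ {i j x y}, s(x, y) = s(Sum.inl i, Sum.inr j) → (v = A i ∨ v = T j) →
        v = Sum.elim A T x ∨ v = Sum.elim A T y := by
      intro i j x y hxy hv
      rcases Sym2.eq_iff.1 hxy with ⟨rfl, rfl⟩ | ⟨rfl, rfl⟩
      · exact hv
      · exact hv.symm
    have nI : ∀ {i j w}, v = Sum.elim A T w → v ∉ I i j := by
      intro i j w hw
      exact sum_nodup_disj hnd (k := Sum.inl w) (k' := Sum.inr (i, j)) (by simp)
        (v := v) (by simp [pieces, hw])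
    have nII : v ∈ I i j → v ∉ I i' j' := fun hh =>
      sum_nodup_disj hnd (k := Sum.inr (i, j)) (k' := Sum.inr (i', j')) (by simpa using hne2) hh
    have g1 : v ∉ I i j := by
      intro hI
      rcases hv' with hh | hh | hh
      · exact nI (w := Sum.inl i') hh hI
      · exact nI (w := Sum.inr j') hh hI
      · exact nII hI hh
    have g2 : v ∉ I i' j' := by
      intro hI
      rcases hv with hh | hh | hh
      · exact nI (w := Sum.inl i) hh hI
      · exact nI (w := Sum.inr j) hh hI
      · exact nII hh hI
    exact ⟨tr hxy (by tauto), tr hxy' (by tauto)⟩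

theorem Cov.of_Mt {B : SimpleGraph V} {V1 V2 : Set V} (hb : IsBipartitionOf B V1 V2) {Z : Multiset V}
    (h : (bgOf hb).Mt Z) : Cov B Set.univ Z := by
  induction h with
  | zero => exact .zero
  | pair Z x y _ hr ih =>
    rw [add_assoc]; exact ih.add (.pair hr.2 trivial)

/-- From covers to conformality -/
theorem conformal_of_cov [Fintype V] {B : SimpleGraph V} (L : Bisubdivision K33 B) {N Z : Multiset V}
    (h1 : Cov B L.edgeSet N) (h2 : Cov B Set.univ Z) (hv : ∀ v ∈ L.verts, v ∈ N)
    (eq : N + Z = (Finset.univ : Finset V).val) : L.ConformalOn Set.univ := by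
  obtain ⟨E1, hE1, rfl⟩ := h1
  obtain ⟨E2, hE2, rfl⟩ := h2
  have nd := (Finset.univ : Finset V).nodup
  have all : ∀ v, v ∈ (Finset.univ : Finset V).val := by simp
  rw [← eq] at nd all
  let E := E1 + E2
  have nd' : (E.map Prod.fst + E.map Prod.snd).Nodup := by
    convert nd using 1; simp only [E, Multiset.map_add]; abel
  have uniq : ∀ p ∈ E, ∀ q ∈ E, ∀ v, v ∈ s(p.1, p.2) → v ∈ s(q.1, q.2) → p = q := by
    intro p hp q hq v h1 h2
    obtain ⟨n1, n2, d⟩ := Multiset.nodup_add.1 nd'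
    have i1 := Multiset.inj_on_of_nodup_map n1
    have i2 := Multiset.inj_on_of_nodup_map n2
    simp at h1 h2
    rcases h1 with rfl | rfl <;> rcases h2 with h2 | h2
    · exact i1 p hp q hq h2
    · exact absurd (Multiset.mem_map.2 ⟨q, hq, h2.symm⟩)
        (Multiset.disjoint_left.1 d (Multiset.mem_map.2 ⟨p, hp, rfl⟩))
    · exact absurd (Multiset.mem_map.2 ⟨p, hp, rfl⟩)
        (Multiset.disjoint_left.1 d (Multiset.mem_map.2 ⟨q, hq, h2.symm⟩))
    · exact i2 p hp q hq h2
  have cov : ∀ E' : Multiset (V × V), ∀ v, v ∈ E'.map Prod.fst + E'.map Prod.snd → 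
      ∃ p ∈ E', v ∈ s(p.1, p.2) := by
    intro E' v hv
    rcases Multiset.mem_add.1 hv with h | h <;> obtain ⟨p, hp, rfl⟩ := Multiset.mem_map.1 h
    · exact ⟨p, hp, by simp⟩
    · exact ⟨p, hp, by simp⟩
  refine ⟨{e | ∃ p ∈ E, e = s(p.1, p.2)}, ⟨?_, fun _ _ _ _ => trivial, ?_⟩, ?_⟩
  · rintro e ⟨p, hp, rfl⟩
    rcases Multiset.mem_add.1 hp with hp | hp
    · exact (hE1 p hp).1
    · exact (hE2 p hp).1
  · intro v _
    obtain ⟨p, hp, hvp⟩ := cov E v (by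
      have := all v
      convert this using 1; simp only [E, Multiset.map_add]; abel)
    refine ⟨s(p.1, p.2), ⟨⟨p, hp, rfl⟩, hvp⟩, ?_⟩
    rintro e ⟨⟨q, hq, rfl⟩, hvq⟩
    rw [uniq p hp q hq v hvp hvq]
  · intro v hvL
    obtain ⟨p, hp, hvp⟩ := cov E1 v (hv v hvL)
    have hpE : p ∈ E := Multiset.mem_add.2 (Or.inl hp)
    refine ⟨s(p.1, p.2), ⟨⟨p, hpE, rfl⟩, (hE1 p hp).2, hvp⟩, ?_⟩
    rintro e ⟨⟨q, hq, rfl⟩, -, hvq⟩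
    rw [uniq p hpE q hq v hvp hvq]

theorem walk_one {B : SimpleGraph V} {x y : V} (q : B.Walk x y) (hl : q.length = 1) : s(x, y) ∈ q.edges := by
  cases q with
  | nil => simp at hl
  | cons h q =>
    have hq := Walk.eq_of_length_eq_zero (p := q) (by simpa using hl)
    subst hq
    simp

theorem build [Fintype V] {B : SimpleGraph V} {A T : Fin 3 → V} {I : Fin 3 → Fin 3 → Multiset V}
    (h : ∀ i j, ∃ p : B.Walk (A i) (T j), Odd p.length ∧ (p.support : Multiset V) = {A i} + I i j + {T j})
    {Z : Multiset V} (hZ : Cov B Set.univ Z)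
    (tot : ∑ k, pieces A T I k + Z = (Finset.univ : Finset V).val) :
    ∃ L : Bisubdivision K33 B, L.ConformalOn Set.univ ∧ ∀ i j, I i j = 0 → s(A i, T j) ∈ L.edgeSet := by
  choose p ho hs using h
  have nd := (Finset.univ : Finset V).nodup
  rw [← tot] at nd
  have hnd := (Multiset.nodup_add.1 nd).1
  let L := mkBis p ho hs hnd
  have hadj : ∀ i j, K33.Adj (Sum.inl i) (Sum.inr j) := by simp
  have hedge : ∀ i j, {e | e ∈ (p i j).edges} ⊆ L.edgeSet := fun i j e he =>
    ⟨Sum.inl i, Sum.inr j, hadj i j, he⟩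
  have hw : ∀ i j, Cov B L.edgeSet ({A i} + I i j + {T j}) ∧ Cov B L.edgeSet (I i j) := by
    intro i j
    obtain ⟨n, hn⟩ := ho i j
    obtain ⟨c1, I', hI', c2⟩ := walk_cov n (p i j) hn
    have : I' = I i j := by
      rw [hs] at hI'
      have := add_right_cancel hI'
      exact (add_left_cancel this).symm
    subst this
    rw [hs] at c1
    exact ⟨c1.mono (hedge i j), c2.mono (hedge i j)⟩
  refine ⟨L, conformal_of_cov L (N := ∑ k, pieces A T I k) ?_ hZ ?_ tot, ?_⟩
  · have := ((((((((hw 0 0).1.add (hw 1 1).1).add (hw 2 2).1).add (hw 0 1).2).add (hw 0 2).2).add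
      (hw 1 0).2).add (hw 1 2).2).add (hw 2 0).2).add (hw 2 1).2
    convert this using 1
    simp only [pieces, Fintype.sum_sum_type, Fintype.sum_prod_type, Fin.sum_univ_three, Sum.elim_inl,
      Sum.elim_inr]
    abel
  · rintro v ⟨x, y, hxy, hv⟩
    obtain ⟨i, j, -, -, hsup, -⟩ := mkLink_cases ho hs hxy
    have hv' := (hsup v).1 hv
    rw [Multiset.mem_sum]
    rcases hv' with rfl | rfl | hv'
    · exact ⟨Sum.inl (Sum.inl i), by simp, by simp [pieces]⟩
    · exact ⟨Sum.inl (Sum.inr j), by simp, by simp [pieces]⟩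
    · exact ⟨Sum.inr (i, j), by simp, by simpa [pieces] using hv'⟩
  · intro i j hI
    apply hedge i j
    have h1 := hs i j
    rw [hI] at h1
    have hl : (p i j).length = 1 := by
      have := congrArg Multiset.card h1
      simp at this
      omega
    exact walk_one _ hl

end build

section input
variable {V : Type*}
open SimpleGraph

theorem walk_parity {B : SimpleGraph V} {V1 V2 : Set V} (hb : IsBipartitionOf B V1 V2) {x y : V}
    (p : B.Walk x y) : Even p.length ↔ (x ∈ V1 ↔ y ∈ V1) := by
  induction p with
  | nil => simp
  | cons h q ih =>
    have h1 := hb.2.2 h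
    rw [← hb.not1] at h1
    rw [Walk.length_cons, Nat.even_add_one, ih]
    tauto

theorem walk_odd {B : SimpleGraph V} {V1 V2 : Set V} (hb : IsBipartitionOf B V1 V2) {x y : V}
    (p : B.Walk x y) : Odd p.length ↔ ¬ (x ∈ V1 ↔ y ∈ V1) := by
  rw [← Nat.not_even_iff_odd, walk_parity hb]

theorem walk_tree {B : SimpleGraph V} {V1 V2 : Set V} (hb : IsBipartitionOf B V1 V2) (n : ℕ) :
    ∀ {x y : V} (p : B.Walk x y), p.length = 2 * n + 1 → x ∈ V1 → ∀ {K : Multiset V},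
    (bgOf hb).ATree K → x ∈ K →
    ∃ I : Multiset V, (p.support : Multiset V) = {x} + I + {y} ∧ (bgOf hb).ATree (K + I) ∧
      (bgOf hb).Ad y (K + I) := by
  induction n with
  | zero =>
    intro x y p hp hx K hK hxK
    cases p with
    | nil => simp at hp
    | cons h q =>
      cases q with
      | cons h' q => simp at hp
      | nil =>
        exact ⟨0, by simp; rfl, by simpa using hK, by simpa using BG.Ad.of_mem (g := bgOf hb) ⟨hx, h⟩ hxK⟩
  | succ n ih =>
    intro x y p hp hx K hK hxK
    cases p with
    | nil => simp at hp
    | cons h q =>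
      rename_i v
      cases q with
      | nil => simp at hp
      | cons h' q =>
        rename_i w
        have hw : w ∈ V1 := by
          have h1 := hb.2.2 h
          have h2 := hb.2.2 h'.symm
          tauto
        have t : (bgOf hb).ATree (K + {v} + {w}) := .join _ _ _ hK (.single _ hw)
          (BG.Ad.of_mem ⟨hx, h⟩ hxK) (BG.Ad.of_mem ⟨hw, h'.symm⟩ (by simp))
        obtain ⟨I, hI, c1, c2⟩ := ih q (by simp at hp; omega) hw t (by simp)
        have e1 : ((Walk.cons h (Walk.cons h' q)).support : Multiset V) = {x} + {v} + (q.support : Multiset V) := by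
          simp [← Multiset.cons_coe, ← Multiset.singleton_add, add_assoc]
        refine ⟨{v} + {w} + I, ?_, ?_, ?_⟩
        · rw [e1, hI]; abel
        · simpa only [add_assoc] using c1
        · simpa only [add_assoc] using c2

theorem Mt_of_closed {B : SimpleGraph V} {V1 V2 : Set V} (hb : IsBipartitionOf B V1 V2) {μ : V → V}
    (hm : Mate B μ) (n : ℕ) : ∀ Z : Multiset V, Z.card = n → Z.Nodup → (∀ v ∈ Z, μ v ∈ Z) →
    (bgOf hb).Mt Z := by
  induction n using Nat.strong_induction_on with
  | _ n ih =>
    intro Z hn nd cl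
    rcases Z.empty_or_exists_mem with rfl | ⟨v, hv⟩
    · exact .zero
    · obtain ⟨Z1, rfl⟩ := Multiset.exists_cons_of_mem hv
      have hne : μ v ≠ v := (hm.adj v).ne.symm
      have h1 : μ v ∈ Z1 := by
        have := cl v (by simp)
        exact (Multiset.mem_cons.1 this).resolve_left hne
      obtain ⟨Z2, rfl⟩ := Multiset.exists_cons_of_mem h1
      simp only [Multiset.nodup_cons, Multiset.mem_cons, not_or] at nd
      have := ih Z2.card (by simp at hn; omega) Z2 rfl nd.2.2 (by
        intro w hw
        have := cl w (by simp [hw])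
        simp only [Multiset.mem_cons] at this
        rcases this with h | h | h
        · have := hm.inv w
          rw [h] at this; subst this; exact absurd hw nd.2.1
        · have h' := congrArg μ h
          rw [hm.inv, hm.inv] at h'
          subst h'; exact absurd hw nd.1.2
        · exact h)
      by_cases hA : v ∈ V1
      · have h2 := BG.Mt.pair _ v (μ v) this ⟨hA, hm.adj v⟩
        convert h2 using 1
        simp only [← Multiset.singleton_add]; abel
      · have hA' : μ v ∈ V1 := by
          have := hb.2.2 (hm.adj v).symm
          rw [← hb.not1] at this; tauto
        have h2 := BG.Mt.pair _ (μ v) v this ⟨hA', (hm.adj v).symm⟩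
        convert h2 using 1
        simp only [← Multiset.singleton_add]; abel

theorem sum_nodup {κ : Type*} [Fintype κ] {F : κ → Multiset V} (h1 : ∀ k, (F k).Nodup)
    (h2 : ∀ k k', k ≠ k' → ∀ v ∈ F k, v ∉ F k') : (∑ k, F k).Nodup := by
  have : ∑ k, F k = (Finset.univ : Finset κ).val.bind F := rfl
  rw [this, Multiset.nodup_bind]
  refine ⟨fun k _ => h1 k, ?_⟩
  exact (Multiset.Nodup.pairwise (fun k _ k' _ hk => Multiset.disjoint_left.2 (h2 k k' hk _)) (Finset.univ : Finset κ).nodup)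

theorem input [Fintype V] [DecidableEq V] {B : SimpleGraph V} {V1 V2 : Set V} (hb : IsBipartitionOf B V1 V2)
    (L : Bisubdivision K33 B) (hL : L.ConformalOn Set.univ) (h0 : L.bv (Sum.inl 0) ∈ V1) :
    ∃ P Q W t1 t2 t3 Z, (bgOf hb).MB P Q W t1 t2 t3 ∧ (bgOf hb).Mt Z ∧
      P + Q + W + {t1} + {t2} + {t3} + Z = (Finset.univ : Finset V).val := by
  obtain ⟨M, hM, hML⟩ := hL
  obtain ⟨μ, hm, hμ⟩ := IsPM.mate hM
  have hadj : ∀ i j, K33.Adj (Sum.inl i) (Sum.inr j) := by simp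
  have hT : ∀ j, L.bv (Sum.inr j) ∉ V1 := fun j => by
    have := (walk_odd hb _).1 (L.link_odd (hadj 0 j))
    tauto
  have hA : ∀ i, L.bv (Sum.inl i) ∈ V1 := fun i => by
    have := (walk_odd hb _).1 (L.link_odd (hadj i 0))
    have := hT 0
    tauto
  have st : ∀ i j, ∀ {K : Multiset V}, (bgOf hb).ATree K → L.bv (Sum.inl i) ∈ K →
      ∃ I : Multiset V, ((L.link (hadj i j)).support : Multiset V) = {L.bv (Sum.inl i)} + I + {L.bv (Sum.inr j)} ∧
      (bgOf hb).ATree (K + I) ∧ (bgOf hb).Ad (L.bv (Sum.inr j)) (K + I) := by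
    intro i j K hK hx
    obtain ⟨n, hn⟩ := L.link_odd (hadj i j)
    exact walk_tree hb n _ hn (hA i) hK hx
  have tree : ∀ i, ∃ I : Fin 3 → Multiset V,
      (∀ j, ((L.link (hadj i j)).support : Multiset V) = {L.bv (Sum.inl i)} + I j + {L.bv (Sum.inr j)}) ∧
      (bgOf hb).ATree ({L.bv (Sum.inl i)} + I 0 + I 1 + I 2) ∧
      ∀ j, (bgOf hb).Ad (L.bv (Sum.inr j)) ({L.bv (Sum.inl i)} + I 0 + I 1 + I 2) := by
    intro i
    obtain ⟨I0, e0, t0, a0⟩ := st i 0 (.single _ (hA i)) (by simp)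
    obtain ⟨I1, e1, t1, a1⟩ := st i 1 t0 (by simp)
    obtain ⟨I2, e2, t2, a2⟩ := st i 2 t1 (by simp)
    refine ⟨![I0, I1, I2], ?_, t2, ?_⟩
    · intro j; fin_cases j
      · exact e0
      · exact e1
      · exact e2
    · intro j; fin_cases j
      · exact BG.Ad_add.2 (Or.inl (BG.Ad_add.2 (Or.inl a0)))
      · exact BG.Ad_add.2 (Or.inl a1)
      · exact a2
  choose I hI t a using tree
  let A : Fin 3 → V := fun i => L.bv (Sum.inl i)
  let T : Fin 3 → V := fun i => L.bv (Sum.inr i)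
  have hAT : ∀ w, Sum.elim A T w = L.bv w := by rintro (i | j) <;> rfl
  have hsup : ∀ i j v, v ∈ (L.link (hadj i j)).support ↔ v = A i ∨ v ∈ I i j ∨ v = T j := by
    intro i j v
    rw [← Multiset.mem_coe, hI]
    simp [A, T]
  have hnd0 : ∀ i j, ({A i} + I i j + {T j} : Multiset V).Nodup := by
    intro i j
    have := (L.link_isPath (hadj i j)).support_nodup
    rw [← Multiset.coe_nodup, hI] at this
    exact this
  have hnI : ∀ i j v, v ∈ I i j → v ≠ A i ∧ v ≠ T j := by
    intro i j v hv
    have h1 := Multiset.nodup_add.1 (hnd0 i j)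
    have h2 := Multiset.nodup_add.1 h1.1
    constructor
    · rintro rfl
      exact Multiset.disjoint_left.1 h2.2.2 (by simp) hv
    · rintro rfl
      exact Multiset.disjoint_left.1 h1.2.2 (by simp [hv]) (Multiset.mem_singleton_self _)
  have hbI : ∀ w i j, L.bv w ∉ I i j := by
    intro w i j hw
    have h1 := hnI i j _ hw
    rcases L.link_branch (hadj i j) w ((hsup i j _).2 (Or.inr (Or.inl hw))) with rfl | rfl
    · exact h1.1 rfl
    · exact h1.2 rfl
  have nd : (∑ k, pieces A T I k).Nodup := by
    apply sum_nodup
    · rintro (w | ⟨i, j⟩)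
      · simp [pieces]
      · exact (Multiset.nodup_add.1 (Multiset.nodup_add.1 (hnd0 i j)).1).2.1
    · rintro (w | ⟨i, j⟩) (w' | ⟨i', j'⟩) hne v hv hv'
      · simp only [pieces, Sum.elim_inl, Multiset.mem_singleton, hAT] at hv hv'
        exact hne (by rw [L.bv_inj (hv.symm.trans hv')])
      · simp only [pieces, Sum.elim_inl, Sum.elim_inr, Multiset.mem_singleton, hAT] at hv hv'
        subst hv; exact hbI _ _ _ hv'
      · simp only [pieces, Sum.elim_inl, Sum.elim_inr, Multiset.mem_singleton, hAT] at hv hv'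
        subst hv'; exact hbI _ _ _ hv
      · simp only [pieces, Sum.elim_inr] at hv hv'
        have := (L.link_meet (hadj i j) (hadj i' j') (by
          intro h
          simp at h
          exact hne (by rw [h.1, h.2])) v ((hsup i j _).2 (Or.inr (Or.inl hv)))
          ((hsup i' j' _).2 (Or.inr (Or.inl hv')))).1
        have := hnI i j v hv
        tauto
  have memN : ∀ v, v ∈ ∑ k, pieces A T I k ↔ v ∈ L.verts := by
    intro v
    rw [Multiset.mem_sum]
    constructor
    · rintro ⟨(w | ⟨i, j⟩), -, hv⟩
      · simp only [pieces, Sum.elim_inl, Multiset.mem_singleton, hAT] at hv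
        subst hv
        rcases w with i | j
        · exact ⟨_, _, hadj i 0, by simp⟩
        · exact ⟨_, _, hadj 0 j, by simp⟩
      · exact ⟨_, _, hadj i j, (hsup i j _).2 (Or.inr (Or.inl hv))⟩
    · rintro ⟨x, y, h, hv⟩
      have key : ∀ i j, v ∈ (L.link (hadj i j)).support → ∃ k ∈ Finset.univ, v ∈ pieces A T I k := by
        intro i j hv
        rcases (hsup i j v).1 hv with rfl | hv | rfl
        · exact ⟨Sum.inl (Sum.inl i), by simp, by simp [pieces]⟩
        · exact ⟨Sum.inr (i, j), by simp, by simpa [pieces] using hv⟩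
        · exact ⟨Sum.inl (Sum.inr j), by simp, by simp [pieces]⟩
      rcases x with i | j <;> rcases y with i' | j'
      · simp at h
      · exact key _ _ hv
      · have : L.link h = (L.link h.symm).reverse := L.link_symm h.symm
        rw [this, Walk.support_reverse, List.mem_reverse] at hv
        exact key _ _ hv
      · simp at h
  have clos : ∀ v ∈ L.verts, μ v ∈ L.verts := by
    intro v hv
    obtain ⟨e, ⟨heM, ⟨x, y, h, heL⟩, hve⟩, -⟩ := hML v hv
    obtain ⟨w, rfl⟩ := hve
    rw [hμ] at heM
    subst heM
    exact ⟨x, y, h, Walk.snd_mem_support_of_mem_edges _ heL⟩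
  have hle : ∑ k, pieces A T I k ≤ (Finset.univ : Finset V).val :=
    (Multiset.le_iff_subset nd).2 (fun v _ => by simp)
  obtain ⟨Z, hZ⟩ := Multiset.le_iff_exists_add.1 hle
  have und := (Finset.univ : Finset V).nodup
  rw [hZ] at und
  obtain ⟨-, ndZ, dj⟩ := Multiset.nodup_add.1 und
  refine ⟨_, _, _, T 0, T 1, T 2, Z, ⟨t 0, t 1, t 2, a 0 0, a 1 0, a 2 0, a 0 1, a 1 1, a 2 1, a 0 2, a 1 2, a 2 2⟩,
    Mt_of_closed hb hm _ Z rfl ndZ ?_, ?_⟩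
  · intro v hv
    have : μ v ∈ (∑ k, pieces A T I k) + Z := by rw [← hZ]; simp
    refine (Multiset.mem_add.1 this).resolve_left fun hN => ?_
    have := clos _ ((memN _).1 hN)
    rw [hm.inv] at this
    exact Multiset.disjoint_left.1 dj ((memN _).2 this) hv
  · rw [hZ]
    simp only [pieces, Fintype.sum_sum_type, Fintype.sum_prod_type, Fin.sum_univ_three, Sum.elim_inl,
      Sum.elim_inr, A, T]
    abel

end input

section output
variable {V : Type*}
open SimpleGraph

namespace BG
variable {g : BG V}

theorem Path.exc {s t : V} {G : Multiset V} (h : g.Path s t G) : 2 * g.exc G = g.exc {s} + g.exc {t} := by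
  induction h with
  | nil => ring
  | cons t u G _ ha ih =>
    have : g.exc {t} + g.exc {u} = 0 := by
      rcases ha with h | h
      · simp [exc_A (g.rA h), exc_B (g.rB h)]
      · simp [exc_A (g.rA h), exc_B (g.rB h)]
    rw [exc_add]; linarith

theorem Path.other {s t : V} {G : Multiset V} (h : g.Path s t G) (hne : s ≠ t) :
    ∃ y ∈ G, ¬ (g.isA y ↔ g.isA t) := by
  cases h with
  | nil => exact absurd rfl hne
  | cons t u G h ha =>
    refine ⟨t, by simp [h.mem_end], ?_⟩
    rcases ha with h | h
    · simp [g.rA h, g.rB h]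
    · simp [g.rA h, g.rB h]

theorem ear {U G H : Multiset V} (Hy : g.Hyp U) (hG : ∃ y ∈ G, ¬ g.isA y) (hH : ∃ x ∈ H, g.isA x)
    (exH : g.exc H = -1) (n : ℕ) : ∀ D Zr : Multiset V, Zr.card = n → g.Mt Zr → g.exc D = 0 →
    G + H + D + Zr = U →
    (∀ z ∈ H + D, g.isA z → ∃ x ∈ H, g.isA x ∧ ∃ I Z'', D = I + Z'' ∧ g.Mt Z'' ∧ g.Path x z ({x} + I)) →
    ∃ x ∈ H, g.isA x ∧ ∃ y ∈ G, ¬ g.isA y ∧ ∃ I Z', D + Zr = I + Z' ∧ g.Mt Z' ∧ g.Path x y ({x} + I + {y}) := by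
  induction n using Nat.strong_induction_on with
  | _ n ih =>
    intro D Zr hn hZ exD eq inv
    obtain ⟨a, haH, haA⟩ := hH
    obtain ⟨b, hbG, hbB⟩ := hG
    obtain ⟨e, he, z, hz, hze⟩ := Hy.HA (R := H + D) (C := 0) (rest := G + Zr) (a := a) (b := b)
      (by rw [← eq]; abel) (by simp [haH]) haA (by simp [exH, exD]) (by simp [hbG]) hbB
    obtain ⟨x, hx, hxA, I, Z'', rfl, hZ'', hp⟩ := inv z hz (g.rA hze)
    rcases Multiset.mem_add.1 he with he | he
    · exact ⟨x, hx, hxA, e, he, g.rB hze, I, Z'' + Zr, by abel, hZ''.add hZ, .cons _ _ _ _ hp (Or.inl hze)⟩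
    · obtain ⟨Z', z', hZ', hr, rfl⟩ := hZ.split he (g.rB hze)
      obtain ⟨x', hx', hxA', y, hy, hyB, I', Z3, e3, hZ3, hp3⟩ := ih Z'.card (by simp at hn; omega)
        (I + Z'' + {z'} + {e}) Z' rfl hZ' (by
          rw [exc_add, exc_add, exD, exc_A (g.rA hr), exc_B (g.rB hr)]; ring) (by rw [← eq]; abel) (by
          intro w hw hwA
          have hc : w ∈ H + (I + Z'') ∨ w = z' ∨ w = e := by
            simp only [Multiset.mem_add, Multiset.mem_singleton] at hw ⊢
            tauto
          rcases hc with hw | rfl | rfl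
          · obtain ⟨x1, hx1, hxA1, I1, Z1, e1, hZ1, hp1⟩ := inv w hw hwA
            exact ⟨x1, hx1, hxA1, I1, Z1 + {z'} + {e}, by rw [e1]; abel, .pair _ _ _ hZ1 hr, hp1⟩
          · refine ⟨x, hx, hxA, I + {e} + {w}, Z'', by abel, hZ'', ?_⟩
            have := Path.cons _ _ w _ (Path.cons _ _ e _ hp (Or.inl hze)) (Or.inr hr)
            simpa only [add_assoc] using this
          · exact absurd hwA (g.rB hr))
      exact ⟨x', hx', hxA', y, hy, hyB, I', Z3, by rw [← e3]; abel, hZ3, hp3⟩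

end BG

theorem path_walk {B : SimpleGraph V} {V1 V2 : Set V} (hb : IsBipartitionOf B V1 V2) {s t : V}
    {G : Multiset V} (h : (bgOf hb).Path s t G) : ∃ p : B.Walk s t, (p.support : Multiset V) = G := by
  induction h with
  | nil => exact ⟨.nil, by simp⟩
  | cons t u G _ ha ih =>
    obtain ⟨p, rfl⟩ := ih
    have had : B.Adj t u := by
      rcases ha with h | h
      · exact h.2
      · exact h.2.symm
    refine ⟨p.concat had, ?_⟩
    rw [Walk.support_concat]
    simp [← Multiset.coe_add]

theorem walk_inner {B : SimpleGraph V} {V1 V2 : Set V} (hb : IsBipartitionOf B V1 V2) {s t : V}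
    (p : B.Walk s t) (h : ¬ (s ∈ V1 ↔ t ∈ V1)) :
    Odd p.length ∧ ∃ I : Multiset V, (p.support : Multiset V) = {s} + I + {t} := by
  have ho := (walk_odd hb p).2 h
  refine ⟨ho, ?_⟩
  obtain ⟨n, hn⟩ := ho
  obtain ⟨-, I, hI, -⟩ := walk_cov n p hn
  exact ⟨I, hI⟩

theorem split_walk [DecidableEq V] {B : SimpleGraph V} {V1 V2 : Set V} (hb : IsBipartitionOf B V1 V2) {s t y : V}
    {G : Multiset V} (h : (bgOf hb).Path s t G) (hy : y ∈ G) (h1 : ¬ (s ∈ V1 ↔ y ∈ V1))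
    (h2 : ¬ (t ∈ V1 ↔ y ∈ V1)) : ∃ I1 I2 : Multiset V, G = {s} + I1 + {y} + I2 + {t} ∧
    (∃ q : B.Walk s y, Odd q.length ∧ (q.support : Multiset V) = {s} + I1 + {y}) ∧
    ∃ q : B.Walk y t, Odd q.length ∧ (q.support : Multiset V) = {y} + I2 + {t} := by
  obtain ⟨p, rfl⟩ := path_walk hb h
  have hy' : y ∈ p.support := hy
  obtain ⟨o1, I1, e1⟩ := walk_inner hb (p.takeUntil y hy') h1
  obtain ⟨o2, I2, e2⟩ := walk_inner hb (p.dropUntil y hy') (fun h => h2 h.symm)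
  refine ⟨I1, I2, ?_, ⟨_, o1, e1⟩, ⟨_, o2, e2⟩⟩
  have h3 : (p.support : Multiset V) = ((p.takeUntil y hy').append (p.dropUntil y hy')).support := by
    rw [Walk.take_spec]
  rw [h3, Walk.support_append, ← Multiset.coe_add, e1]
  have h4 : ((p.dropUntil y hy').support.tail : Multiset V) = I2 + {t} := by
    rw [← Walk.cons_tail_support, ← Multiset.cons_coe, ← Multiset.singleton_add, add_assoc] at e2
    exact add_left_cancel e2
  rw [h4]; abel

theorem output [Fintype V] [DecidableEq V] {B : SimpleGraph V} {V1 V2 : Set V} (hb : IsBipartitionOf B V1 V2)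
    (hbr : IsBrace B) {a a' b1 b2 : V} (qd : (bgOf hb).Quad a a' b1 b2) (hab : a ≠ a') (hbb : b1 ≠ b2)
    (hc : (bgOf hb).Conn (Finset.univ : Finset V).val a a' b1 b2) :
    ∃ L : Bisubdivision K33 B, L.ConformalOn Set.univ ∧ s(a, b1) ∈ L.edgeSet ∧ s(a, b2) ∈ L.edgeSet ∧
      s(a', b1) ∈ L.edgeSet ∧ s(a', b2) ∈ L.edgeSet := by
  obtain ⟨_, _, ⟨G, Z1, hG, hZ1, rfl⟩, ⟨H, Z2, hH, hZ2, rfl⟩, eq⟩ := hc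
  have A1 : a ∈ V1 := (bgOf hb).rA qd.h11
  have A2 : a' ∈ V1 := (bgOf hb).rA qd.h21
  have B1 : b1 ∉ V1 := (bgOf hb).rB qd.h11
  have B2 : b2 ∉ V1 := (bgOf hb).rB qd.h12
  have exH : (bgOf hb).exc H = -1 := by
    have := hH.exc
    rw [BG.exc_B (g := bgOf hb) B1, BG.exc_B (g := bgOf hb) B2] at this
    omega
  obtain ⟨x, hx, hxA, y, hy, hyB, I, Z', e3, hZ', hp⟩ := BG.ear (g := bgOf hb) (G := G) (H := H) (bgOf_hyp hb hbr)
    (by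
      obtain ⟨y, hy, h⟩ := hG.other hab
      exact ⟨y, hy, fun h' => h ⟨fun _ => A2, fun _ => h'⟩⟩)
    (by
      obtain ⟨y, hy, h⟩ := hH.other hbb
      exact ⟨y, hy, by by_contra h'; exact h ⟨fun h => absurd h h', fun h => absurd h B2⟩⟩)
    exH (Z1 + Z2).card 0 (Z1 + Z2) rfl (hZ1.add hZ2) (by simp) (by rw [← eq]; abel) (by
      intro z hz hzA
      exact ⟨z, by simpa using hz, hzA, 0, 0, by simp, .zero, by simpa using BG.Path.nil z⟩)
  have hxV : x ∈ V1 := hxA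
  have hyV : y ∉ V1 := hyB
  obtain ⟨I1, I2, eG, w1, ⟨q2, o2, s2⟩⟩ := split_walk hb hG hy (by tauto) (by tauto)
  obtain ⟨I3, I4, eH, ⟨q3, o3, s3⟩, w4⟩ := split_walk hb hH hx (by tauto) (by tauto)
  obtain ⟨q5, s5⟩ := path_walk hb hp
  have o5 := (walk_odd hb q5).2 (by tauto)
  have edge : ∀ {u v}, (bgOf hb).r u v → ∃ p : B.Walk u v, Odd p.length ∧ (p.support : Multiset V) = {u} + 0 + {v} := by
    intro u v h
    exact ⟨h.2.toWalk, by simp, by simp; rfl⟩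
  have w2' : ∃ p : B.Walk a' y, Odd p.length ∧ (p.support : Multiset V) = {a'} + I2 + {y} := by
    refine ⟨q2.reverse, by rw [Walk.length_reverse]; exact o2, ?_⟩
    rw [Walk.support_reverse, Multiset.coe_reverse, s2]
    abel
  have w3' : ∃ p : B.Walk x b1, Odd p.length ∧ (p.support : Multiset V) = {x} + I3 + {b1} := by
    refine ⟨q3.reverse, by rw [Walk.length_reverse]; exact o3, ?_⟩
    rw [Walk.support_reverse, Multiset.coe_reverse, s3]
    abel
  obtain ⟨L, hL, hE⟩ := build (B := B) (A := ![a, a', x]) (T := ![b1, b2, y])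
    (I := ![![0, 0, I1], ![0, 0, I2], ![I3, I4, I]]) (Z := Z') (by
      intro i j
      fin_cases i <;> fin_cases j
      · exact edge qd.h11
      · exact edge qd.h12
      · exact w1
      · exact edge qd.h21
      · exact edge qd.h22
      · exact w2'
      · exact w3'
      · exact w4
      · exact ⟨q5, o5, s5⟩) (Cov.of_Mt hb hZ') (by
      have e4 : Z1 + Z2 = I + Z' := by simpa using e3
      have e5 : G + H + (I + Z') = (Finset.univ : Finset V).val := by rw [← e4, ← eq]; abel
      rw [← e5, eG, eH]
      simp only [pieces, Fintype.sum_sum_type, Fintype.sum_prod_type, Fin.sum_univ_three, Sum.elim_inl,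
        Sum.elim_inr]
      change {a} + {a'} + {x} + ({b1} + {b2} + {y}) + (0 + 0 + I1 + (0 + 0 + I2) + (I3 + I4 + I)) + Z' = _
      abel)
  exact ⟨L, hL, hE 0 0 rfl, hE 0 1 rfl, hE 1 0 rfl, hE 1 1 rfl⟩

theorem cycle4 {B : SimpleGraph V} {c : V} (C : B.Walk c c) (hC : C.IsCycle) (hlen : C.length = 4) :
    ∃ v1 v2 v3, B.Adj c v1 ∧ B.Adj v1 v2 ∧ B.Adj v2 v3 ∧ B.Adj v3 c ∧ c ≠ v2 ∧ v1 ≠ v3 ∧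
      ∀ f ∈ C.edges, f = s(c, v1) ∨ f = s(v1, v2) ∨ f = s(v2, v3) ∨ f = s(v3, c) := by
  have nd := hC.support_nodup
  cases C with
  | nil => simp at hlen
  | cons h1 C =>
    cases C with
    | nil => simp at hlen
    | cons h2 C =>
      cases C with
      | nil => simp at hlen
      | cons h3 C =>
        cases C with
        | nil => simp at hlen
        | cons h4 C =>
          cases C with
          | cons h5 C => simp at hlen
          | nil =>
            simp at nd
            refine ⟨_, _, _, h1, h2, h3, h4, ?_, ?_, ?_⟩
            · rintro rfl; tauto
            · rintro rfl; tauto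
            · intro f hf; simpa using hf

theorem main_of_side [Fintype V] [DecidableEq V] {B : SimpleGraph V} {V1 V2 : Set V} (hb : IsBipartitionOf B V1 V2)
    (hbrace : IsBrace B) (L : Bisubdivision K33 B) (hL : L.ConformalOn Set.univ) (h0 : L.bv (Sum.inl 0) ∈ V1)
    {c : V} (C : B.Walk c c) (hC : C.IsCycle) (hlen : C.length = 4) :
    ∃ L : Bisubdivision K33 B, L.ConformalOn Set.univ ∧ ∀ f ∈ C.edges, f ∈ L.edgeSet := by
  obtain ⟨P, Q, W, t1, t2, t3, Z, hMB, hZ, eq⟩ := input hb L hL h0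
  obtain ⟨v1, v2, v3, h1, h2, h3, h4, n1, n2, he⟩ := cycle4 C hC hlen
  have key : ∀ {a a' b1 b2 : V}, (bgOf hb).Quad a a' b1 b2 → a ≠ a' → b1 ≠ b2 →
      ∃ L : Bisubdivision K33 B, L.ConformalOn Set.univ ∧ s(a, b1) ∈ L.edgeSet ∧ s(a, b2) ∈ L.edgeSet ∧
      s(a', b1) ∈ L.edgeSet ∧ s(a', b2) ∈ L.edgeSet := by
    intro a a' b1 b2 qd ha hbb
    exact output hb hbrace qd ha hbb (hMB.core (bgOf_hyp hb hbrace) hZ eq qd hbb.symm (by simp) (by simp) (by simp) (by simp))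
  have p1 := hb.2.2 h1
  have p2 := hb.2.2 h2
  have p3 := hb.2.2 h3
  rw [← hb.not1] at p1 p2 p3
  by_cases hc : c ∈ V1
  · have hv2 : v2 ∈ V1 := by tauto
    obtain ⟨L, hL, e1, e2, e3, e4⟩ := key (a := c) (a' := v2) (b1 := v1) (b2 := v3)
      ⟨⟨hc, h1⟩, ⟨hc, h4.symm⟩, ⟨hv2, h2.symm⟩, ⟨hv2, h3⟩⟩ n1 n2
    refine ⟨L, hL, fun f hf => ?_⟩
    rcases he f hf with rfl | rfl | rfl | rfl
    · exact e1
    · rw [Sym2.eq_swap]; exact e3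
    · exact e4
    · rw [Sym2.eq_swap]; exact e2
  · have hv1 : v1 ∈ V1 := by tauto
    have hv3 : v3 ∈ V1 := by tauto
    obtain ⟨L, hL, e1, e2, e3, e4⟩ := key (a := v1) (a' := v3) (b1 := c) (b2 := v2)
      ⟨⟨hv1, h1.symm⟩, ⟨hv1, h2⟩, ⟨hv3, h4⟩, ⟨hv3, h3.symm⟩⟩ n2 n1
    refine ⟨L, hL, fun f hf => ?_⟩
    rcases he f hf with rfl | rfl | rfl | rfl
    · rw [Sym2.eq_swap]; exact e1
    · exact e2
    · rw [Sym2.eq_swap]; exact e4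
    · exact e3

theorem final [Fintype V] [DecidableEq V] (B : SimpleGraph V)
    (hbip : IsBipartite B) (hbrace : IsBrace B) (hK : ContainsK33 B)
    {c : V} (C : B.Walk c c) (hC : C.IsCycle) (hlen : C.length = 4) :
    ∃ L : Bisubdivision K33 B, L.ConformalOn Set.univ ∧ ∀ f ∈ C.edges, f ∈ L.edgeSet := by
  obtain ⟨V1, V2, hb⟩ := hbip
  obtain ⟨L, hL⟩ := hK
  by_cases h0 : L.bv (Sum.inl 0) ∈ V1
  · exact main_of_side hb hbrace L hL h0 C hC hlen
  · exact main_of_side hb.swap hbrace L hL (hb.not1.1 h0) C hC hlen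

end output

/-- in a brace containing `K₃,₃`, every 4-cycle is contained in a
conformal bisubdivision of `K₃,₃`. -/
theorem statement_2 {V : Type*} [Fintype V] [DecidableEq V] (B : SimpleGraph V)
    (hbip : IsBipartite B) (hbrace : IsBrace B) (hK : ContainsK33 B)
    {c : V} (C : B.Walk c c) (hC : C.IsCycle) (hlen : C.length = 4) :
    ∃ L : Bisubdivision K33 B, L.ConformalOn Set.univ ∧ ∀ f ∈ C.edges, f ∈ L.edgeSet := by
  exact final B hbip hbrace hK C hC hlen

end Paper
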